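/- arXiv:0903.0386 — 6 statements merged into one kernel-verified Lean document; each statement's English description precedes it below -/
import Mathlib

section
/- (James) Let M be an even nondegenerate lattice of signature (t₊, t₋) and let L be an even unimodular lattice of signature (l₊, l₋). If t₊ + t₋ ≤ min{l₊, l₋} − 1, then a primitive embedding of M into L exists, and any two primitive embeddings of M into L differ by composition with an automorphism of L. -/
open Matrix

/-- The number of positive eigenvalues of an integer matrix, viewed as a real
symmetric matrix (0 if the real matrix is not Hermitian). -/
noncomputable def sigPlus {n : ℕ} (G : Matrix (Fin n) (Fin n) ℤ) : ℕ :=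
  if h : (G.map ((↑·) : ℤ → ℝ)).IsHermitian then
    Nat.card {i : Fin n // 0 < h.eigenvalues i}
  else 0

/-- The number of negative eigenvalues of an integer matrix, viewed as a real
symmetric matrix (0 if the real matrix is not Hermitian). -/
noncomputable def sigMinus {n : ℕ} (G : Matrix (Fin n) (Fin n) ℤ) : ℕ :=
  if h : (G.map ((↑·) : ℤ → ℝ)).IsHermitian then
    Nat.card {i : Fin n // h.eigenvalues i < 0}
  else 0

/-- An embedding of the lattice `(ℤ^m, M)` into the lattice `(ℤ^n, G)`:
an injective ℤ-linear map respecting the bilinear forms. -/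
def IsLatticeEmbedding {m n : ℕ} (M : Matrix (Fin m) (Fin m) ℤ)
    (G : Matrix (Fin n) (Fin n) ℤ) (T : Matrix (Fin n) (Fin m) ℤ) : Prop :=
  Function.Injective T.mulVec ∧
    ∀ x y : Fin m → ℤ, T.mulVec x ⬝ᵥ G.mulVec (T.mulVec y) = x ⬝ᵥ M.mulVec y

/-- A primitive embedding: an embedding whose cokernel `ℤ^n / T(ℤ^m)` is
torsion-free, i.e. if a nonzero multiple of `v` lies in the image then so does `v`. -/
def IsPrimitiveLatticeEmbedding {m n : ℕ} (M : Matrix (Fin m) (Fin m) ℤ)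
    (G : Matrix (Fin n) (Fin n) ℤ) (T : Matrix (Fin n) (Fin m) ℤ) : Prop :=
  IsLatticeEmbedding M G T ∧
    ∀ (v : Fin n → ℤ) (k : ℤ), k ≠ 0 → (∃ x, T.mulVec x = k • v) → ∃ x, T.mulVec x = v

/-- An automorphism of the lattice `(ℤ^n, G)`: a matrix in `GL(n, ℤ)`
preserving the Gram matrix. -/
def IsLatticeAut {n : ℕ} (G S : Matrix (Fin n) (Fin n) ℤ) : Prop :=
  IsUnit S.det ∧ Sᵀ * G * S = G

open Matrix

namespace James

section Eichler

variable {V : Type*} [AddCommGroup V]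

/-- half norm -/
def hn (B : V →ₗ[ℤ] V →ₗ[ℤ] ℤ) (x : V) : ℤ := B x x / 2

/-- even symmetric form -/
structure EvenSymm (B : V →ₗ[ℤ] V →ₗ[ℤ] ℤ) : Prop where
  symm : ∀ x y, B x y = B y x
  even : ∀ x, 2 ∣ B x x

theorem EvenSymm.two_hn {B : V →ₗ[ℤ] V →ₗ[ℤ] ℤ} (h : EvenSymm B) (x : V) :
    B x x = 2 * hn B x := by
  have := h.even x
  unfold hn
  omega

/-- Eichler transvection as a linear map. -/
def tvl (B : V →ₗ[ℤ] V →ₗ[ℤ] ℤ) (u x : V) : V →ₗ[ℤ] V :=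
  LinearMap.id - (B.flip u).smulRight x + (B.flip x).smulRight u
    - (hn B x) • (B.flip u).smulRight u

theorem tvl_apply (B : V →ₗ[ℤ] V →ₗ[ℤ] ℤ) (u x y : V) :
    tvl B u x y = y - B y u • x + B y x • u - (hn B x) • (B y u • u) := by
  simp [tvl]
  exact smul_comm _ _ _

theorem hn_neg (B : V →ₗ[ℤ] V →ₗ[ℤ] ℤ) (x : V) : hn B (-x) = hn B x := by
  simp [hn]

theorem tvl_inv {B : V →ₗ[ℤ] V →ₗ[ℤ] ℤ} (h : EvenSymm B) {u x : V} (hu : B u u = 0)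
    (hux : B u x = 0) (y : V) : tvl B u (-x) (tvl B u x y) = y := by
  have hxu : B x u = 0 := by rw [h.symm, hux]
  have hx := h.two_hn x
  simp only [tvl_apply, hn_neg, map_sub, map_add, map_neg, map_smul, LinearMap.sub_apply,
    LinearMap.add_apply, LinearMap.smul_apply, hu, hux, hxu, hx, smul_eq_mul]
  module

/-- Eichler transvection as an equivalence. -/
def tv {B : V →ₗ[ℤ] V →ₗ[ℤ] ℤ} (h : EvenSymm B) {u x : V} (hu : B u u = 0)
    (hux : B u x = 0) : V ≃ₗ[ℤ] V :=
  LinearEquiv.ofLinearMap (tvl B u x) (tvl B u (-x))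
    (by
      ext y
      have := tvl_inv h (u := u) (x := -x) hu (by simp [hux]) y
      simpa using this)
    (by ext y; exact tvl_inv h hu hux y)

/-- isometry -/
def Isom (B : V →ₗ[ℤ] V →ₗ[ℤ] ℤ) (g : V ≃ₗ[ℤ] V) : Prop := ∀ x y, B (g x) (g y) = B x y

theorem tv_apply {B : V →ₗ[ℤ] V →ₗ[ℤ] ℤ} (h : EvenSymm B) {u x : V} (hu : B u u = 0)
    (hux : B u x = 0) (y : V) :
    tv h hu hux y = y - B y u • x + B y x • u - (hn B x) • (B y u • u) := tvl_apply B u x y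

theorem tv_isom {B : V →ₗ[ℤ] V →ₗ[ℤ] ℤ} (h : EvenSymm B) {u x : V} (hu : B u u = 0)
    (hux : B u x = 0) : Isom B (tv h hu hux) := by
  intro y w
  have hxu : B x u = 0 := by rw [h.symm, hux]
  have hx := h.two_hn x
  simp only [tv_apply, map_sub, map_add, map_smul, LinearMap.sub_apply,
    LinearMap.add_apply, LinearMap.smul_apply, hu, hux, hxu, hx, smul_eq_mul, h.symm u, h.symm x]
  ring

/-- Isometries fixing the orthogonal complement of `S`. -/
def InG (B : V →ₗ[ℤ] V →ₗ[ℤ] ℤ) (S : Submodule ℤ V) (g : V ≃ₗ[ℤ] V) : Prop :=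
  Isom B g ∧ ∀ y, (∀ s ∈ S, B y s = 0) → g y = y

theorem InG.refl (B : V →ₗ[ℤ] V →ₗ[ℤ] ℤ) (S : Submodule ℤ V) :
    InG B S (LinearEquiv.refl ℤ V) := ⟨fun _ _ => rfl, fun _ _ => rfl⟩

theorem InG.trans {B : V →ₗ[ℤ] V →ₗ[ℤ] ℤ} {S : Submodule ℤ V} {g g' : V ≃ₗ[ℤ] V}
    (hg : InG B S g) (hg' : InG B S g') : InG B S (g.trans g') := by
  refine ⟨fun x y => ?_, fun y hy => ?_⟩
  · simp only [LinearEquiv.trans_apply]; rw [hg'.1, hg.1]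
  · simp only [LinearEquiv.trans_apply]; rw [hg.2 y hy, hg'.2 y hy]

theorem tv_inG {B : V →ₗ[ℤ] V →ₗ[ℤ] ℤ} (h : EvenSymm B) {S : Submodule ℤ V} {u x : V}
    (hu : B u u = 0) (hux : B u x = 0) (huS : u ∈ S) (hxS : x ∈ S) :
    InG B S (tv h hu hux) := by
  refine ⟨tv_isom h hu hux, fun y hy => ?_⟩
  rw [tv_apply, hy u huS, hy x hxS]; simp

/-- two orthogonal hyperbolic pairs in S -/
structure Hyp2 (B : V →ₗ[ℤ] V →ₗ[ℤ] ℤ) (S : Submodule ℤ V) (e₁ f₁ e₂ f₂ : V) : Prop where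
  me₁ : e₁ ∈ S
  mf₁ : f₁ ∈ S
  me₂ : e₂ ∈ S
  mf₂ : f₂ ∈ S
  e₁e₁ : B e₁ e₁ = 0
  e₁f₁ : B e₁ f₁ = 1
  e₁e₂ : B e₁ e₂ = 0
  e₁f₂ : B e₁ f₂ = 0
  f₁f₁ : B f₁ f₁ = 0
  f₁e₂ : B f₁ e₂ = 0
  f₁f₂ : B f₁ f₂ = 0
  e₂e₂ : B e₂ e₂ = 0
  e₂f₂ : B e₂ f₂ = 1
  f₂f₂ : B f₂ f₂ = 0

section
variable {B : V →ₗ[ℤ] V →ₗ[ℤ] ℤ} (h : EvenSymm B) {S : Submodule ℤ V}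
  {e₁ f₁ e₂ f₂ : V} (H : Hyp2 B S e₁ f₁ e₂ f₂)
include h H

/-- `x ↦ x - t w`, z ↦ z + t y. -/
theorem move1 (t : ℤ) (w : V) : ∃ g, InG B S g ∧ B (g w) f₁ = B w f₁ - t * B w e₂ ∧
    B (g w) f₂ = B w f₂ + t * B w e₁ ∧ B (g w) e₂ = B w e₂ := by
  refine ⟨tv h (u := e₂) (x := t • e₁) H.e₂e₂ (by simp [h.symm e₂, H.e₁e₂]),
    tv_inG h _ _ H.me₂ (S.smul_mem _ H.me₁), ?_, ?_, ?_⟩ <;>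
  simp [tv_apply, H.e₁f₁, H.e₁e₂, H.e₁f₂, H.e₂e₂, H.e₂f₂, h.symm e₂ f₁, H.f₁e₂, hn, H.e₁e₁] <;> ring

/-- `w ↦ w + t y`, x ↦ x - t z. -/
theorem move2 (t : ℤ) (w : V) : ∃ g, InG B S g ∧ B (g w) f₁ = B w f₁ - t * B w f₂ := by
  refine ⟨tv h (u := f₂) (x := t • e₁) H.f₂f₂ (by simp [h.symm f₂, H.e₁f₂]),
    tv_inG h _ _ H.mf₂ (S.smul_mem _ H.me₁), ?_⟩
  simp [tv_apply, H.e₁f₁, h.symm f₂ f₁, H.f₁f₂, hn, H.e₁e₁]; ring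

theorem move3 (t : ℤ) (w : V) : ∃ g, InG B S g ∧ B (g w) f₁ = B w f₁ ∧
    B (g w) f₂ = B w f₂ + t * B w f₁ := by
  refine ⟨tv h (u := e₂) (x := t • f₁) H.e₂e₂ (by simp [h.symm e₂, H.f₁e₂]),
    tv_inG h _ _ H.me₂ (S.smul_mem _ H.mf₁), ?_, ?_⟩ <;>
  simp [tv_apply, H.f₁f₁, H.f₁f₂, H.e₂e₂, H.e₂f₂, h.symm e₂ f₁, H.f₁e₂, hn] <;> ring

theorem move4 (t : ℤ) (w : V) : ∃ g, InG B S g ∧ B (g w) f₁ = B w f₁ ∧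
    B (g w) e₂ = B w e₂ + t * B w f₁ := by
  refine ⟨tv h (u := f₂) (x := t • f₁) H.f₂f₂ (by simp [h.symm f₂, H.f₁f₂]),
    tv_inG h _ _ H.mf₂ (S.smul_mem _ H.mf₁), ?_, ?_⟩ <;>
  simp [tv_apply, H.f₁f₁, H.f₁f₂, H.f₂f₂, H.e₂f₂, h.symm f₂ e₂, h.symm f₂ f₁, H.f₁e₂, hn] <;> ring

theorem move5 {a : V} (ha : a ∈ S) (hae : B a e₂ = 0) (haf : B a f₂ = 0) (haf₁ : B a f₁ = 0)
    (w : V) : ∃ g, InG B S g ∧ B (g w) f₁ = B w f₁ ∧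
    B (g w) f₂ = B w f₂ + B w a - hn B a * B w e₂ := by
  refine ⟨tv h (u := e₂) (x := a) H.e₂e₂ (by rw [h.symm, hae]),
    tv_inG h _ _ H.me₂ ha, ?_, ?_⟩ <;>
  simp [tv_apply, haf, haf₁, H.e₂f₂, h.symm e₂ f₁, H.f₁e₂]

/-- minimality consequence: if no reachable `x` lies strictly between 0 and x, all divisible -/
theorem dvd_of_min (w : V) (hx : 0 ≤ B w f₁)
    (hmin : ∀ g, InG B S g → 0 < B (g w) f₁ → 0 < B w f₁ ∧ B w f₁ ≤ B (g w) f₁) :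
    ∀ s ∈ S, B w f₁ ∣ B w s := by
  -- general: any w' reachable with same x has x | B w' f₂ and x | B w' e₂
  have key : ∀ g, InG B S g → B (g w) f₁ = B w f₁ → B w f₁ ∣ B (g w) f₂ := by
    intro g hg hgx
    rcases hx.eq_or_lt with h0 | hpos
    · -- all reachable x are ≤ 0
      rw [← h0, zero_dvd_iff]
      by_contra hne
      obtain ⟨g', hg', e'⟩ := move2 h H (-(B (g w) f₂)) (g w)
      have := hmin (g.trans g') (hg.trans hg') (by
        simp only [LinearEquiv.trans_apply]; rw [e', hgx, ← h0]
        have : 0 < B (g w) f₂ * B (g w) f₂ := mul_self_pos.mpr hne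
        linarith)
      omega
    · by_contra hnd
      obtain ⟨g', hg', e1, e2⟩ := move3 h H (-(B (g w) f₂ / B w f₁)) (g w)
      obtain ⟨g'', hg'', e3⟩ := move2 h H 1 (g' (g w))
      have hr : B (g' (g w)) f₂ = B (g w) f₂ % B w f₁ := by
        rw [e2, hgx, Int.emod_def]; ring
      have r0 := Int.emod_nonneg (B (g w) f₂) hpos.ne'
      have r1 := Int.emod_lt_of_pos (B (g w) f₂) hpos
      have r2 : B (g w) f₂ % B w f₁ ≠ 0 := fun h' => hnd (Int.dvd_of_emod_eq_zero h')
      have := hmin ((g.trans g').trans g'') ((hg.trans hg').trans hg'') (by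
        simp only [LinearEquiv.trans_apply]; rw [e3, hr, e1, hgx]; omega)
      simp only [LinearEquiv.trans_apply] at this
      rw [e3, hr, e1, hgx] at this
      omega
  have key2 : B w f₁ ∣ B w e₂ := by
    rcases hx.eq_or_lt with h0 | hpos
    · rw [← h0, zero_dvd_iff]
      by_contra hne
      obtain ⟨g', hg', e', -⟩ := move1 h H (-(B w e₂)) w
      have := hmin g' hg' (by
        rw [e', ← h0]
        have : 0 < B w e₂ * B w e₂ := mul_self_pos.mpr hne
        linarith)
      omega
    · by_contra hnd
      obtain ⟨g', hg', e1, e2⟩ := move4 h H (-(B w e₂ / B w f₁)) w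
      obtain ⟨g'', hg'', e3, -⟩ := move1 h H 1 (g' w)
      have hr : B (g' w) e₂ = B w e₂ % B w f₁ := by
        rw [e2, Int.emod_def]; ring
      have r0 := Int.emod_nonneg (B w e₂) hpos.ne'
      have r1 := Int.emod_lt_of_pos (B w e₂) hpos
      have r2 : B w e₂ % B w f₁ ≠ 0 := fun h' => hnd (Int.dvd_of_emod_eq_zero h')
      have := hmin (g'.trans g'') (hg'.trans hg'') (by
        simp only [LinearEquiv.trans_apply]; rw [e3, hr, e1]; omega)
      simp only [LinearEquiv.trans_apply] at this
      rw [e3, hr, e1] at this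
      omega
  have keyf₂ : B w f₁ ∣ B w f₂ := by
    simpa using key _ (InG.refl B S) rfl
  have keye₁ : B w f₁ ∣ B w e₁ := by
    -- first make B w e₂ = 0
    obtain ⟨k, hk⟩ := key2
    obtain ⟨g, hg, e1, e2⟩ := move4 h H (-k) w
    have e20 : B (g w) e₂ = 0 := by rw [e2, hk]; ring
    obtain ⟨g', hg', e1', e2', -⟩ := move1 h H 1 (g w)
    have a1 := key g hg e1
    have a2 := key (g.trans g') (hg.trans hg') (by
      simp only [LinearEquiv.trans_apply]; rw [e1', e20, e1]; ring)
    simp only [LinearEquiv.trans_apply] at a2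
    rw [e2'] at a2
    have a3 : B w f₁ ∣ B (g w) e₁ := by
      have := dvd_sub a2 a1
      simpa using this
    -- B (g w) e₁ = B w e₁ + k * B w f₂ ... avoid by using inverse isometry invariance
    obtain ⟨g0, hg0, h1, h2, h3⟩ : ∃ g0, InG B S g0 ∧ B (g0 w) f₁ = B w f₁ ∧
        B (g0 w) e₂ = 0 ∧ B w f₁ ∣ B (g0 w) e₁ - B w e₁ := by
      refine ⟨tv h (u := f₂) (x := (-k) • f₁) H.f₂f₂ (by simp [h.symm f₂, H.f₁f₂]),
        tv_inG h _ _ H.mf₂ (S.smul_mem _ H.mf₁), ?_, ?_, ?_⟩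
      · simp [tv_apply, H.f₁f₁, H.f₁f₂, h.symm f₂ f₁, hn]
      · simp [tv_apply, H.f₁e₂, h.symm f₂ e₂, H.e₂f₂, hn, H.f₁f₁, hk]; ring
      · obtain ⟨l, hl⟩ := keyf₂
        simp [tv_apply, H.e₁f₁, h.symm f₁ e₁, h.symm f₂ e₁, H.e₁f₂, hn, H.f₁f₁, hl, mul_assoc]
    obtain ⟨g', hg', e1', e2', -⟩ := move1 h H 1 (g0 w)
    have a1 := key g0 hg0 h1
    have a2 := key (g0.trans g') (hg0.trans hg') (by
      simp only [LinearEquiv.trans_apply]; rw [e1', h2, h1]; ring)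
    simp only [LinearEquiv.trans_apply] at a2
    rw [e2'] at a2
    have a3 : B w f₁ ∣ B (g0 w) e₁ := by
      have := dvd_sub a2 a1
      simpa using this
    have := dvd_sub a3 h3
    simpa using this
  intro s hs
  -- decompose s
  set a := s - B s f₁ • e₁ - B s e₁ • f₁ - B s f₂ • e₂ - B s e₂ • f₂ with ha
  have haS : a ∈ S :=
    S.sub_mem (S.sub_mem (S.sub_mem (S.sub_mem hs (S.smul_mem _ H.me₁)) (S.smul_mem _ H.mf₁))
      (S.smul_mem _ H.me₂)) (S.smul_mem _ H.mf₂)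
  have hae : B a e₂ = 0 := by
    simp [ha, H.e₁e₂, H.f₁e₂, H.e₂e₂, h.symm f₂ e₂, H.e₂f₂]
  have haf : B a f₂ = 0 := by
    simp [ha, H.e₁f₂, H.f₁f₂, H.f₂f₂, H.e₂f₂]
  have haf₁ : B a f₁ = 0 := by
    simp [ha, H.e₁f₁, H.f₁f₁, h.symm e₂ f₁, h.symm f₂ f₁, H.f₁e₂, H.f₁f₂]
  obtain ⟨g, hg, e1, e2⟩ := move5 h H haS hae haf haf₁ w
  have a1 := key g hg e1
  rw [e2] at a1
  have a2 : B w f₁ ∣ B w a := by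
    have h1 := dvd_sub a1 keyf₂
    have h2 := dvd_add h1 (key2.mul_left (hn B a))
    have : B w f₂ + B w a - hn B a * B w e₂ - B w f₂ + hn B a * B w e₂ = B w a := by ring
    rwa [this] at h2
  have hsd : B w s = B w a + B s f₁ * B w e₁ + B s e₁ * B w f₁ + B s f₂ * B w e₂
      + B s e₂ * B w f₂ := by
    simp [ha]
    ring
  rw [hsd]
  exact dvd_add (dvd_add (dvd_add (dvd_add a2 (keye₁.mul_left _)) (Dvd.intro_left _ rfl))
    (key2.mul_left _)) (keyf₂.mul_left _)

theorem eichler (w : V) : ∃ g, InG B S g ∧ 0 ≤ B (g w) f₁ ∧ ∀ s ∈ S, B (g w) f₁ ∣ B (g w) s := by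
  classical
  by_cases hex : ∃ n : ℕ, 0 < n ∧ ∃ g, InG B S g ∧ B (g w) f₁ = n
  · obtain ⟨hn0, g, hg, e⟩ := Nat.find_spec hex
    refine ⟨g, hg, by rw [e]; positivity, ?_⟩
    apply dvd_of_min h H (g w) (by rw [e]; positivity)
    intro g' hg' hpos
    rw [e]
    refine ⟨by exact_mod_cast hn0, ?_⟩
    have := Nat.find_min' hex (m := (B (g' (g w)) f₁).toNat)
      ⟨by omega, g.trans g', hg.trans hg', by simp only [LinearEquiv.trans_apply]; omega⟩
    omega
  · push Not at hex
    have hno : ∀ g, InG B S g → B (g w) f₁ ≤ 0 := by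
      intro g hg
      by_contra hlt
      exact hex (B (g w) f₁).toNat (by omega) g hg (by omega)
    have hx0 : B w f₁ = 0 := by
      have h1 := hno _ (InG.refl B S)
      simp only [LinearEquiv.refl_apply] at h1
      by_contra hne
      -- x < 0
      obtain ⟨g, hg, e1, e2⟩ := move3 h H (2 + |B w f₂|) w
      obtain ⟨g', hg', e3⟩ := move2 h H 1 (g w)
      have := hno (g.trans g') (hg.trans hg')
      simp only [LinearEquiv.trans_apply] at this
      rw [e3, e2, e1] at this
      have h3 := le_abs_self (B w f₂)
      have h4 := abs_nonneg (B w f₂)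
      have : B w f₁ ≤ -1 := by omega
      nlinarith
    refine ⟨LinearEquiv.refl ℤ V, InG.refl B S, by simp [hx0], ?_⟩
    simp only [LinearEquiv.refl_apply]
    apply dvd_of_min h H w hx0.ge
    intro g hg hpos
    have := hno g hg
    omega

end

end Eichler

end James

open Matrix
namespace James

section Std
variable {V : Type*} [AddCommGroup V]

/-- hyperbolic system indexed by `i ≤ m` -/
structure HypSys (B : V →ₗ[ℤ] V →ₗ[ℤ] ℤ) (m : ℕ) (e f : ℕ → V) : Prop where
  ee : ∀ i ≤ m, ∀ j ≤ m, B (e i) (e j) = 0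
  ff : ∀ i ≤ m, ∀ j ≤ m, B (f i) (f j) = 0
  ef : ∀ i ≤ m, ∀ j ≤ m, B (e i) (f j) = if i = j then 1 else 0

/-- the standard vector -/
def std (e f : ℕ → V) (M : ℕ → ℕ → ℤ) (q : ℕ → ℤ) (i : ℕ) : V :=
  e i + ∑ j ∈ Finset.range i, M i j • f j + q i • f i

/-- orthogonal complement of the first `k` planes. -/
def compl (B : V →ₗ[ℤ] V →ₗ[ℤ] ℤ) (e f : ℕ → V) (k : ℕ) : Submodule ℤ V where
  carrier := {s | ∀ j < k, B (e j) s = 0 ∧ B (f j) s = 0}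
  add_mem' := by
    intro a b ha hb j hj
    simp [ha j hj, hb j hj]
  zero_mem' := by intro j hj; simp
  smul_mem' := by
    intro c a ha j hj
    simp [ha j hj]

variable {B : V →ₗ[ℤ] V →ₗ[ℤ] ℤ} (h : EvenSymm B) {m : ℕ} {e f : ℕ → V} (H : HypSys B m e f)
include h H

theorem HypSys.fe : ∀ i ≤ m, ∀ j ≤ m, B (f i) (e j) = if i = j then 1 else 0 := by
  intro i hi j hj
  rw [h.symm, H.ef j hj i hi]
  simp [eq_comm]

theorem hyp2_compl {k : ℕ} (hk : k < m) :
    Hyp2 B (compl B e f k) (e k) (f k) (e (k+1)) (f (k+1)) where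
  me₁ := fun j hj => ⟨H.ee _ (by omega) _ (by omega), by
    rw [H.fe h _ (by omega) _ (by omega), if_neg (by omega)]⟩
  mf₁ := fun j hj => ⟨by rw [H.ef _ (by omega) _ (by omega), if_neg (by omega)],
    H.ff _ (by omega) _ (by omega)⟩
  me₂ := fun j hj => ⟨H.ee _ (by omega) _ (by omega), by
    rw [H.fe h _ (by omega) _ (by omega), if_neg (by omega)]⟩
  mf₂ := fun j hj => ⟨by rw [H.ef _ (by omega) _ (by omega), if_neg (by omega)],
    H.ff _ (by omega) _ (by omega)⟩
  e₁e₁ := H.ee _ (by omega) _ (by omega)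
  e₁f₁ := by rw [H.ef _ (by omega) _ (by omega), if_pos rfl]
  e₁e₂ := H.ee _ (by omega) _ (by omega)
  e₁f₂ := by rw [H.ef _ (by omega) _ (by omega), if_neg (by omega)]
  f₁f₁ := H.ff _ (by omega) _ (by omega)
  f₁e₂ := by rw [H.fe h _ (by omega) _ (by omega), if_neg (by omega)]
  f₁f₂ := H.ff _ (by omega) _ (by omega)
  e₂e₂ := H.ee _ (by omega) _ (by omega)
  e₂f₂ := by rw [H.ef _ (by omega) _ (by omega), if_pos rfl]
  f₂f₂ := H.ff _ (by omega) _ (by omega)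

theorem std_f (M : ℕ → ℕ → ℤ) (q : ℕ → ℤ) {i j : ℕ} (hi : i ≤ m) (hj : j ≤ m) :
    B (std e f M q i) (f j) = if i = j then 1 else 0 := by
  have h1 : ∑ l ∈ Finset.range i, M i l * B (f l) (f j) = 0 := by
    apply Finset.sum_eq_zero
    intro l hl
    rw [H.ff l (by simp at hl; omega) j hj, mul_zero]
  simp [std, H.ef i hi j hj, H.ff i hi j hj, h1]

theorem std_e_lt (M : ℕ → ℕ → ℤ) (q : ℕ → ℤ) {i j : ℕ} (hi : i ≤ m) (hj : j < i) :
    B (std e f M q i) (e j) = M i j := by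
  have h1 : ∑ l ∈ Finset.range i, M i l * B (f l) (e j) = M i j := by
    rw [Finset.sum_eq_single j]
    · rw [H.fe h j (by omega) j (by omega), if_pos rfl, mul_one]
    · intro l hl hlj
      rw [H.fe h l (by simp at hl; omega) j (by omega), if_neg hlj, mul_zero]
    · simp; omega
  simp [std, H.ee i hi j (by omega), H.fe h i hi j (by omega), h1, (show i ≠ j by omega)]

theorem std_e_eq (M : ℕ → ℕ → ℤ) (q : ℕ → ℤ) {i : ℕ} (hi : i ≤ m) :
    B (std e f M q i) (e i) = q i := by
  have h1 : ∑ l ∈ Finset.range i, M i l * B (f l) (e i) = 0 := by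
    apply Finset.sum_eq_zero
    intro l hl
    simp at hl
    rw [H.fe h l (by omega) i hi, if_neg (by omega), mul_zero]
  simp [std, H.ee i hi i hi, H.fe h i hi i hi, h1]

theorem std_e_gt (M : ℕ → ℕ → ℤ) (q : ℕ → ℤ) {i j : ℕ} (hj : j ≤ m) (hij : i < j) :
    B (std e f M q i) (e j) = 0 := by
  have h1 : ∑ l ∈ Finset.range i, M i l * B (f l) (e j) = 0 := by
    apply Finset.sum_eq_zero
    intro l hl
    simp at hl
    rw [H.fe h l (by omega) j hj, if_neg (by omega), mul_zero]
  simp [std, H.ee i (by omega) j hj, H.fe h i (by omega) j hj, h1, (show i ≠ j by omega)]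

theorem std_std_lt (M : ℕ → ℕ → ℤ) (q : ℕ → ℤ) {i j : ℕ} (hi : i ≤ m) (hj : j < i) :
    B (std e f M q i) (std e f M q j) = M i j := by
  have h1 : ∑ l ∈ Finset.range j, M j l * B (std e f M q i) (f l) = 0 := by
    apply Finset.sum_eq_zero
    intro l hl
    simp at hl
    rw [std_f h H M q hi (by omega), if_neg (by omega), mul_zero]
  conv_lhs => rw [std.eq_1 e f M q j]
  simp [std_e_lt h H M q hi hj, std_f h H M q hi (show j ≤ m by omega), h1,
    (show i ≠ j by omega)]

theorem std_std_eq (M : ℕ → ℕ → ℤ) (q : ℕ → ℤ) {i : ℕ} (hi : i ≤ m) :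
    B (std e f M q i) (std e f M q i) = 2 * q i := by
  have h1 : ∑ l ∈ Finset.range i, M i l * B (std e f M q i) (f l) = 0 := by
    apply Finset.sum_eq_zero
    intro l hl
    simp at hl
    rw [std_f h H M q hi (by omega), if_neg (by omega), mul_zero]
  conv_lhs => rw [std.eq_1 e f M q i]
  conv_lhs => enter [2]; rw [← std.eq_1 e f M q i]
  rw [← std.eq_1 e f M q i]
  conv_lhs => enter [2]; rw [std.eq_1 e f M q i]
  simp [std_e_eq h H M q hi, std_f h H M q hi hi, h1]
  ring

theorem std_perp (M : ℕ → ℕ → ℤ) (q : ℕ → ℤ) {i k : ℕ} (hi : i < k) :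
    ∀ s ∈ compl B e f k, B (std e f M q i) s = 0 := by
  intro s hs
  have h1 : ∑ l ∈ Finset.range i, M i l * B (f l) s = 0 := by
    apply Finset.sum_eq_zero
    intro l hl
    simp at hl
    rw [(hs l (by omega)).2, mul_zero]
  simp [std, (hs i hi).1, (hs i hi).2, h1]

/-- The main uniqueness step: all primitive tuples can be moved to standard position. -/
theorem to_std {M : ℕ → ℕ → ℤ} {q : ℕ → ℤ} : ∀ k ≤ m, ∀ v z : ℕ → V,
    (∀ i < m, ∀ j < m, B (v i) (z j) = if i = j then 1 else 0) →
    (∀ i < m, ∀ j < m, B (v i) (v j) = M i j) → (∀ i < m, M i i = 2 * q i) →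
    ∃ g : V ≃ₗ[ℤ] V, Isom B g ∧ ∀ i < k, g (v i) = std e f M q i := by
  intro k
  induction k with
  | zero => intro _ v z _ _ _; exact ⟨LinearEquiv.refl ℤ V, fun _ _ => rfl, by simp⟩
  | succ k ih =>
    intro hk v z hz hM hq
    obtain ⟨g₀, hg₀, hs₀⟩ := ih (by omega) v z hz hM hq
    have HH := hyp2_compl h H (show k < m by omega)
    set S := compl B e f k with hS
    have fixS : ∀ g, InG B S g → ∀ i < k, g (std e f M q i) = std e f M q i :=
      fun g hg i hi => hg.2 _ (std_perp h H M q hi)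
    -- step a
    obtain ⟨g₁, hg₁, hc0, hcd⟩ := eichler h HH (g₀ (v k))
    set w₁ := g₁ (g₀ (v k)) with hw₁
    set c := B w₁ (f k) with hc
    set z₁ := g₁ (g₀ (z k)) with hz₁
    have hwz : B w₁ z₁ = 1 := by
      rw [hw₁, hz₁, hg₁.1, hg₀, hz k (by omega) k (by omega), if_pos rfl]
    have hvz : ∀ i < k, B (std e f M q i) z₁ = 0 := by
      intro i hi
      rw [← fixS g₁ hg₁ i hi, ← hs₀ i hi, hz₁, hg₁.1, hg₀, hz i (by omega) k (by omega),
        if_neg (by omega)]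
    -- step b
    set x := ∑ j ∈ Finset.range k, (B z₁ (f j) • e j + B z₁ (e j) • f j) with hx
    have Bxe : ∀ l ≤ m, B x (e l) = if l < k then B z₁ (e l) else 0 := by
      intro l hl
      simp only [hx, map_sum, map_add, map_smul, LinearMap.sum_apply, LinearMap.add_apply,
        LinearMap.smul_apply, smul_eq_mul]
      split_ifs with hlk
      · rw [Finset.sum_eq_single l]
        · rw [H.ee l hl l hl, H.fe h l hl l hl, if_pos rfl]; ring
        · intro b hb hbl
          simp at hb
          rw [H.ee b (by omega) l hl, H.fe h b (by omega) l hl, if_neg hbl]; ring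
        · simp; omega
      · apply Finset.sum_eq_zero
        intro b hb
        simp at hb
        rw [H.ee b (by omega) l hl, H.fe h b (by omega) l hl, if_neg (by omega)]; ring
    have Bxf : ∀ l ≤ m, B x (f l) = if l < k then B z₁ (f l) else 0 := by
      intro l hl
      simp only [hx, map_sum, map_add, map_smul, LinearMap.sum_apply, LinearMap.add_apply,
        LinearMap.smul_apply, smul_eq_mul]
      split_ifs with hlk
      · rw [Finset.sum_eq_single l]
        · rw [H.ff l hl l hl, H.ef l hl l hl, if_pos rfl]; ring
        · intro b hb hbl
          simp at hb
          rw [H.ff b (by omega) l hl, H.ef b (by omega) l hl, if_neg hbl]; ring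
        · simp; omega
      · apply Finset.sum_eq_zero
        intro b hb
        simp at hb
        rw [H.ff b (by omega) l hl, H.ef b (by omega) l hl, if_neg (by omega)]; ring
    have hzS : z₁ - x ∈ S := by
      intro j hj
      rw [h.symm (e j), h.symm (f j)]
      simp only [map_sub, LinearMap.sub_apply]
      rw [Bxe j (by omega), Bxf j (by omega), if_pos hj, if_pos hj]
      simp
    have hvx : ∀ i < k, B (std e f M q i) x = 0 := by
      intro i hi
      have := std_perp h H M q hi _ hzS
      rw [map_sub, hvz i hi] at this
      linarith
    have hwx : c ∣ B w₁ x - 1 := by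
      have := hcd _ hzS
      rw [map_sub, hwz] at this
      have h2 := (dvd_neg.mpr this)
      simpa using h2
    have hee : B (e (k+1)) (e (k+1)) = 0 := HH.e₂e₂
    have hex : B (e (k+1)) x = 0 := by
      rw [h.symm, Bxe _ (by omega), if_neg (by omega)]
    set τ := tv h hee hex with hτ
    have hτi : Isom B τ := tv_isom h hee hex
    have hτv : ∀ i < k, τ (std e f M q i) = std e f M q i := by
      intro i hi
      rw [hτ, tv_apply, hvx i hi, std_e_gt h H M q (by omega) (by omega)]
      simp
    set w₂ := τ w₁ with hw₂
    have hw₂f : B w₂ (f k) = c := by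
      rw [hw₂, hτ, tv_apply]
      simp [Bxf k (by omega), H.ef (k+1) (by omega) k (by omega), hc]
    have hw₂f' : c ∣ B w₂ (f (k+1)) - 1 := by
      have h1 : B w₂ (f (k+1)) - 1 = B w₁ (f (k+1)) + (B w₁ x - 1) -
          hn B x * B w₁ (e (k+1)) := by
        rw [hw₂, hτ, tv_apply]
        simp [Bxf (k+1) (by omega), H.ef (k+1) (by omega) (k+1) (by omega)]
        ring
      rw [h1]
      exact dvd_sub (dvd_add (hcd _ HH.mf₂) hwx) ((hcd _ HH.me₂).mul_left _)
    obtain ⟨u, hu⟩ := hw₂f'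
    -- step c
    obtain ⟨g₂, hg₂, hc0', hcd'⟩ := eichler h HH w₂
    set w₃ := g₂ w₂ with hw₃
    have hw₃f : B w₃ (f k) = 1 := by
      have hd : ∀ s ∈ S, B w₃ (f k) ∣ B w₂ s := by
        intro s hs
        have : g₂ (g₂.symm s) = s := by simp
        have hs' : g₂.symm s ∈ S := by
          intro j hj
          have h1 : g₂ (e j) = e j := hg₂.2 _ (fun t ht => (ht j hj).1)
          have h2 : g₂ (f j) = f j := hg₂.2 _ (fun t ht => (ht j hj).2)
          rw [← hg₂.1, ← hg₂.1 (f j), this, h1, h2]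
          exact hs j hj
        have hs2 : g₂ s ∈ S := by
          intro j hj
          have h1 : g₂ (e j) = e j := hg₂.2 _ (fun t ht => (ht j hj).1)
          have h2 : g₂ (f j) = f j := hg₂.2 _ (fun t ht => (ht j hj).2)
          rw [← h1, ← h2, hg₂.1, hg₂.1]
          exact hs j hj
        have := hcd' _ hs2
        rwa [hw₃, hg₂.1] at this
      have h1 : B w₃ (f k) ∣ 1 := by
        have := hd (f (k+1) - u • f k) (S.sub_mem HH.mf₂ (S.smul_mem _ HH.mf₁))
        have h2 : B w₂ (f (k+1) - u • f k) = 1 := by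
          simp [hw₂f]; linarith
        rwa [h2] at this
      exact Int.eq_one_of_dvd_one hc0' h1
    -- step d
    set t := std e f M q k with ht
    have hgtot : ∀ x y, B (g₂ (τ (g₁ (g₀ x)))) (g₂ (τ (g₁ (g₀ y)))) = B x y := by
      intro x y; rw [hg₂.1, hτi, hg₁.1, hg₀]
    have hvtot : ∀ i < k, g₂ (τ (g₁ (g₀ (v i)))) = std e f M q i := by
      intro i hi
      rw [hs₀ i hi, fixS g₁ hg₁ i hi, hτv i hi, fixS g₂ hg₂ i hi]
    have hw₃v : ∀ i < k, B w₃ (std e f M q i) = M k i := by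
      intro i hi
      rw [← hvtot i hi, hw₃, hw₂, hw₁, hgtot, hM k (by omega) i (by omega)]
    have hw₃w : B w₃ w₃ = 2 * q k := by
      rw [hw₃, hw₂, hw₁, hgtot, hM k (by omega) k (by omega), hq k (by omega)]
    have htt : B t t = 2 * q k := std_std_eq h H M q (by omega)
    have hff : B (f k) (f k) = 0 := HH.f₁f₁
    have hfa : B (f k) (w₃ - t) = 0 := by
      rw [h.symm, map_sub, LinearMap.sub_apply, hw₃f, ht, std_f h H M q (by omega) (by omega),
        if_pos rfl]; ring
    refine ⟨((g₀.trans g₁).trans τ).trans (g₂.trans (tv h hff hfa)), ?_, ?_⟩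
    · intro x y
      simp only [LinearEquiv.trans_apply]
      rw [tv_isom h hff hfa, hgtot]
    · intro i hi
      simp only [LinearEquiv.trans_apply]
      rcases Nat.lt_succ_iff_lt_or_eq.mp hi with hi | rfl
      · rw [hvtot i hi, tv_apply, std_f h H M q (by omega) (by omega), if_neg (by omega), map_sub,
          h.symm _ w₃, hw₃v i hi, ht, h.symm, std_std_lt h H M q (by omega) hi]
        simp
      · rw [← hw₁, ← hw₂, ← hw₃, tv_apply, hw₃f]
        have hh : 2 * hn B (w₃ - t) = 2 * B w₃ (w₃ - t) := by
          rw [← h.two_hn]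
          simp [hw₃w, htt, h.symm t w₃]
          ring
        have hh' : hn B (w₃ - t) = B w₃ (w₃ - t) := by linarith
        rw [hh', one_smul]
        simp [ht]
end Std
end James

open Matrix
namespace James

section Witt

/-- A Witt symbol on a commutative ring. -/
structure WSym {R A : Type} [CommRing R] [AddCommGroup A] (φ : R → A) : Prop where
  sq : ∀ a b, a ≠ 0 → b ≠ 0 → φ (a * b ^ 2) = φ a
  neg : ∀ a, a ≠ 0 → φ a + φ (-a) = 0
  add : ∀ a b, a ≠ 0 → b ≠ 0 → a + b ≠ 0 → φ a + φ b = φ (a + b) + φ (a * b * (a + b))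

/-- relations of the presented Witt group -/
def rels (R : Type) [CommRing R] : Set (FreeAbelianGroup R) :=
  {x | (∃ a b : R, a ≠ 0 ∧ b ≠ 0 ∧
        x = FreeAbelianGroup.of (a * b ^ 2) - FreeAbelianGroup.of a) ∨
      (∃ a : R, a ≠ 0 ∧ x = FreeAbelianGroup.of a + FreeAbelianGroup.of (-a)) ∨
      (∃ a b : R, a ≠ 0 ∧ b ≠ 0 ∧ a + b ≠ 0 ∧
        x = FreeAbelianGroup.of a + FreeAbelianGroup.of b
          - (FreeAbelianGroup.of (a + b) + FreeAbelianGroup.of (a * b * (a + b))))}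

/-- The presented Witt group. -/
abbrev WG (R : Type) [CommRing R] := FreeAbelianGroup R ⧸ AddSubgroup.closure (rels R)

/-- class of an element -/
def wc {R : Type} [CommRing R] (a : R) : WG R :=
  QuotientAddGroup.mk (FreeAbelianGroup.of a)

theorem wc_sym (R : Type) [CommRing R] : WSym (wc : R → WG R) where
  sq := by
    intro a b ha hb
    rw [← sub_eq_zero]
    unfold wc
    rw [← QuotientAddGroup.mk_sub, QuotientAddGroup.eq_zero_iff]
    exact AddSubgroup.subset_closure (Or.inl ⟨a, b, ha, hb, rfl⟩)
  neg := by
    intro a ha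
    unfold wc
    rw [← QuotientAddGroup.mk_add, QuotientAddGroup.eq_zero_iff]
    exact AddSubgroup.subset_closure (Or.inr (Or.inl ⟨a, ha, rfl⟩))
  add := by
    intro a b ha hb hab
    rw [← sub_eq_zero]
    unfold wc
    rw [← QuotientAddGroup.mk_add, ← QuotientAddGroup.mk_add, ← QuotientAddGroup.mk_sub,
      QuotientAddGroup.eq_zero_iff]
    exact AddSubgroup.subset_closure (Or.inr (Or.inr ⟨a, b, ha, hb, hab, rfl⟩))

/-- universal property -/
theorem WSym.exists_lift {R A : Type} [CommRing R] [AddCommGroup A] {φ : R → A} (h : WSym φ) :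
    ∃ F : WG R →+ A, ∀ a, F (wc a) = φ a := by
  refine ⟨QuotientAddGroup.lift _ (FreeAbelianGroup.lift φ) ?_, ?_⟩
  · rw [AddSubgroup.closure_le]
    rintro x (⟨a, b, ha, hb, rfl⟩ | ⟨a, ha, rfl⟩ | ⟨a, b, ha, hb, hab, rfl⟩)
    · simp [h.sq a b ha hb]
    · simpa using h.neg a ha
    · simp [h.add a b ha hb hab]
  · intro a
    simp [wc]

open Classical in
/-- residue -/
noncomputable def res (p : ℕ) (a : ℤ) : WG (ZMod p) :=
  if Odd (padicValInt p a) then wc (((a / (p : ℤ) ^ (padicValInt p a) : ℤ)) : ZMod p) else 0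

theorem res_eq (p : ℕ) [hp : Fact p.Prime] (e : ℕ) (u : ℤ) (hu : ¬ (p : ℤ) ∣ u) :
    res p ((p : ℤ) ^ e * u) = if Odd e then wc (u : ZMod p) else 0 := by
  have hu0 : u ≠ 0 := by rintro rfl; simp at hu
  have hp0 : (p : ℤ) ≠ 0 := by exact_mod_cast hp.out.ne_zero
  have hv : padicValInt p ((p : ℤ) ^ e * u) = e := by
    rw [padicValInt.mul (pow_ne_zero _ hp0) hu0, padicValInt.eq_zero_of_not_dvd hu]
    have : padicValInt p ((p : ℤ) ^ e) = e := by
      have : ((p : ℤ) ^ e) = ((p ^ e : ℕ) : ℤ) := by push_cast; rfl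
      rw [this, padicValInt.of_nat, padicValNat.prime_pow]
    omega
  unfold res
  rw [hv, Int.mul_ediv_cancel_left _ (pow_ne_zero _ hp0)]

theorem exists_form (p : ℕ) [hp : Fact p.Prime] (a : ℤ) (ha : a ≠ 0) :
    ∃ e : ℕ, ∃ u : ℤ, ¬ (p : ℤ) ∣ u ∧ a = (p : ℤ) ^ e * u := by
  have hf : FiniteMultiplicity (p : ℤ) a := by
    rw [Int.finiteMultiplicity_iff]
    exact ⟨by simpa using hp.out.ne_one, ha⟩
  obtain ⟨c, hc, hn⟩ := hf.exists_eq_pow_mul_and_not_dvd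
  exact ⟨_, c, hn, hc⟩

theorem res_sym (p : ℕ) [hp : Fact p.Prime] : WSym (res p) := by
  have hpz : Prime (p : ℤ) := Nat.prime_iff_prime_int.mp hp.out
  have hW := wc_sym (ZMod p)
  have cast_ne : ∀ u : ℤ, ¬ (p : ℤ) ∣ u → (u : ZMod p) ≠ 0 := by
    intro u hu h0; exact hu ((ZMod.intCast_zmod_eq_zero_iff_dvd u p).mp h0)
  have hpc : ((p : ℤ) : ZMod p) = 0 := by simp
  refine ⟨?_, ?_, ?_⟩
  · intro a b ha hb
    obtain ⟨e, u, hu, rfl⟩ := exists_form p a ha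
    obtain ⟨f, w, hw, rfl⟩ := exists_form p b hb
    have h1 : (p : ℤ) ^ e * u * ((p : ℤ) ^ f * w) ^ 2 = (p : ℤ) ^ (e + 2 * f) * (u * w ^ 2) := by
      ring
    have h2 : ¬ (p : ℤ) ∣ u * w ^ 2 := fun h => by
      rcases hpz.dvd_or_dvd h with h | h
      · exact hu h
      · exact hw (hpz.dvd_of_dvd_pow h)
    rw [h1, res_eq p _ _ h2, res_eq p _ _ hu]
    have : Odd (e + 2 * f) ↔ Odd e := by
      simp [Nat.odd_add]
    simp only [this]
    split_ifs
    · push_cast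
      exact hW.sq _ _ (cast_ne u hu) (cast_ne w hw)
    · rfl
  · intro a ha
    obtain ⟨e, u, hu, rfl⟩ := exists_form p a ha
    rw [← mul_neg, res_eq p _ _ hu, res_eq p _ _ (by simpa using hu)]
    split_ifs
    · push_cast
      exact hW.neg _ (cast_ne u hu)
    · simp
  · -- the case e < f
    have hlt : ∀ (e f : ℕ) (u w : ℤ), ¬ (p : ℤ) ∣ u → ¬ (p : ℤ) ∣ w → e < f →
        res p ((p : ℤ) ^ e * u) + res p ((p : ℤ) ^ f * w) =
        res p ((p : ℤ) ^ e * u + (p : ℤ) ^ f * w) +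
        res p ((p : ℤ) ^ e * u * ((p : ℤ) ^ f * w) * ((p : ℤ) ^ e * u + (p : ℤ) ^ f * w)) := by
      intro e f u w hu hw hef
      obtain ⟨k, rfl⟩ := Nat.exists_eq_add_of_lt hef
      set t := u + (p : ℤ) ^ (k + 1) * w with ht
      have htu : ¬ (p : ℤ) ∣ t := by
        intro h
        apply hu
        have h1 : (p : ℤ) ∣ (p : ℤ) ^ (k + 1) * w := Dvd.dvd.mul_right (dvd_pow_self _ (by omega)) _
        have := dvd_sub h h1
        rwa [ht, add_sub_cancel_right] at this
      have h1 : (p : ℤ) ^ e * u + (p : ℤ) ^ (e + k + 1) * w = (p : ℤ) ^ e * t := by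
        rw [ht]; ring
      rw [h1]
      have h2 : (p : ℤ) ^ e * u * ((p : ℤ) ^ (e + k + 1) * w) * ((p : ℤ) ^ e * t)
          = (p : ℤ) ^ ((e + k + 1) + 2 * e) * (u * w * t) := by ring
      have h3 : ¬ (p : ℤ) ∣ u * w * t := fun h => by
        rcases hpz.dvd_or_dvd h with h | h
        · rcases hpz.dvd_or_dvd h with h | h
          · exact hu h
          · exact hw h
        · exact htu h
      rw [h2, res_eq p _ _ hu, res_eq p _ _ hw, res_eq p _ _ htu, res_eq p _ _ h3]
      have hpar : Odd ((e + k + 1) + 2 * e) ↔ Odd (e + k + 1) := by simp [Nat.odd_add]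
      have htc : (t : ZMod p) = (u : ZMod p) := by
        rw [ht]; push_cast; simp
      have h4 : wc ((u * w * t : ℤ) : ZMod p) = wc (w : ZMod p) := by
        push_cast
        rw [htc, show (u : ZMod p) * w * u = w * u ^ 2 by ring]
        exact hW.sq _ _ (cast_ne w hw) (cast_ne u hu)
      simp only [hpar, h4, htc]
    intro a b ha hb hab
    obtain ⟨e, u, hu, rfl⟩ := exists_form p a ha
    obtain ⟨f, w, hw, rfl⟩ := exists_form p b hb
    rcases lt_trichotomy e f with hef | rfl | hef
    · exact hlt e f u w hu hw hef
    · have huw : u + w ≠ 0 := by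
        intro h0; apply hab; rw [← mul_add, h0, mul_zero]
      obtain ⟨k, t, ht, hk⟩ := exists_form p (u + w) huw
      have h1 : (p : ℤ) ^ e * u + (p : ℤ) ^ e * w = (p : ℤ) ^ (e + k) * t := by
        rw [← mul_add, hk]; ring
      rw [h1]
      have h2 : (p : ℤ) ^ e * u * ((p : ℤ) ^ e * w) * ((p : ℤ) ^ (e + k) * t)
          = (p : ℤ) ^ (e + k + 2 * e) * (u * w * t) := by ring
      have h3 : ¬ (p : ℤ) ∣ u * w * t := fun h => by
        rcases hpz.dvd_or_dvd h with h | h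
        · rcases hpz.dvd_or_dvd h with h | h
          · exact hu h
          · exact hw h
        · exact ht h
      rw [h2, res_eq p _ _ hu, res_eq p _ _ hw, res_eq p _ _ ht, res_eq p _ _ h3]
      have hpar : Odd (e + k + 2 * e) ↔ Odd (e + k) := by simp [Nat.odd_add]
      simp only [hpar]
      rcases Nat.eq_zero_or_pos k with rfl | hkpos
      · have htc : (t : ZMod p) = u + w := by
          have : t = u + w := by rw [hk]; ring
          rw [this]; push_cast; rfl
        have h5 := hW.add (u : ZMod p) w (cast_ne u hu) (cast_ne w hw) (by
          rw [← htc]; exact cast_ne t ht)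
        simp only [add_zero]
        split_ifs
        · push_cast
          rw [htc]; exact h5
        · rfl
      · have hwc : (w : ZMod p) = - u := by
          have : ((u + w : ℤ) : ZMod p) = 0 := by
            rw [hk]; push_cast; simp [hkpos.ne']
          push_cast at this
          linear_combination this
        have h6 : wc (u : ZMod p) + wc (w : ZMod p) = 0 := by
          rw [hwc]; exact hW.neg _ (cast_ne u hu)
        have h7 : wc (t : ZMod p) + wc ((u * w * t : ℤ) : ZMod p) = 0 := by
          push_cast
          rw [hwc, show (u : ZMod p) * -u * t = (-t) * u ^ 2 by ring,
            hW.sq _ _ (neg_ne_zero.mpr (cast_ne t ht)) (cast_ne u hu)]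
          exact hW.neg _ (cast_ne t ht)
        split_ifs
        · rw [h6, h7]
        · rw [h6]; simp
        · rw [h7]; simp
        · rfl
    · have := hlt f e w u hw hu hef
      rw [add_comm (res p ((p : ℤ) ^ e * u)), this, add_comm ((p : ℤ) ^ e * u)]
      congr 2
      ring

/-- smooth integers -/
def Sm (N : ℕ) (n : ℤ) : Prop := n ≠ 0 ∧ ∀ q : ℕ, q.Prime → (q : ℤ) ∣ n → q < N

theorem Sm.mul {N : ℕ} {a b : ℤ} (ha : Sm N a) (hb : Sm N b) : Sm N (a * b) := by
  refine ⟨mul_ne_zero ha.1 hb.1, fun q hq hd => ?_⟩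
  rcases (Nat.prime_iff_prime_int.mp hq).dvd_or_dvd hd with h | h
  · exact ha.2 q hq h
  · exact hb.2 q hq h

theorem Sm.of_lt {N : ℕ} {a : ℤ} (ha : a ≠ 0) (hN : |a| < N) : Sm N a := by
  refine ⟨ha, fun q hq hd => ?_⟩
  have := Int.le_of_dvd (abs_pos.mpr ha) ((dvd_abs _ _).mpr hd)
  omega

/-- subgroup generated by smooth classes -/
def LL (N : ℕ) : AddSubgroup (WG ℤ) := AddSubgroup.closure (wc '' {n | Sm N n})

theorem Sm.mem {N : ℕ} {a : ℤ} (ha : Sm N a) : wc a ∈ LL N :=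
  AddSubgroup.subset_closure ⟨a, ha, rfl⟩

theorem red (p : ℕ) [hp : Fact p.Prime] {n1 n2 m r : ℤ} (h1 : n1 ≠ 0) (h1' : |n1| < p)
    (h2 : n2 ≠ 0) (h2' : |n2| < p) (hr : r ≠ 0) (hr' : |r| < p) (hm : Sm p m)
    (hc : (p : ℤ) ∣ n1 * n2 - r) :
    (QuotientAddGroup.mk (wc (p * m * (n1 * n2))) : WG ℤ ⧸ LL p) =
      QuotientAddGroup.mk (wc (p * m * r)) := by
  obtain ⟨l, hl⟩ := hc
  have hp0 : (p : ℤ) ≠ 0 := by exact_mod_cast hp.out.ne_zero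
  have hppos : 0 < (p : ℤ) := by exact_mod_cast hp.out.pos
  by_cases hl0 : l = 0
  · have : n1 * n2 = r := by rw [hl0] at hl; linarith
    rw [this]
  have hl' : |l| < p := by
    have h3 : |(p : ℤ) * l| ≤ |n1 * n2| + |r| := by rw [← hl]; exact abs_sub _ _
    rw [abs_mul, abs_mul, abs_of_pos hppos] at h3
    have : |n1| * |n2| ≤ (p - 1) * (p - 1) := by
      apply mul_le_mul <;> first | omega | positivity
    by_contra hcon
    push Not at hcon
    nlinarith
  have hn : n1 * n2 = r + p * l := by linarith
  have hW := wc_sym ℤ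
  have key := hW.add (p * m * r) (p * m * (p * l)) (by simp [hp.out.ne_zero, hm.1, hr])
    (by simp [hp.out.ne_zero, hm.1, hl0]) (by rw [← mul_add, ← hn]; simp [hp.out.ne_zero, hm.1, h1, h2])
  rw [← mul_add, ← hn] at key
  have e1 : wc ((p : ℤ) * m * (p * l)) = wc (m * l) := by
    rw [show (p : ℤ) * m * (p * l) = (m * l) * p ^ 2 by ring]
    exact hW.sq _ _ (mul_ne_zero hm.1 hl0) hp0
  have e2 : wc ((p : ℤ) * m * r * (p * m * (p * l)) * (p * m * (n1 * n2))) =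
      wc (m * r * l * (n1 * n2)) := by
    rw [show (p : ℤ) * m * r * (p * m * (p * l)) * (p * m * (n1 * n2)) =
      (m * r * l * (n1 * n2)) * (p ^ 2 * m) ^ 2 by ring]
    exact hW.sq _ _ (by simp [hm.1, hr, hl0, h1, h2]) (by simp [hp.out.ne_zero, hm.1])
  rw [e1, e2] at key
  rw [QuotientAddGroup.eq]
  have : -wc ((p : ℤ) * m * (n1 * n2)) + wc ((p : ℤ) * m * r) =
      wc (m * r * l * (n1 * n2)) - wc (m * l) := by
    have := congrArg (fun x => x - wc (m * l) - wc ((p : ℤ) * m * (n1 * n2))) key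
    rw [neg_add_eq_sub]
    convert this using 1 <;> abel
  rw [this]
  apply AddSubgroup.sub_mem
  · exact (((hm.mul (Sm.of_lt hr hr')).mul (Sm.of_lt hl0 hl')).mul
      ((Sm.of_lt h1 h1').mul (Sm.of_lt h2 h2'))).mem
  · exact (hm.mul (Sm.of_lt hl0 hl')).mem

theorem val_facts (p : ℕ) [hp : Fact p.Prime] {u : ZMod p} (hu : u ≠ 0) :
    ((u.val : ℤ) ≠ 0) ∧ |(u.val : ℤ)| < p := by
  have h1 : u.val ≠ 0 := by rwa [Ne, ZMod.val_eq_zero]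
  have h2 := ZMod.val_lt u
  refine ⟨by exact_mod_cast h1, ?_⟩
  rw [abs_of_nonneg (by positivity)]; exact_mod_cast h2

theorem sm_cast_ne (p : ℕ) [hp : Fact p.Prime] {n : ℤ} (hn : Sm p n) : (n : ZMod p) ≠ 0 := by
  intro h0
  have := hn.2 p hp.out ((ZMod.intCast_zmod_eq_zero_iff_dvd n p).mp h0)
  omega

theorem red_nat (p : ℕ) [hp : Fact p.Prime] (n : ℕ) : ∀ m : ℤ, Sm p m → Sm p (n : ℤ) →
    (QuotientAddGroup.mk (wc (p * m * (n : ℤ))) : WG ℤ ⧸ LL p) =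
      QuotientAddGroup.mk (wc (p * m * ((n : ZMod p).val : ℤ))) := by
  induction n using Nat.strong_induction_on with
  | _ n ih =>
    intro m hm hn
    by_cases h1 : n = 1
    · subst h1
      have : Fact (1 < p) := ⟨hp.out.one_lt⟩
      rw [Nat.cast_one, Nat.cast_one, ZMod.val_one]
      simp
    · have hn0 : n ≠ 0 := by have := hn.1; exact_mod_cast this
      have hq := Nat.minFac_prime h1
      obtain ⟨n', hn'⟩ := Nat.minFac_dvd n
      set q := n.minFac
      have hn'0 : n' ≠ 0 := by rintro rfl; simp at hn'; exact hn0 hn'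
      have hlt : n' < n := by
        rw [hn']
        have := hq.two_le
        have : 0 < n' := Nat.pos_of_ne_zero hn'0
        nlinarith
      have hqlt : q < p := hn.2 q hq (by rw [hn']; push_cast; exact Dvd.intro _ rfl)
      have hqS : Sm p (q : ℤ) := Sm.of_lt (by exact_mod_cast hq.ne_zero) (by
        rw [abs_of_nonneg (by positivity)]; exact_mod_cast hqlt)
      have hn'S : Sm p (n' : ℤ) := ⟨by exact_mod_cast hn'0, fun r hr hd => hn.2 r hr (by
        rw [hn']; push_cast; exact Dvd.dvd.mul_left hd _)⟩
      have e1 : (p : ℤ) * m * (n : ℤ) = p * (m * q) * n' := by rw [hn']; push_cast; ring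
      rw [e1, ih n' hlt (m * q) (hm.mul hqS) hn'S]
      have hc1 : (n' : ZMod p) ≠ 0 := by simpa using sm_cast_ne p hn'S
      have hc2 : (n : ZMod p) ≠ 0 := by simpa using sm_cast_ne p hn
      obtain ⟨a1, a2⟩ := val_facts p hc1
      obtain ⟨b1, b2⟩ := val_facts p hc2
      have := red p (n1 := q) (n2 := ((n' : ZMod p).val : ℤ)) (m := m)
        (r := ((n : ZMod p).val : ℤ)) hqS.1 (by
          rw [abs_of_nonneg (by positivity)]; exact_mod_cast hqlt) a1 a2 b1 b2 hm (by
          rw [← ZMod.intCast_zmod_eq_zero_iff_dvd]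
          push_cast
          rw [ZMod.natCast_zmod_val, ZMod.natCast_zmod_val, hn']
          push_cast
          ring)
      rw [← this]
      congr 2
      ring

theorem red_int (p : ℕ) [hp : Fact p.Prime] (n : ℤ) (hn : Sm p n) :
    (QuotientAddGroup.mk (wc (p * n)) : WG ℤ ⧸ LL p) =
      QuotientAddGroup.mk (wc ((p : ℤ) * ((n : ZMod p).val : ℤ))) := by
  have hp2 : 2 ≤ (p : ℤ) := by exact_mod_cast hp.out.two_le
  have h1S : Sm p 1 := Sm.of_lt one_ne_zero (by simp; omega)
  have hm1S : Sm p (-1) := Sm.of_lt (by simp) (by simp; omega)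
  have hnS : Sm p (n.natAbs : ℤ) := ⟨by simpa using hn.1, fun q hq hd => hn.2 q hq (by
    simpa using hd)⟩
  rcases Int.natAbs_eq n with h | h
  · have := red_nat p n.natAbs 1 h1S hnS
    rw [mul_one] at this
    rw [h, this]
    simp
  · have := red_nat p n.natAbs (-1) hm1S hnS
    have hc1 : (n.natAbs : ZMod p) ≠ 0 := by simpa using sm_cast_ne p hnS
    obtain ⟨a1, a2⟩ := val_facts p hc1
    obtain ⟨b1, b2⟩ := val_facts p (sm_cast_ne p hn)
    have hz : (n : ZMod p) = -(n.natAbs : ZMod p) := by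
      have h9 := congrArg (Int.cast : ℤ → ZMod p) h
      rw [Int.cast_neg, Int.cast_natCast] at h9
      exact h9
    have h2 := red p (n1 := -1) (n2 := ((n.natAbs : ZMod p).val : ℤ)) (m := 1)
        (r := ((n : ZMod p).val : ℤ)) (by simp) (by simp; omega) a1 a2 b1 b2 h1S (by
          rw [← ZMod.intCast_zmod_eq_zero_iff_dvd]
          rw [Int.cast_sub, Int.cast_mul, Int.cast_natCast, Int.cast_natCast,
            ZMod.natCast_zmod_val, ZMod.natCast_zmod_val, hz, Int.cast_neg, Int.cast_one]
          ring)
    have e1 : (p : ℤ) * n = p * (-1) * (n.natAbs : ℤ) := by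
      linear_combination (p : ℤ) * h
    rw [e1, this]
    rw [mul_one] at h2
    rw [← h2]
    congr 2
    ring

/-- section of the residue -/
noncomputable def sct (p : ℕ) (u : ZMod p) : WG ℤ ⧸ LL p :=
  QuotientAddGroup.mk (wc ((p : ℤ) * (u.val : ℤ)))

theorem sct_sym (p : ℕ) [hp : Fact p.Prime] : WSym (sct p) := by
  have hW := wc_sym ℤ
  have hp0 : (p : ℤ) ≠ 0 := by exact_mod_cast hp.out.ne_zero
  have sv : ∀ {u : ZMod p}, u ≠ 0 → Sm p (u.val : ℤ) := fun hu =>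
    Sm.of_lt (val_facts p hu).1 (val_facts p hu).2
  have hred : ∀ n : ℤ, Sm p n → sct p (n : ZMod p) = QuotientAddGroup.mk (wc (p * n)) :=
    fun n hn => (red_int p n hn).symm
  have hm1S : Sm p (-1) := Sm.of_lt (by simp) (by
    have := hp.out.two_le
    simp; omega)
  refine ⟨?_, ?_, ?_⟩
  · intro u w hu hw
    have := hred ((u.val : ℤ) * ((w.val : ℤ) * (w.val : ℤ))) ((sv hu).mul ((sv hw).mul (sv hw)))
    push_cast at this
    rw [ZMod.natCast_zmod_val, ZMod.natCast_zmod_val] at this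
    rw [pow_two, this, sct, ← mul_assoc, ← pow_two, hW.sq _ _ (mul_ne_zero hp0 (sv hu).1) (sv hw).1]
  · intro u hu
    have := hred ((-1) * (u.val : ℤ)) (hm1S.mul (sv hu))
    push_cast at this
    rw [ZMod.natCast_zmod_val, neg_one_mul] at this
    rw [this, sct, ← QuotientAddGroup.mk_add]
    have e : (p : ℤ) * (-1 * (u.val : ℤ)) = - (p * (u.val : ℤ)) := by ring
    rw [e, hW.neg _ (mul_ne_zero hp0 (sv hu).1)]
    rfl
  · intro u w hu hw huw
    obtain ⟨a, ha, hau⟩ : ∃ a : ℤ, Sm p a ∧ (a : ZMod p) = u :=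
      ⟨u.val, sv hu, by push_cast; exact ZMod.natCast_zmod_val u⟩
    -- choose representative of w so that sum is small
    obtain ⟨a, b, ha, hb, hau, hbw, hab0, habp⟩ : ∃ a b : ℤ, Sm p a ∧ Sm p b ∧
        (a : ZMod p) = u ∧ (b : ZMod p) = w ∧ a + b ≠ 0 ∧ |a + b| < p := by
      obtain ⟨u1, u2⟩ := val_facts p hu
      obtain ⟨w1, w2⟩ := val_facts p hw
      have u3 : ((u.val : ℤ) : ZMod p) = u := by push_cast; exact ZMod.natCast_zmod_val u
      have w3 : ((w.val : ℤ) : ZMod p) = w := by push_cast; exact ZMod.natCast_zmod_val w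
      have hne : (u.val : ℤ) + w.val ≠ p := by
        intro h
        have : (((u.val : ℤ) + w.val : ℤ) : ZMod p) = 0 := by rw [h]; simp
        push_cast at this
        rw [ZMod.natCast_zmod_val, ZMod.natCast_zmod_val] at this
        exact huw this
      rw [Nat.abs_cast] at u2 w2
      by_cases hlt : (u.val : ℤ) + w.val < p
      · exact ⟨u.val, w.val, sv hu, sv hw, u3, w3, by omega, by rw [abs_lt]; omega⟩
      · exact ⟨u.val, w.val - p, sv hu, Sm.of_lt (by omega) (by rw [abs_lt]; omega), u3,
          by rw [Int.cast_sub, w3]; simp, by omega, by rw [abs_lt]; omega⟩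
    have hab := Sm.of_lt hab0 habp
    have s1 := hred a ha
    have s2 := hred b hb
    have s3 := hred (a + b) hab
    have s4 := hred (a * b * (a + b)) ((ha.mul hb).mul hab)
    push_cast at s3 s4
    rw [← hau, ← hbw, s1, s2, s3, s4, ← QuotientAddGroup.mk_add, ← QuotientAddGroup.mk_add]
    have := hW.add (p * a) (p * b) (mul_ne_zero hp0 ha.1) (mul_ne_zero hp0 hb.1)
      (by rw [← mul_add]; exact mul_ne_zero hp0 hab0)
    rw [← mul_add] at this
    rw [this, show (p : ℤ) * a * (p * b) * (p * (a + b)) = (p * (a * b * (a + b))) * p ^ 2 by ring,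
      hW.sq _ _ (mul_ne_zero hp0 ((ha.mul hb).mul hab).1) hp0]

/-- the residue homomorphism -/
theorem step (p : ℕ) [hp : Fact p.Prime] (F : WG ℤ →+ WG (ZMod p))
    (hF : ∀ a, F (wc a) = res p a) (x : WG ℤ) (hx : x ∈ LL (p + 1)) (h0 : F x = 0) :
    x ∈ LL p := by
  obtain ⟨s, hs⟩ := (sct_sym p).exists_lift
  have hW := wc_sym ℤ
  have hp0 : (p : ℤ) ≠ 0 := by exact_mod_cast hp.out.ne_zero
  have key : ∀ y ∈ LL (p + 1), s (F y) = QuotientAddGroup.mk y := by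
    intro y hy
    induction hy using AddSubgroup.closure_induction with
    | zero => simp
    | add x y _ _ hx hy => rw [map_add, map_add, hx, hy]; rfl
    | neg x _ hx => rw [map_neg, map_neg, hx]; rfl
    | mem y hy =>
      obtain ⟨n, hn, rfl⟩ := hy
      obtain ⟨e, u, hu, rfl⟩ := exists_form p n hn.1
      have hu0 : u ≠ 0 := by rintro rfl; simp at hu
      have huS : Sm p u := by
        refine ⟨hu0, fun q hq hd => ?_⟩
        have h1 := hn.2 q hq (Dvd.dvd.mul_left hd _)
        have h2 : q ≠ p := by rintro rfl; exact hu hd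
        omega
      rw [hF, res_eq p e u hu]
      split_ifs with ho
      · obtain ⟨k, rfl⟩ := ho
        rw [hs, sct, ← red_int p u huS, show (p : ℤ) ^ (2 * k + 1) * u = (p * u) * (p ^ k) ^ 2 by ring,
          hW.sq _ _ (mul_ne_zero hp0 hu0) (pow_ne_zero _ hp0)]
      · rw [Nat.not_odd_iff_even] at ho
        obtain ⟨k, rfl⟩ := ho
        rw [map_zero, eq_comm, QuotientAddGroup.eq_zero_iff,
          show (p : ℤ) ^ (k + k) * u = u * (p ^ k) ^ 2 by ring,
          hW.sq _ _ hu0 (pow_ne_zero _ hp0)]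
        exact huS.mem
  have := key x hx
  rw [h0, map_zero, eq_comm, QuotientAddGroup.eq_zero_iff] at this
  exact this

theorem mem_LL_of_res (F : ∀ p : ℕ, WG ℤ →+ WG (ZMod p))
    (hF : ∀ p, p.Prime → ∀ a, F p (wc a) = res p a) (x : WG ℤ)
    (h0 : ∀ p, p.Prime → F p x = 0) (N : ℕ) (hx : x ∈ LL N) : x ∈ LL 0 := by
  induction N with
  | zero => exact hx
  | succ N ih =>
    apply ih
    by_cases hN : N.Prime
    · haveI : Fact N.Prime := ⟨hN⟩
      exact step N (F N) (hF N hN) x hx (h0 N hN)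
    · refine AddSubgroup.closure_mono (Set.image_mono ?_) hx
      intro n hn
      refine ⟨hn.1, fun q hq hd => ?_⟩
      have h1 := hn.2 q hq hd
      have h2 : q ≠ N := by rintro rfl; exact hN hq
      omega

theorem LL_zero (x : WG ℤ) (hx : x ∈ LL 0) : ∃ k : ℤ, x = k • wc (1 : ℤ) := by
  have hW := wc_sym ℤ
  induction hx using AddSubgroup.closure_induction with
  | zero => exact ⟨0, by simp⟩
  | add x y _ _ hx hy =>
    obtain ⟨k, rfl⟩ := hx
    obtain ⟨l, rfl⟩ := hy
    exact ⟨k + l, by rw [add_zsmul]⟩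
  | neg x _ hx =>
    obtain ⟨k, rfl⟩ := hx
    exact ⟨-k, by rw [neg_zsmul]⟩
  | mem y hy =>
    obtain ⟨n, hn, rfl⟩ := hy
    have h1 : n.natAbs = 1 := by
      by_contra h1
      obtain ⟨q, hq, hd⟩ := Nat.exists_prime_and_dvd h1
      have := hn.2 q hq (Int.natCast_dvd.mpr hd)
      omega
    rcases Int.natAbs_eq n with h | h
    · exact ⟨1, by rw [h, h1]; simp⟩
    · refine ⟨-1, ?_⟩
      rw [h, h1]
      have := hW.neg 1 one_ne_zero
      rw [Nat.cast_one, neg_zsmul, one_zsmul]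
      exact (neg_eq_of_add_eq_zero_right this).symm

theorem exists_LL {ι : Type} [Fintype ι] (d : ι → ℤ) (hd : ∀ i, d i ≠ 0) :
    ∃ N, ∑ i, wc (d i) ∈ LL N := by
  refine ⟨∑ i, (d i).natAbs + 1, AddSubgroup.sum_mem _ fun i _ => ?_⟩
  apply Sm.mem
  apply Sm.of_lt (hd i)
  have := Finset.single_le_sum (f := fun i => (d i).natAbs) (fun i _ => Nat.zero_le _)
    (Finset.mem_univ i)
  rw [← Int.natCast_natAbs]
  have h3 : (d i).natAbs < ∑ i, (d i).natAbs + 1 := Nat.lt_succ_of_le this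
  exact_mod_cast h3

/-- Milnor-Husemoller: all residues vanish implies multiple of 1. -/
theorem milnor {ι : Type} [Fintype ι] (d : ι → ℤ) (hd : ∀ i, d i ≠ 0)
    (h0 : ∀ p, p.Prime → ∑ i, res p (d i) = 0) :
    ∃ k : ℤ, ∑ i, wc (d i) = k • wc (1 : ℤ) := by
  have : ∀ p : ℕ, ∃ F : WG ℤ →+ WG (ZMod p), p.Prime → ∀ a, F (wc a) = res p a := by
    intro p
    by_cases hp : p.Prime
    · haveI : Fact p.Prime := ⟨hp⟩
      obtain ⟨F, hF⟩ := (res_sym p).exists_lift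
      exact ⟨F, fun _ => hF⟩
    · exact ⟨0, fun h => absurd h hp⟩
  choose F hF using this
  obtain ⟨N, hN⟩ := exists_LL d hd
  apply LL_zero
  apply mem_LL_of_res F hF _ _ N hN
  intro p hp
  rw [map_sum, ← h0 p hp]
  exact Finset.sum_congr rfl fun i _ => hF p hp _

end Witt
end James

open Matrix
namespace James

section Chain

/-- extension of a symbol to the rationals -/
def ratExt {A : Type} (φ : ℤ → A) (a : ℚ) : A := φ (a.num * a.den)

theorem ratExt_eq {A : Type} [AddCommGroup A] {φ : ℤ → A} (h : WSym φ) {a : ℚ} {x y : ℤ}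
    (hx : x ≠ 0) (hy : y ≠ 0) (ha : a = x / y) : ratExt φ a = φ (x * y) := by
  have ha0 : a ≠ 0 := by rw [ha]; positivity
  have hn : a.num ≠ 0 := Rat.num_ne_zero.mpr ha0
  have hd : (a.den : ℤ) ≠ 0 := by exact_mod_cast a.den_nz
  have hc : a.num * y = x * a.den := by
    have h1 : (a.num : ℚ) / a.den = x / y := by rw [Rat.num_div_den, ha]
    rw [div_eq_div_iff (by exact_mod_cast hd) (by exact_mod_cast hy)] at h1
    exact_mod_cast h1
  unfold ratExt
  rw [← h.sq _ y (mul_ne_zero hn hd) hy, ← h.sq _ (a.den : ℤ) (mul_ne_zero hx hy) hd]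
  congr 1
  linear_combination (a.den * y : ℤ) * hc

theorem ratExt_int {A : Type} [AddCommGroup A] {φ : ℤ → A} (h : WSym φ) {x : ℤ}
    (hx : x ≠ 0) : ratExt φ (x : ℚ) = φ x := by
  rw [ratExt_eq h hx one_ne_zero (by simp), mul_one]

theorem ratExt_sym {A : Type} [AddCommGroup A] {φ : ℤ → A} (h : WSym φ) : WSym (ratExt φ) where
  sq := by
    intro a b ha hb
    have hn : a.num ≠ 0 := Rat.num_ne_zero.mpr ha
    have hd : (a.den : ℤ) ≠ 0 := by exact_mod_cast a.den_nz
    have hn' : b.num ≠ 0 := Rat.num_ne_zero.mpr hb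
    have hd' : (b.den : ℤ) ≠ 0 := by exact_mod_cast b.den_nz
    rw [ratExt_eq h (x := a.num * b.num ^ 2) (y := a.den * b.den ^ 2) (by positivity)
      (by positivity) (by
        push_cast
        conv_lhs => rw [← Rat.num_div_den a, ← Rat.num_div_den b]
        rw [div_pow, div_mul_div_comm])]
    unfold ratExt
    rw [← h.sq _ (b.num * b.den) (mul_ne_zero hn hd) (mul_ne_zero hn' hd')]
    congr 1
    ring
  neg := by
    intro a ha
    have hn : a.num ≠ 0 := Rat.num_ne_zero.mpr ha
    have hd : (a.den : ℤ) ≠ 0 := by exact_mod_cast a.den_nz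
    unfold ratExt
    rw [Rat.num_neg_eq_neg_num, Rat.den_neg_eq_den, neg_mul]
    exact h.neg _ (mul_ne_zero hn hd)
  add := by
    intro a b ha hb hab
    obtain ⟨D, x, y, hD, rfl, rfl⟩ : ∃ D x y : ℤ, D ≠ 0 ∧ a = x / D ∧ b = y / D := by
      have hd : (a.den : ℚ) ≠ 0 := by exact_mod_cast a.den_nz
      have hd' : (b.den : ℚ) ≠ 0 := by exact_mod_cast b.den_nz
      refine ⟨a.den * b.den, a.num * b.den, b.num * a.den, ?_, ?_, ?_⟩
      · exact_mod_cast mul_ne_zero a.den_nz b.den_nz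
      · push_cast
        rw [mul_div_mul_right _ _ hd', Rat.num_div_den]
      · push_cast
        rw [mul_comm (a.den : ℚ), mul_div_mul_right _ _ hd, Rat.num_div_den]
    have hDq : (D : ℚ) ≠ 0 := by exact_mod_cast hD
    have hx : x ≠ 0 := by rintro rfl; simp at ha
    have hy : y ≠ 0 := by rintro rfl; simp at hb
    have hxy : x + y ≠ 0 := by
      intro h0
      apply hab
      rw [← add_div]
      have : (x : ℚ) + y = 0 := by exact_mod_cast h0
      rw [this, zero_div]
    rw [ratExt_eq h hx hD rfl, ratExt_eq h hy hD rfl,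
      ratExt_eq h (x := x + y) (y := D) hxy hD (by push_cast; rw [add_div]),
      ratExt_eq h (x := x * y * (x + y)) (y := D ^ 3)
        (mul_ne_zero (mul_ne_zero hx hy) hxy) (pow_ne_zero _ hD) (by push_cast; field_simp),
      h.add _ _ (mul_ne_zero hx hD) (mul_ne_zero hy hD)
        (by rw [← add_mul]; exact mul_ne_zero hxy hD)]
    congr 2 <;> ring

variable {V : Type} [AddCommGroup V] [Module ℚ V] (B : V →ₗ[ℚ] V →ₗ[ℚ] ℚ)

/-- orthogonal family with nonzero norms -/
structure Orth {ι : Type} (e : ι → V) : Prop where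
  orth : ∀ i j, i ≠ j → B (e i) (e j) = 0
  ne : ∀ i, B (e i) (e i) ≠ 0

variable {B}

theorem sum_pair {ι A : Type} [Fintype ι] [DecidableEq ι] [AddCommMonoid A] (f : ι → A) {i j : ι}
    (hij : i ≠ j) : ∑ k, f k = f i + f j + ∑ k ∈ (Finset.univ.erase i).erase j, f k := by
  rw [add_assoc, Finset.add_sum_erase _ _ (by simp [hij.symm]), Finset.add_sum_erase _ _ (by simp)]

/-- elementary step -/
theorem chain_step (hB : ∀ x y, B x y = B y x) {A : Type} [AddCommGroup A] {φ : ℚ → A}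
    (hφ : WSym φ) {n : ℕ} (e : Fin n → V) (he : Orth B e) (c : Fin n → ℚ) {i j : Fin n}
    (hij : i ≠ j) (hci : c i ≠ 0) (hcj : c j ≠ 0)
    (hq : c i ^ 2 * B (e i) (e i) + c j ^ 2 * B (e j) (e j) ≠ 0) :
    ∃ e' : Fin n → V, ∃ c' : Fin n → ℚ, Orth B e' ∧ (∀ k, e k ∈ Submodule.span ℚ (Set.range e')) ∧
      ∑ k, φ (B (e' k) (e' k)) = ∑ k, φ (B (e k) (e k)) ∧
      ∑ k, c' k • e' k = ∑ k, c k • e k ∧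
      (∀ k, c' k ≠ 0 → c k ≠ 0) ∧ c' j = 0 := by
  set a := B (e i) (e i) with ha
  set b := B (e j) (e j) with hb
  have ha0 : a ≠ 0 := he.ne i
  have hb0 : b ≠ 0 := he.ne j
  have hij0 : B (e i) (e j) = 0 := he.orth i j hij
  have hji0 : B (e j) (e i) = 0 := he.orth j i hij.symm
  set w := c i • e i + c j • e j with hw
  set w' := (c j * b) • e i - (c i * a) • e j with hw'
  set s := c i ^ 2 * a + c j ^ 2 * b with hs
  have hww : B w w = s := by
    simp only [hw, map_add, map_smul, LinearMap.add_apply, LinearMap.smul_apply, smul_eq_mul,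
      hij0, hji0, ← ha, ← hb, hs]
    ring
  have hww' : B w' w' = a * b * s := by
    simp only [hw', map_sub, map_smul, LinearMap.sub_apply, LinearMap.smul_apply, smul_eq_mul,
      hij0, hji0, ← ha, ← hb, hs]
    ring
  have hw1 : B w w' = 0 := by
    simp only [hw, hw', map_add, map_sub, map_smul, LinearMap.add_apply, LinearMap.smul_apply,
      smul_eq_mul, hij0, hji0, ← ha, ← hb]
    ring
  have hk1 : ∀ k, k ≠ i → k ≠ j → B (e k) w = 0 ∧ B (e k) w' = 0 := by
    intro k h1 h2
    simp [hw, hw', he.orth k i h1, he.orth k j h2]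
  set e' : Fin n → V := Function.update (Function.update e i w) j w' with he'
  have e'i : e' i = w := by rw [he', Function.update_of_ne hij, Function.update_self]
  have e'j : e' j = w' := by rw [he', Function.update_self]
  have e'k : ∀ k, k ≠ i → k ≠ j → e' k = e k := by
    intro k h1 h2
    rw [he', Function.update_of_ne h2, Function.update_of_ne h1]
  have hcases : ∀ k, k = i ∨ k = j ∨ (k ≠ i ∧ k ≠ j) := by intro k; tauto
  refine ⟨e', fun k => if k = i then 1 else if k = j then 0 else c k, ⟨?_, ?_⟩, ?_, ?_, ?_, ?_, ?_⟩
  · intro k l hkl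
    rcases hcases k with rfl | rfl | ⟨h1, h2⟩ <;> rcases hcases l with rfl | rfl | ⟨h3, h4⟩
    · exact absurd rfl hkl
    · rw [e'i, e'j, hw1]
    · rw [e'i, e'k l h3 h4, hB, (hk1 l h3 h4).1]
    · rw [e'i, e'j, hB, hw1]
    · exact absurd rfl hkl
    · rw [e'j, e'k l h3 h4, hB, (hk1 l h3 h4).2]
    · rw [e'i, e'k k h1 h2, (hk1 k h1 h2).1]
    · rw [e'j, e'k k h1 h2, (hk1 k h1 h2).2]
    · rw [e'k k h1 h2, e'k l h3 h4, he.orth k l hkl]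
  · intro k
    rcases hcases k with rfl | rfl | ⟨h1, h2⟩
    · rw [e'i, hww]; exact hq
    · rw [e'j, hww']; exact mul_ne_zero (mul_ne_zero ha0 hb0) hq
    · rw [e'k k h1 h2]; exact he.ne k
  · intro k
    have hwm : w ∈ Submodule.span ℚ (Set.range e') := e'i ▸ Submodule.subset_span ⟨i, rfl⟩
    have hwm' : w' ∈ Submodule.span ℚ (Set.range e') := e'j ▸ Submodule.subset_span ⟨j, rfl⟩
    rcases hcases k with rfl | rfl | ⟨h1, h2⟩
    · have : e k = s⁻¹ • ((c k * a) • w + c j • w') := by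
        rw [eq_inv_smul_iff₀ hq, hw, hw', hs]
        module
      rw [this]
      exact Submodule.smul_mem _ _ (Submodule.add_mem _ (Submodule.smul_mem _ _ hwm)
        (Submodule.smul_mem _ _ hwm'))
    · have : e k = s⁻¹ • ((c k * b) • w - c i • w') := by
        rw [eq_inv_smul_iff₀ hq, hw, hw', hs]
        module
      rw [this]
      exact Submodule.smul_mem _ _ (Submodule.sub_mem _ (Submodule.smul_mem _ _ hwm)
        (Submodule.smul_mem _ _ hwm'))
    · rw [← e'k k h1 h2]; exact Submodule.subset_span ⟨k, rfl⟩
  · rw [sum_pair _ hij, sum_pair (fun k => φ (B (e k) (e k))) hij, e'i, e'j, hww, hww']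
    congr 1
    · have h1 := hφ.add (a * c i ^ 2) (b * c j ^ 2) (by positivity) (by positivity)
        (by convert hq using 1; rw [hs]; ring)
      rw [hφ.sq _ _ ha0 hci, hφ.sq _ _ hb0 hcj] at h1
      rw [← ha, ← hb, h1]
      congr 1
      · congr 1; rw [hs]; ring
      · rw [← hφ.sq (a * b * s) (c i * c j) (mul_ne_zero (mul_ne_zero ha0 hb0) hq)
          (mul_ne_zero hci hcj)]
        congr 1
        rw [hs]; ring
    · apply Finset.sum_congr rfl
      intro k hk
      simp only [Finset.mem_erase, Finset.mem_univ, and_true] at hk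
      rw [e'k k hk.2 hk.1]
  · rw [sum_pair _ hij, sum_pair (fun k => c k • e k) hij, e'i, e'j]
    congr 1
    · simp [hij.symm, hw]
    · apply Finset.sum_congr rfl
      intro k hk
      simp only [Finset.mem_erase, Finset.mem_univ, and_true] at hk
      rw [e'k k hk.2 hk.1]; simp [hk.1, hk.2]
  · intro k
    rcases hcases k with rfl | rfl | ⟨h1, h2⟩
    · intro _; exact hci
    · intro _; exact hcj
    · simp [h1, h2]
  · simp [hij.symm]

theorem chain_move (hB : ∀ x y, B x y = B y x) {A : Type} [AddCommGroup A] {φ : ℚ → A}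
    (hφ : WSym φ) {n : ℕ} (s : ℕ) : ∀ (e : Fin n → V) (c : Fin n → ℚ), Orth B e →
    (Finset.univ.filter fun k => c k ≠ 0).card ≤ s →
    B (∑ k, c k • e k) (∑ k, c k • e k) ≠ 0 →
    ∃ e' : Fin n → V, Orth B e' ∧ (∀ k, e k ∈ Submodule.span ℚ (Set.range e')) ∧
      ∑ k, φ (B (e' k) (e' k)) = ∑ k, φ (B (e k) (e k)) ∧
      ∃ i, ∃ t : ℚ, t ≠ 0 ∧ ∑ k, c k • e k = t • e' i := by
  induction s with
  | zero =>
    intro e c he hc hv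
    exfalso
    apply hv
    have : ∀ k, c k = 0 := by simpa [Finset.filter_eq_empty_iff] using hc
    simp [this]
  | succ s ih =>
    intro e c he hc hv
    have key : ∀ i j, i ≠ j → c i ≠ 0 → c j ≠ 0 →
        c i ^ 2 * B (e i) (e i) + c j ^ 2 * B (e j) (e j) ≠ 0 →
      ∃ e' : Fin n → V, Orth B e' ∧ (∀ k, e k ∈ Submodule.span ℚ (Set.range e')) ∧
      ∑ k, φ (B (e' k) (e' k)) = ∑ k, φ (B (e k) (e k)) ∧
      ∃ i, ∃ t : ℚ, t ≠ 0 ∧ ∑ k, c k • e k = t • e' i := by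
      intro i j hij hi hj hq
      obtain ⟨e1, c1, h1, h2, h3, h4, h5, h6⟩ := chain_step hB hφ e he c hij hi hj hq
      obtain ⟨e2, g1, g2, g3, i2, t, ht, g4⟩ := ih e1 c1 h1 (by
        have : (Finset.univ.filter fun k => c1 k ≠ 0) ⊂ (Finset.univ.filter fun k => c k ≠ 0) := by
          rw [Finset.ssubset_iff_of_subset]
          · exact ⟨j, by simpa using hj, by simpa using h6⟩
          · intro k; simpa using h5 k
        have := Finset.card_lt_card this
        omega) (by rw [h4]; exact hv)
      refine ⟨e2, g1, fun k => ?_, g3.trans h3, i2, t, ht, h4 ▸ g4⟩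
      have : Submodule.span ℚ (Set.range e1) ≤ Submodule.span ℚ (Set.range e2) := by
        rw [Submodule.span_le]
        rintro _ ⟨k, rfl⟩
        exact g2 k
      exact this (h2 k)
    have hex : ∃ i, c i ≠ 0 := by
      by_contra hcon
      push Not at hcon
      apply hv
      simp [hcon]
    obtain ⟨i, hi⟩ := hex
    have hpos : ∀ i, c i ≠ 0 → c i ^ 2 * B (e i) (e i) ≠ 0 := fun i hi =>
      mul_ne_zero (pow_ne_zero _ hi) (he.ne i)
    by_cases hj : ∃ j, j ≠ i ∧ c j ≠ 0
    · obtain ⟨j, hji, hj⟩ := hj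
      by_cases h1 : c i ^ 2 * B (e i) (e i) + c j ^ 2 * B (e j) (e j) = 0
      · by_cases hk : ∃ k, k ≠ i ∧ k ≠ j ∧ c k ≠ 0
        · obtain ⟨k, hki, hkj, hk⟩ := hk
          by_cases h2 : c i ^ 2 * B (e i) (e i) + c k ^ 2 * B (e k) (e k) = 0
          · apply key j k hkj.symm hj hk
            intro h3
            apply hpos i hi
            linarith
          · exact key i k hki.symm hi hk h2
        · exfalso
          push Not at hk
          apply hv
          have : ∑ k, c k • e k = c i • e i + c j • e j := by
            rw [sum_pair _ hji.symm, Finset.sum_eq_zero, add_zero]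
            intro k hk'
            simp only [Finset.mem_erase, Finset.mem_univ, and_true] at hk'
            rw [hk k hk'.2 hk'.1, zero_smul]
          rw [this]
          simp only [map_add, map_smul, LinearMap.add_apply, LinearMap.smul_apply, smul_eq_mul,
            he.orth i j hji.symm, he.orth j i hji]
          linarith
      · exact key i j hji.symm hi hj h1
    · push Not at hj
      refine ⟨e, he, fun k => Submodule.subset_span ⟨k, rfl⟩, rfl, i, c i, hi, ?_⟩
      rw [Finset.sum_eq_single i]
      · intro k _ hk; rw [hj k hk, zero_smul]
      · simp

theorem chain (hB : ∀ x y, B x y = B y x) {A : Type} [AddCommGroup A] {φ : ℚ → A}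
    (hφ : WSym φ) {n : ℕ} : ∀ (e f : Fin n → V), Orth B e → Orth B f →
    (∀ k, f k ∈ Submodule.span ℚ (Set.range e)) →
    ∑ k, φ (B (e k) (e k)) = ∑ k, φ (B (f k) (f k)) := by
  induction n with
  | zero => intros; simp
  | succ n ih =>
    intro e f he hf hs
    obtain ⟨c, hc⟩ := (Submodule.mem_span_range_iff_exists_fun ℚ).mp (hs 0)
    obtain ⟨e1, h1, h2, h3, i, t, ht, h4⟩ := chain_move hB hφ _ e c he le_rfl
      (by rw [hc]; exact hf.ne 0)
    rw [hc] at h4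
    set e2 : Fin (n + 1) → V := e1 ∘ Equiv.swap 0 i with he2
    have e20 : e2 0 = e1 i := by simp [he2]
    have hO : Orth B e2 := ⟨fun k l hkl => h1.orth _ _ (by simpa using hkl), fun k => h1.ne _⟩
    have hsp : ∀ k, f k ∈ Submodule.span ℚ (Set.range e2) := by
      intro k
      have : Submodule.span ℚ (Set.range e) ≤ Submodule.span ℚ (Set.range e1) := by
        rw [Submodule.span_le]
        rintro _ ⟨k, rfl⟩
        exact h2 k
      have h := this (hs k)
      rwa [he2, EquivLike.range_comp]
    have hsum : ∑ k, φ (B (e2 k) (e2 k)) = ∑ k, φ (B (e k) (e k)) := by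
      rw [← h3]
      exact Equiv.sum_comp (Equiv.swap 0 i) (fun k => φ (B (e1 k) (e1 k)))
    rw [← hsum, Fin.sum_univ_succ, Fin.sum_univ_succ]
    congr 1
    · rw [h4, ← e20]
      simp only [map_smul, LinearMap.smul_apply, smul_eq_mul]
      rw [show t * (t * B (e2 0) (e2 0)) = B (e2 0) (e2 0) * t ^ 2 by ring, hφ.sq _ _ (hO.ne 0) ht]
    · refine ih (e2 ∘ Fin.succ) (f ∘ Fin.succ)
        ⟨fun k l hkl => hO.orth _ _ (by simpa using hkl), fun k => hO.ne _⟩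
        ⟨fun k l hkl => hf.orth _ _ (by simpa using hkl), fun k => hf.ne _⟩ ?_
      intro k
      obtain ⟨a, ha⟩ := (Submodule.mem_span_range_iff_exists_fun ℚ).mp (hsp k.succ)
      have h0 : B (e2 0) (f k.succ) = 0 := by
        have := hf.orth 0 k.succ (Fin.succ_ne_zero k).symm
        rw [h4, ← e20] at this
        simpa [ht] using this
      rw [← ha, map_sum, Finset.sum_eq_single 0 (by
        intro l _ hl
        rw [map_smul, hO.orth 0 l hl.symm, smul_zero]) (by simp), map_smul, smul_eq_mul,
        mul_eq_zero, or_iff_left (hO.ne 0)] at h0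
      rw [Fin.sum_univ_succ, h0, zero_smul, zero_add] at ha
      exact (Submodule.mem_span_range_iff_exists_fun ℚ).mpr ⟨fun l => a l.succ, ha⟩

end Chain

end James

open Matrix
namespace James

section LocDiag

/-- diagonalizable with diagonal prime to p -/
def DiagP {ι : Type} [Fintype ι] [DecidableEq ι] (p : ℕ) (G : Matrix ι ι ℤ) : Prop :=
  ∃ (P : Matrix ι ι ℤ) (d : ι → ℤ), Pᵀ * G * P = diagonal d ∧ ∀ i, ¬ (p : ℤ) ∣ d i

theorem DiagP.reindex {ι κ : Type} [Fintype ι] [DecidableEq ι] [Fintype κ] [DecidableEq κ]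
    {p : ℕ} {G : Matrix ι ι ℤ} (e : κ ≃ ι) (h : DiagP p (G.submatrix e e)) : DiagP p G := by
  obtain ⟨P, d, h1, h2⟩ := h
  refine ⟨P.submatrix e.symm e.symm, d ∘ e.symm, ?_, fun i => h2 _⟩
  have : (Pᵀ * G.submatrix e e * P).submatrix e.symm e.symm =
      (diagonal d).submatrix e.symm e.symm := by rw [h1]
  rw [← submatrix_mul_equiv _ _ e.symm e.symm, ← submatrix_mul_equiv _ _ e.symm e.symm,
    submatrix_diagonal_equiv] at this
  simpa using this

theorem DiagP.congr {ι : Type} [Fintype ι] [DecidableEq ι]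
    {p : ℕ} {G : Matrix ι ι ℤ} (U : Matrix ι ι ℤ) (h : DiagP p (Uᵀ * G * U)) : DiagP p G := by
  obtain ⟨P, d, h1, h2⟩ := h
  refine ⟨U * P, d, ?_, h2⟩
  rw [← h1, transpose_mul]
  simp only [Matrix.mul_assoc]

theorem block_calc {n : ℕ} (a : ℤ) (b : Matrix (Fin 1) (Fin n) ℤ) (C : Matrix (Fin n) (Fin n) ℤ) :
    (fromBlocks (1 : Matrix (Fin 1) (Fin 1) ℤ) (-b) 0 (a • (1 : Matrix (Fin n) (Fin n) ℤ)))ᵀ *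
      fromBlocks (a • (1 : Matrix (Fin 1) (Fin 1) ℤ)) b bᵀ C *
      fromBlocks (1 : Matrix (Fin 1) (Fin 1) ℤ) (-b) 0 (a • (1 : Matrix (Fin n) (Fin n) ℤ)) =
    fromBlocks (a • (1 : Matrix (Fin 1) (Fin 1) ℤ)) 0 0 (a • (a • C - bᵀ * b)) := by
  rw [fromBlocks_transpose, fromBlocks_multiply, fromBlocks_multiply]
  have h1 : -(a • b) + a • b = 0 := neg_add_cancel _
  have h2 : -(a • bᵀ) + a • bᵀ = 0 := neg_add_cancel _
  simp only [transpose_one, transpose_neg, transpose_zero, transpose_smul, Matrix.one_mul,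
    Matrix.mul_one, Matrix.zero_mul, Matrix.mul_zero, Matrix.smul_mul, Matrix.mul_smul,
    Matrix.neg_mul, Matrix.mul_neg, add_zero, zero_add, smul_neg, h1, h2]
  rw [smul_sub, smul_add, smul_neg]
  congr 1
  rw [neg_zero, zero_add]
  abel

theorem loc_diag (p : ℕ) (hp : p.Prime) (hp2 : p ≠ 2) : ∀ (n : ℕ) (G : Matrix (Fin n) (Fin n) ℤ),
    G.IsSymm → ¬ (p : ℤ) ∣ G.det → DiagP p G := by
  have hpi : Prime (p : ℤ) := Nat.prime_iff_prime_int.mp hp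
  intro n
  induction n with
  | zero => exact fun G _ _ => ⟨1, 0, by ext i; exact i.elim0, fun i => i.elim0⟩
  | succ n ih =>
    intro G hG hdet
    -- the case of a good corner
    have key : ∀ G : Matrix (Fin (n + 1)) (Fin (n + 1)) ℤ, G.IsSymm → ¬ (p : ℤ) ∣ G.det →
        ¬ (p : ℤ) ∣ G 0 0 → DiagP p G := by
      intro G hG hdet h00
      let e : Fin 1 ⊕ Fin n ≃ Fin (n + 1) := finSumFinEquiv.trans (finCongr (Nat.add_comm 1 n))
      apply DiagP.reindex e
      set a := G 0 0 with ha
      set H := G.submatrix e e with hH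
      have hHs : H.IsSymm := hG.submatrix e
      have hHd : H.det = G.det := det_submatrix_equiv_self e G
      have e0 : ∀ i : Fin 1, e (Sum.inl i) = 0 := by
        intro i
        ext
        simp [e]
      have hHb : H = fromBlocks (a • (1 : Matrix (Fin 1) (Fin 1) ℤ)) H.toBlocks₁₂ H.toBlocks₁₂ᵀ
          H.toBlocks₂₂ := by
        conv_lhs => rw [← fromBlocks_toBlocks H]
        congr 1
        · ext i j
          have : i = j := Subsingleton.elim _ _
          subst this
          simp [toBlocks₁₁, hH, e0, ha]
        · ext i j
          simp only [toBlocks₂₁, toBlocks₁₂, of_apply, transpose_apply]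
          exact hHs.apply _ _
      set b := H.toBlocks₁₂
      set C := H.toBlocks₂₂
      have hbc := block_calc a b C
      rw [← hHb] at hbc
      set P1 := fromBlocks (1 : Matrix (Fin 1) (Fin 1) ℤ) (-b) 0
        (a • (1 : Matrix (Fin n) (Fin n) ℤ)) with hP1
      set C1 := a • (a • C - bᵀ * b) with hC1
      have hP1d : P1.det = a ^ n := by
        rw [hP1, det_fromBlocks_zero₂₁, det_smul]; simp
      have hC1s : C1.IsSymm := by
        have hC : C.IsSymm := by
          ext i j
          exact hHs.apply _ _
        rw [hC1]
        unfold Matrix.IsSymm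
        rw [transpose_smul, transpose_sub, transpose_smul, hC.eq, transpose_mul,
          transpose_transpose]
      have hC1d : ¬ (p : ℤ) ∣ C1.det := by
        have h1 := congrArg det hbc
        rw [det_mul, det_mul, det_transpose, hP1d, det_fromBlocks_zero₂₁, hHd] at h1
        intro h2
        have h3 : (p : ℤ) ∣ a ^ n * G.det * a ^ n := h1 ▸ Dvd.dvd.mul_left h2 _
        rcases hpi.dvd_or_dvd h3 with h3 | h3
        · rcases hpi.dvd_or_dvd h3 with h3 | h3
          · exact h00 (hpi.dvd_of_dvd_pow h3)
          · exact hdet h3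
        · exact h00 (hpi.dvd_of_dvd_pow h3)
      obtain ⟨Q, d, hQ, hd⟩ := ih C1 hC1s hC1d
      apply DiagP.congr P1
      rw [hbc]
      refine ⟨fromBlocks 1 0 0 Q, Sum.elim (fun _ => a) d, ?_, ?_⟩
      · rw [fromBlocks_transpose, fromBlocks_multiply, fromBlocks_multiply]
        simp only [Matrix.transpose_zero, Matrix.transpose_one, Matrix.zero_mul, Matrix.mul_zero,
          add_zero, zero_add, Matrix.one_mul, Matrix.mul_one, hQ]
        rw [← fromBlocks_diagonal, smul_one_eq_diagonal]
      · rintro (i | i)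
        · exact h00
        · exact hd i
    by_cases h00 : (p : ℤ) ∣ G 0 0
    · have hj : ∃ j, ¬ (p : ℤ) ∣ G 0 j := by
        by_contra hcon
        push Not at hcon
        apply hdet
        rw [det_succ_row_zero]
        exact Finset.dvd_sum fun j _ => Dvd.dvd.mul_right (Dvd.dvd.mul_left (hcon j) _) _
      obtain ⟨j, hj⟩ := hj
      have hj0 : j ≠ 0 := by rintro rfl; exact hj h00
      have hs : ∃ s : ℤ, ¬ (p : ℤ) ∣ G 0 0 + 2 * s * G 0 j + s ^ 2 * G j j := by
        by_contra hcon
        push Not at hcon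
        have h1 := dvd_sub (hcon 1) (hcon (-1))
        have h2 : (p : ℤ) ∣ (2 * 2) * G 0 j := by
          rw [show (2 * 2) * G 0 j = (G 0 0 + 2 * 1 * G 0 j + 1 ^ 2 * G j j) -
            (G 0 0 + 2 * (-1) * G 0 j + (-1) ^ 2 * G j j) by ring]
          exact h1
        have hp2' : ¬ (p : ℤ) ∣ 2 := by
          intro h
          have : p ∣ 2 := by exact_mod_cast h
          exact hp2 ((Nat.prime_dvd_prime_iff_eq hp Nat.prime_two).mp this)
        rcases hpi.dvd_or_dvd h2 with h3 | h3
        · rcases hpi.dvd_or_dvd h3 with h3 | h3 <;> exact hp2' h3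
        · exact hj h3
      obtain ⟨s, hs⟩ := hs
      set U := transvection j 0 s with hU
      have hUd : U.det = 1 := det_transvection_of_ne _ _ hj0 _
      apply DiagP.congr U
      apply key
      · unfold Matrix.IsSymm
        rw [transpose_mul, transpose_mul, transpose_transpose, hG.eq, Matrix.mul_assoc]
      · rw [det_mul, det_mul, det_transpose, hUd, one_mul, mul_one]; exact hdet
      · have : (Uᵀ * G * U) 0 0 = G 0 0 + 2 * s * G 0 j + s ^ 2 * G j j := by
          have h1 : ∀ X : Matrix (Fin (n+1)) (Fin (n+1)) ℤ, ∀ i,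
              (X * U) i 0 = X i 0 + s * X i j := by
            intro X i
            rw [hU, transvection, Matrix.mul_add, Matrix.mul_one, Matrix.add_apply,
              mul_single_apply_same]
            ring
          have h2 : ∀ i, (Uᵀ * G) 0 i = G 0 i + s * G j i := by
            intro i
            have h3 : Uᵀ * G = (G * U)ᵀ := by rw [transpose_mul, hG.eq]
            rw [h3, transpose_apply, h1, hG.apply 0 i, hG.apply j i]
          rw [h1, h2, h2, hG.apply 0 j]
          ring
        rw [this]; exact hs
    · exact key G hG hdet h00

end LocDiag

end James

open Matrix
namespace James

section Uni

theorem diag_entry {n : ℕ} {R : Type} [CommRing R] {P G : Matrix (Fin n) (Fin n) R} {d : Fin n → R}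
    (h : Pᵀ * G * P = diagonal d) (i j : Fin n) :
    Pᵀ i ⬝ᵥ G *ᵥ (Pᵀ j) = if i = j then d i else 0 := by
  have h1 := congrFun (congrFun h i) j
  rw [diagonal_apply] at h1
  rw [← h1, Matrix.mul_assoc, Matrix.mul_apply, dotProduct]
  apply Finset.sum_congr rfl
  intro k _
  rw [Matrix.mul_apply]
  rfl

theorem sym_inv {A : Type} [AddCommGroup A] {φ : ℤ → A} (hφ : WSym φ) {n : ℕ}
    {G P P' : Matrix (Fin n) (Fin n) ℤ} (hG : G.IsSymm) {d d' : Fin n → ℤ}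
    (h : Pᵀ * G * P = diagonal d) (h' : P'ᵀ * G * P' = diagonal d')
    (hd : ∀ i, d i ≠ 0) (hd' : ∀ i, d' i ≠ 0) : ∑ i, φ (d i) = ∑ i, φ (d' i) := by
  let c : ℤ →+* ℚ := Int.castRingHom ℚ
  have tr : ∀ {P : Matrix (Fin n) (Fin n) ℤ} {d : Fin n → ℤ}, Pᵀ * G * P = diagonal d →
      (P.map c)ᵀ * G.map c * P.map c = diagonal (fun i => (d i : ℚ)) := by
    intro P d h
    have h1 := congrArg (fun X => X.map c) h
    simp only [Matrix.map_mul] at h1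
    rw [diagonal_map (map_zero c)] at h1
    exact h1
  have hGq : (G.map c).IsSymm := by
    ext i j
    simp only [transpose_apply, map_apply]
    rw [hG.apply]
  let B : (Fin n → ℚ) →ₗ[ℚ] (Fin n → ℚ) →ₗ[ℚ] ℚ := Matrix.toLinearMap₂' ℚ (G.map c)
  have hBa : ∀ x y, B x y = x ⬝ᵥ (G.map c) *ᵥ y := fun x y => Matrix.toLinearMap₂'_apply' _ _ _
  have hB : ∀ x y, B x y = B y x := by
    intro x y
    rw [hBa, hBa, dotProduct_mulVec, ← mulVec_transpose, hGq.eq, dotProduct_comm]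
  have hQ : ∀ {P : Matrix (Fin n) (Fin n) ℤ} {d : Fin n → ℤ}, Pᵀ * G * P = diagonal d →
      ∀ i j, B ((P.map c)ᵀ i) ((P.map c)ᵀ j) = if i = j then (d i : ℚ) else 0 := by
    intro P d h i j
    rw [hBa, diag_entry (tr h)]
  have hO : ∀ {P : Matrix (Fin n) (Fin n) ℤ} {d : Fin n → ℤ}, Pᵀ * G * P = diagonal d →
      (∀ i, d i ≠ 0) → Orth B (P.map c)ᵀ := by
    intro P d h hd
    refine ⟨fun i j hij => by rw [hQ h, if_neg hij], fun i => ?_⟩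
    rw [hQ h, if_pos rfl]
    exact_mod_cast hd i
  have hdet : IsUnit (P.map c).det := by
    have h1 := congrArg det (tr h)
    rw [det_mul, det_mul, det_diagonal] at h1
    rw [isUnit_iff_ne_zero]
    intro h0
    rw [h0, mul_zero] at h1
    have := Finset.prod_ne_zero_iff.mpr (fun i (_ : i ∈ Finset.univ) =>
      (by exact_mod_cast hd i : (d i : ℚ) ≠ 0))
    exact this h1.symm
  have hs : ∀ k, (P'.map c)ᵀ k ∈ Submodule.span ℚ (Set.range (P.map c)ᵀ) := by
    intro k
    refine (Submodule.mem_span_range_iff_exists_fun ℚ).mpr ⟨(P.map c)⁻¹ *ᵥ ((P'.map c)ᵀ k), ?_⟩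
    have h1 : (P.map c) *ᵥ ((P.map c)⁻¹ *ᵥ ((P'.map c)ᵀ k)) = (P'.map c)ᵀ k := by
      rw [mulVec_mulVec, mul_nonsing_inv _ hdet, one_mulVec]
    conv_rhs => rw [← h1, mulVec_eq_sum]
    simp
  have := chain hB (ratExt_sym hφ) _ _ (hO h hd) (hO h' hd') hs
  simp only [hQ h, hQ h', if_true] at this
  rw [Finset.sum_congr rfl fun i _ => ratExt_int hφ (hd i),
    Finset.sum_congr rfl fun i _ => ratExt_int hφ (hd' i)] at this
  exact this

theorem dec2 : ∀ z : ZMod 2, z ≠ 0 → z = 1 := by decide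

theorem res_two_mul (x y : ℤ) (hx : x ≠ 0) (hy : y ≠ 0) : res 2 (x * y) = res 2 x + res 2 y := by
  have : Fact (Nat.Prime 2) := ⟨Nat.prime_two⟩
  obtain ⟨e, u, hu, rfl⟩ := exists_form 2 x hx
  obtain ⟨f, v, hv, rfl⟩ := exists_form 2 y hy
  have huv : ¬ ((2 : ℕ) : ℤ) ∣ u * v := by
    intro h
    rcases (Nat.prime_iff_prime_int.mp Nat.prime_two).dvd_or_dvd h with h | h
    · exact hu h
    · exact hv h
  have cast1 : ∀ u : ℤ, ¬ ((2 : ℕ) : ℤ) ∣ u → (u : ZMod 2) = 1 := by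
    intro u hu
    have h1 : (u : ZMod 2) ≠ 0 := by
      intro h0; exact hu ((ZMod.intCast_zmod_eq_zero_iff_dvd u 2).mp h0)
    exact dec2 _ h1
  have h2 : (wc (1 : ZMod 2)) + wc (1 : ZMod 2) = 0 := by
    have := (wc_sym (ZMod 2)).neg 1 one_ne_zero
    exact this
  rw [show ((2 : ℕ) : ℤ) ^ e * u * (((2 : ℕ) : ℤ) ^ f * v) = ((2 : ℕ) : ℤ) ^ (e + f) * (u * v) by ring,
    res_eq 2 _ _ hu, res_eq 2 _ _ hv, res_eq 2 _ _ huv, cast1 u hu, cast1 v hv, cast1 _ huv]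
  by_cases h3 : Odd e <;> by_cases h4 : Odd f <;> simp [Nat.odd_add, h3, h4, ← Nat.not_odd_iff_even, h2]

theorem res_two_prod {n : ℕ} (d : Fin n → ℤ) (hd : ∀ i, d i ≠ 0) (s : Finset (Fin n)) :
    res 2 (∏ i ∈ s, d i) = ∑ i ∈ s, res 2 (d i) := by
  classical
  induction s using Finset.induction_on with
  | empty =>
    have : Fact (Nat.Prime 2) := ⟨Nat.prime_two⟩
    have := res_eq 2 0 1 (by norm_num)
    simpa using this
  | insert a s ha ih =>
    rw [Finset.prod_insert ha, Finset.sum_insert ha, res_two_mul _ _ (hd a)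
      (Finset.prod_ne_zero_iff.mpr fun i _ => hd i), ih]

theorem unimod_milnor {n : ℕ} (G : Matrix (Fin n) (Fin n) ℤ) (hG : G.IsSymm)
    (hu : IsUnit G.det) : ∃ (P : Matrix (Fin n) (Fin n) ℤ) (d : Fin n → ℤ),
      Pᵀ * G * P = diagonal d ∧ (∀ i, d i ≠ 0) ∧ ∃ k : ℤ, ∑ i, wc (d i) = k • wc (1 : ℤ) := by
  have hnd : ∀ p : ℕ, p.Prime → ¬ (p : ℤ) ∣ G.det := by
    intro p hp h
    exact (Nat.prime_iff_prime_int.mp hp).not_isUnit (isUnit_of_dvd_unit h hu)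
  have hne : ∀ (p : ℕ) (x : ℤ), ¬ (p : ℤ) ∣ x → x ≠ 0 := by
    rintro p x h rfl; simp at h
  obtain ⟨P, d, h1, h2⟩ := loc_diag 3 (by norm_num) (by norm_num) n G hG (hnd 3 (by norm_num))
  have hd : ∀ i, d i ≠ 0 := fun i => hne 3 _ (h2 i)
  refine ⟨P, d, h1, hd, milnor d hd ?_⟩
  intro p hp
  have : Fact p.Prime := ⟨hp⟩
  by_cases hp2 : p = 2
  · subst hp2
    have h3 := congrArg det h1
    rw [det_mul, det_mul, det_transpose, det_diagonal] at h3
    rw [← res_two_prod d hd, ← h3]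
    have hP0 : P.det ≠ 0 := by
      intro h0
      rw [h0, mul_zero] at h3
      exact (Finset.prod_ne_zero_iff.mpr fun i _ => hd i) h3.symm
    rw [show P.det * G.det * P.det = G.det * P.det ^ 2 by ring,
      (res_sym 2).sq _ _ hu.ne_zero hP0]
    have := res_eq 2 0 G.det (hnd 2 hp)
    simpa using this
  · obtain ⟨P', d', h1', h2'⟩ := loc_diag p hp hp2 n G hG (hnd p hp)
    rw [sym_inv (res_sym p) hG h1 h1' hd (fun i => hne p _ (h2' i))]
    apply Finset.sum_eq_zero
    intro i _
    have := res_eq p 0 (d' i) (h2' i)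
    simpa using this

end Uni

end James

open Matrix
namespace James

section NeutS

/-- the diagonal form given by `a` has a totally isotropic subspace of at least half dimension -/
def Neut {ι : Type} [Fintype ι] (a : ι → ℤ) : Prop :=
  ∃ (U : Type) (_ : AddCommGroup U) (_ : Module ℚ U) (_ : FiniteDimensional ℚ U)
    (T : U →ₗ[ℚ] (ι → ℚ)), Function.Injective T ∧
      (∀ x y, ∑ i, (a i : ℚ) * T x i * T y i = 0) ∧
      Fintype.card ι ≤ 2 * Module.finrank ℚ U

theorem Neut.equiv {ι κ : Type} [Fintype ι] [Fintype κ] {a : ι → ℤ} {b : κ → ℤ} (e : ι ≃ κ)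
    (h : ∀ i, b (e i) = a i) (ha : Neut a) : Neut b := by
  obtain ⟨U, i1, i2, i3, T, h1, h2, h3⟩ := ha
  refine ⟨U, i1, i2, i3, (LinearEquiv.funCongrLeft ℚ ℚ e.symm).toLinearMap ∘ₗ T, ?_, ?_, ?_⟩
  · exact (LinearEquiv.funCongrLeft ℚ ℚ e.symm).injective.comp h1
  · intro x y
    rw [← h2 x y, ← Equiv.sum_comp e]
    apply Finset.sum_congr rfl
    intro i _
    simp [LinearEquiv.funCongrLeft, LinearMap.funLeft, h]
  · rwa [← Fintype.card_congr e]

theorem Neut.sum {ι κ : Type} [Fintype ι] [Fintype κ] {a : ι → ℤ} {b : κ → ℤ}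
    (ha : Neut a) (hb : Neut b) : Neut (Sum.elim a b) := by
  obtain ⟨U, i1, i2, i3, T, h1, h2, h3⟩ := ha
  obtain ⟨U', j1, j2, j3, T', g1, g2, g3⟩ := hb
  refine ⟨U × U', inferInstance, inferInstance, inferInstance,
    (LinearEquiv.sumArrowLequivProdArrow ι κ ℚ ℚ).symm.toLinearMap ∘ₗ (T.prodMap T'), ?_, ?_, ?_⟩
  · refine (LinearEquiv.sumArrowLequivProdArrow ι κ ℚ ℚ).symm.injective.comp ?_
    exact h1.prodMap g1
  · intro x y
    rw [Fintype.sum_sum_type]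
    simp [h2, g2]
  · rw [Fintype.card_sum, Module.finrank_prod]
    omega

theorem Neut.neg {ι : Type} [Fintype ι] {a : ι → ℤ} (ha : Neut a) : Neut (fun i => -a i) := by
  obtain ⟨U, i1, i2, i3, T, h1, h2, h3⟩ := ha
  refine ⟨U, i1, i2, i3, T, h1, ?_, h3⟩
  intro x y
  rw [← neg_eq_zero, ← Finset.sum_neg_distrib, ← h2 x y]
  apply Finset.sum_congr rfl
  intro i _
  push_cast
  ring

theorem Neut.diag {ι : Type} [Fintype ι] (a : ι → ℤ) : Neut (Sum.elim a (fun i => -a i)) := by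
  refine ⟨ι → ℚ, inferInstance, inferInstance, inferInstance,
    (LinearEquiv.sumArrowLequivProdArrow ι ι ℚ ℚ).symm.toLinearMap ∘ₗ
      (LinearMap.id.prod LinearMap.id), ?_, ?_, ?_⟩
  · refine (LinearEquiv.sumArrowLequivProdArrow ι ι ℚ ℚ).symm.injective.comp ?_
    intro x y h
    exact congrArg Prod.fst h
  · intro x y
    rw [Fintype.sum_sum_type]
    simp
  · rw [Fintype.card_sum, Module.finrank_fintype_fun_eq_card]
    omega

theorem Neut.cancel {ι κ : Type} [Fintype ι] [Fintype κ] {c : ι → ℤ} {b : κ → ℤ}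
    (hb : ∀ i, b i ≠ 0) (h : Neut (Sum.elim c (Sum.elim b (fun i => -b i)))) : Neut c := by
  classical
  obtain ⟨U, i1, i2, i3, T, h1, h2, h3⟩ := h
  let t1 : U →ₗ[ℚ] (ι → ℚ) := LinearMap.funLeft ℚ ℚ Sum.inl ∘ₗ T
  let t2 : U →ₗ[ℚ] (κ → ℚ) := LinearMap.funLeft ℚ ℚ (Sum.inr ∘ Sum.inl) ∘ₗ T
  let t3 : U →ₗ[ℚ] (κ → ℚ) := LinearMap.funLeft ℚ ℚ (Sum.inr ∘ Sum.inr) ∘ₗ T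
  have h2' : ∀ x y, ∑ i, (c i : ℚ) * t1 x i * t1 y i +
      ∑ i, (b i : ℚ) * (t2 x i * t2 y i - t3 x i * t3 y i) = 0 := by
    intro x y
    have := h2 x y
    rw [Fintype.sum_sum_type, Fintype.sum_sum_type, ← Finset.sum_add_distrib] at this
    rw [← this]
    congr 1
    apply Finset.sum_congr rfl
    intro i _
    simp [t2, t3, LinearMap.funLeft]
    ring
  have h1' : ∀ x, t1 x = 0 → t2 x = 0 → t3 x = 0 → x = 0 := by
    intro x e1 e2 e3
    apply h1
    rw [map_zero]
    funext i
    rcases i with i | i | i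
    · exact congrFun e1 i
    · exact congrFun e2 i
    · exact congrFun e3 i
  let D := t2 - t3
  let U0 := LinearMap.ker D
  have hU0 : ∀ x ∈ U0, ∀ i, t3 x i = t2 x i := by
    intro x hx i
    have : t2 x - t3 x = 0 := hx
    have := congrFun this i
    simp only [Pi.sub_apply, Pi.zero_apply] at this
    linarith
  let s : U0 →ₗ[ℚ] (ι → ℚ) := t1.domRestrict U0
  let β : (κ → ℚ) →ₗ[ℚ] Module.Dual ℚ (κ → ℚ) :=
    ∑ i, (LinearMap.proj i : (κ → ℚ) →ₗ[ℚ] ℚ).smulRight ((b i : ℚ) • LinearMap.proj i)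
  have hβ : ∀ x y, β x y = ∑ i, (b i : ℚ) * x i * y i := by
    intro x y
    simp only [β, LinearMap.sum_apply, LinearMap.smulRight_apply, LinearMap.smul_apply,
      LinearMap.proj_apply, smul_eq_mul]
    exact Finset.sum_congr rfl fun i _ => by ring
  have hβi : ∀ x, β x = 0 → x = 0 := by
    intro x hx
    funext i
    have := hβ x (Pi.single i 1)
    rw [hx] at this
    simpa [Pi.single_apply, hb] using this
  let R := LinearMap.range D
  let K := LinearMap.ker s
  let ρ : K →ₗ[ℚ] Module.Dual ℚ (κ → ℚ) := β ∘ₗ t2 ∘ₗ U0.subtype ∘ₗ K.subtype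
  have hρ : ∀ x : K, ρ x ∈ R.dualAnnihilator := by
    intro x
    rw [Submodule.mem_dualAnnihilator]
    rintro _ ⟨u, rfl⟩
    have e1 : t1 (x : U0) = 0 := x.2
    have e2 := h2' (x : U0) u
    rw [e1] at e2
    change β (t2 (x : U0)) (t2 u - t3 u) = 0
    rw [hβ, ← e2]
    simp only [Pi.zero_apply, mul_zero, zero_mul, Finset.sum_const_zero, zero_add]
    apply Finset.sum_congr rfl
    intro i _
    rw [hU0 _ (x : U0).2 i, Pi.sub_apply]
    ring
  have hρi : Function.Injective (ρ.codRestrict R.dualAnnihilator hρ) := by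
    rw [← LinearMap.ker_eq_bot, LinearMap.ker_codRestrict, LinearMap.ker_eq_bot']
    intro x hx
    have e2 : t2 (x : U0) = 0 := hβi _ hx
    have e3 : t3 (x : U0) = 0 := by
      funext i
      rw [hU0 _ (x : U0).2 i, e2]
    have e1 : t1 (x : U0) = 0 := x.2
    exact Subtype.ext (Subtype.ext (h1' _ e1 e2 e3))
  have d1 := LinearMap.finrank_le_finrank_of_injective hρi
  have d2 := Subspace.finrank_add_finrank_dualAnnihilator_eq R
  have d3 := LinearMap.finrank_range_add_finrank_ker D
  have d4 := LinearMap.finrank_range_add_finrank_ker s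
  rw [Module.finrank_fintype_fun_eq_card] at d2
  rw [Fintype.card_sum, Fintype.card_sum] at h3
  refine ⟨LinearMap.range s, inferInstance, inferInstance, inferInstance,
    (LinearMap.range s).subtype, Subtype.val_injective, ?_, ?_⟩
  · rintro ⟨_, x, rfl⟩ ⟨_, y, rfl⟩
    have e := h2' x y
    rw [Finset.sum_eq_zero (f := fun i => (b i : ℚ) * (t2 x i * t2 y i - t3 x i * t3 y i)) (by
      intro i _
      rw [hU0 _ x.2 i, hU0 _ y.2 i]; ring), add_zero] at e
    exact e
  · change Fintype.card ι ≤ 2 * Module.finrank ℚ (LinearMap.range s)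
    have d3' : Module.finrank ℚ R + Module.finrank ℚ U0 = Module.finrank ℚ U := d3
    have d4' : Module.finrank ℚ (LinearMap.range s) + Module.finrank ℚ K = Module.finrank ℚ U0 := d4
    omega

theorem eqv_of_sum {ι κ : Type} [Fintype ι] [Fintype κ] (a : ι → ℤ) (b : κ → ℤ)
    (h : ∑ i, FreeAbelianGroup.of (a i) = ∑ j, FreeAbelianGroup.of (b j)) :
    ∃ e : ι ≃ κ, ∀ i, b (e i) = a i := by
  classical
  have hc : ∀ c : ℤ, Nonempty ({i // a i = c} ≃ {j // b j = c}) := by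
    intro c
    rw [← Fintype.card_eq]
    have := congrArg (FreeAbelianGroup.lift (fun z : ℤ => if z = c then (1 : ℤ) else 0)) h
    simp only [map_sum, FreeAbelianGroup.lift_apply_of, Finset.sum_boole] at this
    rw [Fintype.card_subtype, Fintype.card_subtype]
    exact_mod_cast this
  exact ⟨Equiv.ofFiberEquiv (fun c => (hc c).some), fun i => Equiv.ofFiberEquiv_map _ i⟩

/-- elements of the free group represented by neutral differences -/
def Good (x : FreeAbelianGroup ℤ) : Prop :=
  ∃ (ι κ : Type) (_ : Fintype ι) (_ : Fintype κ) (a : ι → ℤ) (b : κ → ℤ),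
    (∀ i, b i ≠ 0) ∧ (∀ i, a i ≠ 0) ∧
    x = ∑ i, FreeAbelianGroup.of (a i) - ∑ i, FreeAbelianGroup.of (b i) ∧
    Neut (Sum.elim a (fun i => -b i))

theorem Good.add {x y : FreeAbelianGroup ℤ} (hx : Good x) (hy : Good y) : Good (x + y) := by
  obtain ⟨ι, κ, _, _, a, b, hb, ha, rfl, hn⟩ := hx
  obtain ⟨ι', κ', _, _, a', b', hb', ha', rfl, hn'⟩ := hy
  refine ⟨ι ⊕ ι', κ ⊕ κ', inferInstance, inferInstance, Sum.elim a a', Sum.elim b b', ?_, ?_, ?_, ?_⟩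
  · rintro (i | i) <;> simp [hb, hb']
  · rintro (i | i) <;> simp [ha, ha']
  · simp only [Fintype.sum_sum_type, Sum.elim_inl, Sum.elim_inr]
    abel
  · refine (hn.sum hn').equiv (Equiv.sumSumSumComm _ _ _ _) ?_
    rintro ((i | i) | (i | i)) <;> simp

theorem Good.neg {x : FreeAbelianGroup ℤ} (hx : Good x) : Good (-x) := by
  obtain ⟨ι, κ, _, _, a, b, hb, ha, rfl, hn⟩ := hx
  refine ⟨κ, ι, inferInstance, inferInstance, b, a, ha, hb, by abel, ?_⟩
  refine hn.neg.equiv (Equiv.sumComm _ _) ?_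
  rintro (i | i) <;> simp

theorem neut_of_vecs {n r : ℕ} (a : Fin n → ℤ) (v : Fin r → Fin n → ℚ) (hn : n ≤ 2 * r)
    (hv : LinearIndependent ℚ v) (h : ∀ k l, ∑ i, (a i : ℚ) * v k i * v l i = 0) : Neut a := by
  refine ⟨Fin r → ℚ, inferInstance, inferInstance, inferInstance,
    Fintype.linearCombination ℚ v, ?_, ?_, ?_⟩
  · exact hv.fintypeLinearCombination_injective
  · intro x y
    simp only [Fintype.linearCombination_apply, Finset.sum_apply, Pi.smul_apply, smul_eq_mul]
    have : ∀ i, (a i : ℚ) * (∑ k, x k * v k i) * (∑ l, y l * v l i) =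
        ∑ k, ∑ l, x k * y l * ((a i : ℚ) * v k i * v l i) := by
      intro i
      rw [mul_assoc, Finset.sum_mul_sum, Finset.mul_sum]
      refine Finset.sum_congr rfl fun k _ => ?_
      rw [Finset.mul_sum]
      exact Finset.sum_congr rfl fun l _ => by ring
    rw [Finset.sum_congr rfl fun i _ => this i, Finset.sum_comm]
    apply Finset.sum_eq_zero
    intro k _
    rw [Finset.sum_comm]
    apply Finset.sum_eq_zero
    intro l _
    rw [← Finset.mul_sum, h, mul_zero]
  · simpa using hn

theorem good_of_rel (x : FreeAbelianGroup ℤ) (hx : x ∈ rels ℤ) : Good x := by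
  rcases hx with ⟨a, b, ha, hb, rfl⟩ | ⟨a, ha, rfl⟩ | ⟨a, b, ha, hb, hab, rfl⟩
  · refine ⟨Fin 1, Fin 1, inferInstance, inferInstance, ![a * b ^ 2], ![a], ?_, ?_, by simp, ?_⟩
    · simpa using ha
    · intro i; fin_cases i; simp [ha, hb]
    · have h1 : Neut ![a * b ^ 2, -a] := by
        apply neut_of_vecs _ ![![1, (b : ℚ)]] (by norm_num)
        · rw [linearIndependent_unique_iff]
          intro h
          have := congrFun h 0
          simp at this
        · intro k l
          simp [Fin.sum_univ_two]
          ring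
      refine h1.equiv (finSumFinEquiv (m := 1) (n := 1)).symm ?_
      intro i
      fin_cases i <;> rfl
  · refine ⟨Fin 2, Fin 0, inferInstance, inferInstance, ![a, -a], ![], ?_, ?_, by simp, ?_⟩
    · intro i; exact i.elim0
    · intro i; fin_cases i <;> simp [ha]
    · have h1 : Neut ![a, -a] := by
        apply neut_of_vecs _ ![![1, 1]] (by norm_num)
        · rw [linearIndependent_unique_iff]
          intro h
          have := congrFun h 0
          simp at this
        · intro k l
          simp [Fin.sum_univ_two]
      refine h1.equiv (finSumFinEquiv (m := 2) (n := 0)).symm ?_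
      intro i
      fin_cases i <;> rfl
  · refine ⟨Fin 2, Fin 2, inferInstance, inferInstance, ![a, b], ![a + b, a * b * (a + b)],
      ?_, ?_, by simp, ?_⟩
    · intro i; fin_cases i <;> simp [ha, hb, hab]
    · intro i; fin_cases i <;> simp [ha, hb]
    · have h1 : Neut ![a, b, -(a + b), -(a * b * (a + b))] := by
        apply neut_of_vecs _ ![![1, 1, 1, 0], ![(b : ℚ), -a, 0, 1]] (by norm_num)
        · rw [LinearIndependent.pair_iff]
          intro s t h
          have h2 := congrFun h 2
          have h3 := congrFun h 3
          simp at h2 h3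
          exact ⟨h2, h3⟩
        · intro k l
          fin_cases k <;> fin_cases l <;> simp [Fin.sum_univ_four] <;> ring
      refine h1.equiv (finSumFinEquiv (m := 2) (n := 2)).symm ?_
      intro i
      fin_cases i <;> rfl

theorem good_of_closure (x : FreeAbelianGroup ℤ) (hx : x ∈ AddSubgroup.closure (rels ℤ)) :
    Good x := by
  induction hx using AddSubgroup.closure_induction with
  | mem x hx => exact good_of_rel x hx
  | zero =>
    refine ⟨Fin 0, Fin 0, inferInstance, inferInstance, ![], ![], fun i => i.elim0,
      fun i => i.elim0, by simp, ?_⟩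
    refine (neut_of_vecs (n := 0) (r := 0) ![] ![] (by norm_num) linearIndependent_empty_type
      (fun k => k.elim0)).equiv (finSumFinEquiv (m := 0) (n := 0)).symm fun i => i.elim0
  | add x y _ _ hx hy => exact hx.add hy
  | neg x _ hx => exact hx.neg

theorem neut_of_wc {ι γ : Type} [Fintype ι] [Fintype γ] (d : ι → ℤ) (c : γ → ℤ)
    (h : ∑ i, wc (d i) = ∑ j, wc (c j)) : Neut (Sum.elim d (fun j => -c j)) := by
  have h1 : ∑ i, FreeAbelianGroup.of (d i) - ∑ j, FreeAbelianGroup.of (c j) ∈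
      AddSubgroup.closure (rels ℤ) := by
    rw [← QuotientAddGroup.eq_zero_iff]
    have h0 := sub_eq_zero.mpr h
    rw [← h0]
    have : ∀ {ι : Type} [Fintype ι] (d : ι → ℤ), ((∑ i, FreeAbelianGroup.of (d i) :
        FreeAbelianGroup ℤ) : WG ℤ) = ∑ i, wc (d i) := by
      intro ι _ d
      exact map_sum (QuotientAddGroup.mk' (AddSubgroup.closure (rels ℤ))) _ _
    rw [← this, ← this]
    rfl
  obtain ⟨α, β, _, _, a, b, hb, ha, hx, hn⟩ := good_of_closure _ h1
  obtain ⟨e, he⟩ := eqv_of_sum (Sum.elim a c) (Sum.elim d b) (by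
    simp only [Fintype.sum_sum_type, Sum.elim_inl, Sum.elim_inr]
    rw [sub_eq_sub_iff_add_eq_add] at hx
    rw [hx])
  have n1 := hn.sum (Neut.diag c)
  have n2 : Neut (Sum.elim (Sum.elim a c) (Sum.elim (fun i => - b i) (fun i => - c i))) := by
    refine n1.equiv (Equiv.sumSumSumComm _ _ _ _) ?_
    rintro ((i | i) | (i | i)) <;> simp
  have n3 : Neut (Sum.elim (Sum.elim d b) (Sum.elim (fun i => - c i) (fun i => - b i))) := by
    refine n2.equiv (Equiv.sumCongr e (Equiv.sumComm _ _)) ?_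
    rintro (i | (i | i))
    · simpa using he i
    · simp
    · simp
  have n4 : Neut (Sum.elim (Sum.elim d (fun i => - c i)) (Sum.elim b (fun i => - b i))) := by
    refine n3.equiv (Equiv.sumSumSumComm _ _ _ _) ?_
    rintro ((i | i) | (i | i)) <;> simp
  exact n4.cancel hb

end NeutS

end James

open Matrix
namespace James

section Sig

theorem iso_pos {n r : ℕ} (d : Fin n → ℤ) (hd : ∀ i, d i ≠ 0)
    (h : Neut (Sum.elim d (fun _ : Fin r => -1))) :
    ∃ (U : Type) (_ : AddCommGroup U) (_ : Module ℚ U) (_ : FiniteDimensional ℚ U)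
    (T : U →ₗ[ℚ] (Fin n → ℚ)), Function.Injective T ∧
      (∀ x y, ∑ i, (d i : ℚ) * T x i * T y i = 0) ∧
      Fintype.card {i // d i < 0} ≤ Module.finrank ℚ U := by
  classical
  obtain ⟨U, i1, i2, i3, T, h1, h2, h3⟩ := h
  let t1 : U →ₗ[ℚ] (Fin n → ℚ) := LinearMap.funLeft ℚ ℚ Sum.inl ∘ₗ T
  let t2 : U →ₗ[ℚ] (Fin r → ℚ) := LinearMap.funLeft ℚ ℚ Sum.inr ∘ₗ T
  have h1' : ∀ x, t1 x = 0 → t2 x = 0 → x = 0 := by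
    intro x e1 e2
    apply h1
    rw [map_zero]
    funext i
    rcases i with i | i
    · exact congrFun e1 i
    · exact congrFun e2 i
  have h2' : ∀ x y, ∑ i, (d i : ℚ) * t1 x i * t1 y i - ∑ i, t2 x i * t2 y i = 0 := by
    intro x y
    have := h2 x y
    rw [Fintype.sum_sum_type] at this
    rw [← this, sub_eq_add_neg, ← Finset.sum_neg_distrib]
    congr 1
    apply Finset.sum_congr rfl
    intro i _
    simp [t2, LinearMap.funLeft]
  let π : U →ₗ[ℚ] ({i // 0 < d i} → ℚ) := LinearMap.funLeft ℚ ℚ Subtype.val ∘ₗ t1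
  have hπ : Function.Injective π := by
    rw [← LinearMap.ker_eq_bot, LinearMap.ker_eq_bot']
    intro x hx
    have hx' : ∀ i, 0 < d i → t1 x i = 0 := fun i hi => congrFun hx ⟨i, hi⟩
    have e := h2' x x
    have a1 : ∀ i ∈ Finset.univ, (d i : ℚ) * t1 x i * t1 x i ≤ 0 := by
      intro i _
      rcases lt_or_gt_of_ne (hd i) with h | h
      · have : (d i : ℚ) < 0 := by exact_mod_cast h
        nlinarith [mul_self_nonneg (t1 x i)]
      · rw [hx' i h, mul_zero]
    have a2 : ∀ i ∈ Finset.univ, 0 ≤ t2 x i * t2 x i := fun i _ => mul_self_nonneg _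
    have s1 := Finset.sum_nonpos a1
    have s2 := Finset.sum_nonneg a2
    have z1 : ∑ i, (d i : ℚ) * t1 x i * t1 x i = 0 := by linarith
    have z2 : ∑ i, t2 x i * t2 x i = 0 := by linarith
    rw [Finset.sum_eq_zero_iff_of_nonpos a1] at z1
    rw [Finset.sum_eq_zero_iff_of_nonneg a2] at z2
    apply h1'
    · funext i
      have := z1 i (Finset.mem_univ i)
      simpa [hd i] using this
    · funext i
      have := z2 i (Finset.mem_univ i)
      simpa using this
  have d1 := LinearMap.finrank_le_finrank_of_injective hπ
  have d2 := LinearMap.finrank_range_add_finrank_ker t2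
  have d3 := Submodule.finrank_le (LinearMap.range t2)
  have d4 : Fintype.card {i // 0 < d i} + Fintype.card {i // d i < 0} = n := by
    rw [← Fintype.card_congr (Equiv.subtypeEquivRight (p := fun i => ¬ 0 < d i)
      (q := fun i => d i < 0) (fun i => by have := hd i; omega)),
      Fintype.card_subtype_compl, Fintype.card_fin]
    have := Fintype.card_subtype_le (fun i => 0 < d i)
    rw [Fintype.card_fin] at this
    omega
  rw [Module.finrank_fintype_fun_eq_card] at d1 d3
  rw [Fintype.card_fin] at d3
  rw [Fintype.card_sum, Fintype.card_fin, Fintype.card_fin] at h3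
  refine ⟨LinearMap.ker t2, inferInstance, inferInstance, inferInstance,
    t1 ∘ₗ (LinearMap.ker t2).subtype, ?_, ?_, by omega⟩
  · rw [← LinearMap.ker_eq_bot, LinearMap.ker_eq_bot']
    intro x hx
    exact Subtype.ext (h1' _ hx x.2)
  · intro x y
    have e := h2' x y
    have hx : t2 x = 0 := x.2
    rw [hx] at e
    simpa using e

theorem inertia {n : ℕ} (Q : Matrix (Fin n) (Fin n) ℝ) (d l : Fin n → ℝ)
    (h : Qᵀ * diagonal d * Q = diagonal l) :
    Fintype.card {i // 0 < l i} ≤ Fintype.card {i // 0 < d i} := by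
  classical
  let ex : ({i // 0 < l i} → ℝ) →ₗ[ℝ] (Fin n → ℝ) :=
    { toFun := fun c i => if h : 0 < l i then c ⟨i, h⟩ else 0
      map_add' := by intro x y; funext i; by_cases h : 0 < l i <;> simp [h]
      map_smul' := by intro x y; funext i; by_cases h : 0 < l i <;> simp [h] }
  let T : ({i // 0 < l i} → ℝ) →ₗ[ℝ] ({i // 0 < d i} → ℝ) :=
    LinearMap.funLeft ℝ ℝ Subtype.val ∘ₗ Q.mulVecLin ∘ₗ ex
  have hT : Function.Injective T := by
    rw [← LinearMap.ker_eq_bot, LinearMap.ker_eq_bot']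
    intro c hc
    have hc' : ∀ i, 0 < d i → (Q *ᵥ ex c) i = 0 := fun i hi => congrFun hc ⟨i, hi⟩
    have e : ∑ i, l i * (ex c i * ex c i) = ∑ i, d i * ((Q *ᵥ ex c) i * (Q *ᵥ ex c) i) := by
      have h1 : ex c ⬝ᵥ (Qᵀ * diagonal d * Q) *ᵥ ex c = ex c ⬝ᵥ (diagonal l) *ᵥ ex c := by rw [h]
      rw [← mulVec_mulVec, ← mulVec_mulVec, dotProduct_mulVec, vecMul_transpose] at h1
      simp only [dotProduct, mulVec_diagonal] at h1
      rw [Finset.sum_congr rfl fun i _ => (by ring : l i * (ex c i * ex c i) =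
        ex c i * (l i * ex c i)), ← h1]
      exact Finset.sum_congr rfl fun i _ => by ring
    have a1 : ∀ i ∈ Finset.univ, 0 ≤ l i * (ex c i * ex c i) := by
      intro i _
      by_cases h : 0 < l i
      · exact mul_nonneg h.le (mul_self_nonneg _)
      · simp [ex, h]
    have a2 : ∑ i, d i * ((Q *ᵥ ex c) i * (Q *ᵥ ex c) i) ≤ 0 := by
      apply Finset.sum_nonpos
      intro i _
      by_cases h : 0 < d i
      · simp [hc' i h]
      · exact mul_nonpos_of_nonpos_of_nonneg (not_lt.mp h) (mul_self_nonneg _)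
    have z := le_antisymm (e ▸ a2) (Finset.sum_nonneg a1)
    rw [Finset.sum_eq_zero_iff_of_nonneg a1] at z
    funext ⟨i, hi⟩
    have := z i (Finset.mem_univ i)
    simpa [ex, hi, hi.ne'] using this
  have := LinearMap.finrank_le_finrank_of_injective hT
  rwa [Module.finrank_fintype_fun_eq_card, Module.finrank_fintype_fun_eq_card] at this

theorem real_herm {n : ℕ} {G : Matrix (Fin n) (Fin n) ℤ} (hG : G.IsSymm) :
    (G.map ((↑·) : ℤ → ℝ)).IsHermitian := by
  ext i j
  simp only [conjTranspose_apply, map_apply, star_trivial]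
  rw [hG.apply]

theorem spec {n : ℕ} {A : Matrix (Fin n) (Fin n) ℝ} (h : A.IsHermitian) :
    ∃ Q : Matrix (Fin n) (Fin n) ℝ, Qᵀ * A * Q = diagonal h.eigenvalues := by
  refine ⟨h.eigenvectorUnitary, ?_⟩
  have h1 := h.conjStarAlgAut_star_eigenvectorUnitary
  have h3 : star (h.eigenvectorUnitary : Matrix (Fin n) (Fin n) ℝ) =
      (h.eigenvectorUnitary : Matrix (Fin n) (Fin n) ℝ)ᵀ := by
    rw [star_eq_conjTranspose, conjTranspose_eq_transpose_of_trivial]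
  rw [← h3]
  rw [Unitary.conjStarAlgAut_apply] at h1
  simpa using h1

theorem sig_le {n : ℕ} {G P : Matrix (Fin n) (Fin n) ℤ} {d : Fin n → ℤ} (hG : G.IsSymm)
    (h : Pᵀ * G * P = diagonal d) (hd : ∀ i, d i ≠ 0) :
    sigPlus G ≤ Fintype.card {i // 0 < d i} ∧ sigMinus G ≤ Fintype.card {i // d i < 0} := by
  classical
  let c : ℤ →+* ℝ := Int.castRingHom ℝ
  have h1 : (P.map c)ᵀ * G.map c * P.map c = diagonal (fun i => (d i : ℝ)) := by
    have h1 := congrArg (fun X => X.map c) h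
    simp only [Matrix.map_mul] at h1
    rw [diagonal_map (map_zero c)] at h1
    exact h1
  have hdet : IsUnit (P.map c).det := by
    have h1 := congrArg det h1
    rw [det_mul, det_mul, det_diagonal] at h1
    rw [isUnit_iff_ne_zero]
    intro h0
    rw [h0, mul_zero] at h1
    have := Finset.prod_ne_zero_iff.mpr (fun i (_ : i ∈ Finset.univ) =>
      (by exact_mod_cast hd i : (d i : ℝ) ≠ 0))
    exact this h1.symm
  have hH := real_herm hG
  obtain ⟨Q, hQ⟩ := spec hH
  change Qᵀ * G.map c * Q = _ at hQ
  have key : ((P.map c)⁻¹ * Q)ᵀ * diagonal (fun i => (d i : ℝ)) * ((P.map c)⁻¹ * Q) =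
      diagonal hH.eigenvalues := by
    rw [← hQ, ← h1, transpose_mul, transpose_nonsing_inv]
    have hdet' : IsUnit (P.map c)ᵀ.det := by rwa [det_transpose]
    calc Qᵀ * ((P.map c)ᵀ)⁻¹ * ((P.map c)ᵀ * G.map c * P.map c) * ((P.map c)⁻¹ * Q)
        = Qᵀ * (((P.map c)ᵀ)⁻¹ * (P.map c)ᵀ) * G.map c * (P.map c * (P.map c)⁻¹) * Q := by
          simp only [Matrix.mul_assoc]
      _ = Qᵀ * G.map c * Q := by
          rw [nonsing_inv_mul _ hdet', mul_nonsing_inv _ hdet, Matrix.mul_one, Matrix.mul_one]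
  constructor
  · rw [sigPlus, dif_pos hH, Nat.card_eq_fintype_card]
    refine (inertia _ _ _ key).trans (le_of_eq ?_)
    exact Fintype.card_congr (Equiv.subtypeEquivRight fun i => by simp)
  · rw [sigMinus, dif_pos hH, Nat.card_eq_fintype_card]
    have key' : ((P.map c)⁻¹ * Q)ᵀ * diagonal (fun i => -(d i : ℝ)) * ((P.map c)⁻¹ * Q) =
        diagonal (fun i => - hH.eigenvalues i) := by
      have e1 := diagonal_neg (fun i => (d i : ℝ))
      have e2 := diagonal_neg hH.eigenvalues
      rw [← e1, ← e2, Matrix.mul_neg, Matrix.neg_mul, key]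
    have := inertia _ _ _ key'
    rw [Fintype.card_congr (Equiv.subtypeEquivRight (p := fun i => hH.eigenvalues i < 0)
      (q := fun i => 0 < - hH.eigenvalues i) fun i => by simp)]
    refine this.trans (le_of_eq ?_)
    exact Fintype.card_congr (Equiv.subtypeEquivRight fun i => by simp)

theorem sig_sum {m : ℕ} {M : Matrix (Fin m) (Fin m) ℤ} (hM : M.IsSymm) (hdet : M.det ≠ 0) :
    sigPlus M + sigMinus M = m := by
  classical
  have hH := real_herm hM
  have hne : ∀ i, hH.eigenvalues i ≠ 0 := by
    have h1 := hH.det_eq_prod_eigenvalues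
    have h2 : (M.map ((↑·) : ℤ → ℝ)).det = (M.det : ℝ) := ((Int.castRingHom ℝ).map_det M).symm
    rw [h2] at h1
    intro i h0
    apply hdet
    have h3 : (M.det : ℝ) = 0 := by
      rw [h1]
      exact Finset.prod_eq_zero (Finset.mem_univ i) (by simp [h0])
    exact_mod_cast h3
  rw [sigPlus, dif_pos hH, sigMinus, dif_pos hH, Nat.card_eq_fintype_card,
    Nat.card_eq_fintype_card]
  rw [← Fintype.card_congr (Equiv.subtypeEquivRight (p := fun i => ¬ 0 < hH.eigenvalues i)
      (q := fun i => hH.eigenvalues i < 0) (fun i => by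
        rw [not_lt]; exact ⟨fun h => lt_of_le_of_ne h (hne i), le_of_lt⟩)),
      Fintype.card_subtype_compl, Fintype.card_fin]
  have := Fintype.card_subtype_le (fun i => 0 < hH.eigenvalues i)
  rw [Fintype.card_fin] at this
  omega

theorem iso_exists {n : ℕ} (G : Matrix (Fin n) (Fin n) ℤ) (hG : G.IsSymm) (hu : IsUnit G.det) :
    ∃ (U : Type) (_ : AddCommGroup U) (_ : Module ℚ U) (_ : FiniteDimensional ℚ U)
    (T : U →ₗ[ℚ] (Fin n → ℚ)), Function.Injective T ∧
      (∀ x y, T x ⬝ᵥ (G.map (Int.castRingHom ℚ)) *ᵥ T y = 0) ∧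
      min (sigPlus G) (sigMinus G) ≤ Module.finrank ℚ U := by
  obtain ⟨P, d, h, hd, k, hk⟩ := unimod_milnor G hG hu
  obtain ⟨s1, s2⟩ := sig_le hG h hd
  have key : ∃ (U : Type) (_ : AddCommGroup U) (_ : Module ℚ U) (_ : FiniteDimensional ℚ U)
    (T : U →ₗ[ℚ] (Fin n → ℚ)), Function.Injective T ∧
      (∀ x y, ∑ i, (d i : ℚ) * T x i * T y i = 0) ∧
      min (sigPlus G) (sigMinus G) ≤ Module.finrank ℚ U := by
    obtain ⟨r, rfl | rfl⟩ := Int.eq_nat_or_neg k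
    · have hn : Neut (Sum.elim d (fun _ : Fin r => -1)) := by
        apply neut_of_wc d (fun _ : Fin r => 1)
        rw [hk]; simp
      obtain ⟨U, i1, i2, i3, T, t1, t2, t3⟩ := iso_pos d hd hn
      exact ⟨U, i1, i2, i3, T, t1, t2, (min_le_right _ _).trans (s2.trans t3)⟩
    · have hn : Neut (Sum.elim d (fun _ : Fin r => -(-1))) := by
        apply neut_of_wc d (fun _ : Fin r => -1)
        rw [hk]
        have := neg_eq_of_add_eq_zero_right ((wc_sym ℤ).neg 1 one_ne_zero)
        rw [neg_zsmul, ← zsmul_neg, this]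
        simp
      have hn' : Neut (Sum.elim (fun i => - d i) (fun _ : Fin r => -1)) := by
        refine hn.neg.equiv (Equiv.refl _) ?_
        rintro (i | i) <;> simp
      obtain ⟨U, i1, i2, i3, T, t1, t2, t3⟩ := iso_pos _ (fun i => neg_ne_zero.mpr (hd i)) hn'
      refine ⟨U, i1, i2, i3, T, t1, ?_, (min_le_left _ _).trans (s1.trans ?_)⟩
      · intro x y
        have := t2 x y
        rw [← neg_eq_zero, ← Finset.sum_neg_distrib, ← this]
        exact Finset.sum_congr rfl fun i _ => by push_cast; ring
      · refine le_trans (le_of_eq ?_) t3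
        exact Fintype.card_congr (Equiv.subtypeEquivRight fun i => by simp)
  obtain ⟨U, i1, i2, i3, T, t1, t2, t3⟩ := key
  let c : ℤ →+* ℚ := Int.castRingHom ℚ
  have h1 : (P.map c)ᵀ * G.map c * P.map c = diagonal (fun i => (d i : ℚ)) := by
    have h1 := congrArg (fun X => X.map c) h
    simp only [Matrix.map_mul] at h1
    rw [diagonal_map (map_zero c)] at h1
    exact h1
  have hdet : IsUnit (P.map c).det := by
    have h1 := congrArg det h1
    rw [det_mul, det_mul, det_diagonal] at h1
    rw [isUnit_iff_ne_zero]
    intro h0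
    rw [h0, mul_zero] at h1
    have := Finset.prod_ne_zero_iff.mpr (fun i (_ : i ∈ Finset.univ) =>
      (by exact_mod_cast hd i : (d i : ℚ) ≠ 0))
    exact this h1.symm
  refine ⟨U, i1, i2, i3, (P.map c).mulVecLin ∘ₗ T, ?_, ?_, t3⟩
  · exact (mulVec_injective_of_isUnit ((isUnit_iff_isUnit_det _).mpr hdet)).comp t1
  · intro x y
    rw [← t2 x y]
    have e : T x ⬝ᵥ ((P.map c)ᵀ * G.map c * P.map c) *ᵥ T y =
        T x ⬝ᵥ (diagonal (fun i => (d i : ℚ))) *ᵥ T y := by rw [h1]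
    rw [← mulVec_mulVec, ← mulVec_mulVec, dotProduct_mulVec, vecMul_transpose] at e
    change (P.map c) *ᵥ T x ⬝ᵥ (G.map c) *ᵥ ((P.map c) *ᵥ T y) = _
    rw [e]
    simp only [dotProduct, mulVec_diagonal]
    exact Finset.sum_congr rfl fun i _ => by ring

end Sig
end James

open Matrix
namespace James

/-- the bilinear form of a Gram matrix -/
noncomputable def form {n : ℕ} (G : Matrix (Fin n) (Fin n) ℤ) :
    (Fin n → ℤ) →ₗ[ℤ] (Fin n → ℤ) →ₗ[ℤ] ℤ := Matrix.toLinearMap₂' ℤ G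

theorem form_apply {n : ℕ} (G : Matrix (Fin n) (Fin n) ℤ) (v w : Fin n → ℤ) :
    form G v w = v ⬝ᵥ G *ᵥ w := Matrix.toLinearMap₂'_apply' _ _ _

theorem form_even {n : ℕ} {G : Matrix (Fin n) (Fin n) ℤ} (hG : G.IsSymm)
    (he : ∀ i, 2 ∣ G i i) : EvenSymm (form G) where
  symm := by
    intro x y
    rw [form_apply, form_apply, dotProduct_mulVec, ← mulVec_transpose, hG.eq, dotProduct_comm]
  even := by
    intro x
    have key : ∀ s : Finset (Fin n), (2:ℤ) ∣ ∑ i ∈ s, ∑ j ∈ s, x i * (G i j * x j) := by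
      intro s
      induction s using Finset.induction_on with
      | empty => simp
      | insert a s ha ih =>
        rw [Finset.sum_insert ha, Finset.sum_insert ha]
        simp_rw [Finset.sum_insert ha]
        rw [Finset.sum_add_distrib]
        have h1 : ∑ i ∈ s, x i * (G i a * x a) = ∑ i ∈ s, x a * (G a i * x i) := by
          refine Finset.sum_congr rfl fun i _ => ?_
          rw [hG.apply a i]; ring
        rw [h1]
        obtain ⟨c, hc⟩ := he a
        obtain ⟨d, hd⟩ := ih
        rw [hd, hc]
        exact ⟨x a * (c * x a) + (∑ i ∈ s, x a * (G a i * x i)) + d, by ring⟩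
    rw [form_apply]
    have := key Finset.univ
    simpa [dotProduct, mulVec, Finset.mul_sum] using this

theorem retract {n r : ℕ} (T : (Fin r → ℤ) →ₗ[ℤ] (Fin n → ℤ)) (hT : Function.Injective T)
    (hs : ∀ (v : Fin n → ℤ) (k : ℤ), k ≠ 0 → k • v ∈ LinearMap.range T → v ∈ LinearMap.range T) :
    ∃ L : (Fin n → ℤ) →ₗ[ℤ] (Fin r → ℤ), ∀ x, L (T x) = x := by
  have htf : Module.IsTorsionFree ℤ ((Fin n → ℤ) ⧸ LinearMap.range T) := by
    refine Module.isTorsionFree_iff_smul_eq_zero.2 ?_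
    intro k v
    obtain ⟨v, rfl⟩ := Submodule.mkQ_surjective _ v
    by_cases hk : k = 0
    · intro _; left; exact hk
    · intro hv; right
      rw [← map_smul] at hv
      simp only [Submodule.mkQ_apply, Submodule.Quotient.mk_eq_zero] at hv ⊢
      exact hs v k hk hv
  obtain ⟨s, hs'⟩ := LinearMap.exists_rightInverse_of_surjective (LinearMap.range T).mkQ
    (Submodule.range_mkQ _)
  let ρ : (Fin n → ℤ) →ₗ[ℤ] LinearMap.range T :=
    LinearMap.codRestrict _ (LinearMap.id - s ∘ₗ (LinearMap.range T).mkQ) (by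
      intro v
      rw [← Submodule.Quotient.mk_eq_zero, ← Submodule.mkQ_apply]
      have := LinearMap.congr_fun hs' ((LinearMap.range T).mkQ v)
      simp only [LinearMap.comp_apply, LinearMap.id_apply] at this
      simp only [LinearMap.sub_apply, LinearMap.id_apply, LinearMap.comp_apply, map_sub, this,
        sub_self])
  refine ⟨(LinearEquiv.ofInjective T hT).symm.toLinearMap ∘ₗ ρ, fun x => ?_⟩
  simp only [LinearMap.comp_apply, LinearEquiv.coe_coe]
  rw [LinearEquiv.symm_apply_eq]
  apply Subtype.ext
  have : (LinearMap.range T).mkQ (T x) = 0 := by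
    simp
  simp only [ρ, LinearMap.codRestrict_apply, LinearMap.sub_apply, LinearMap.id_apply,
    LinearMap.comp_apply, this, map_zero, sub_zero, LinearEquiv.ofInjective_apply]

theorem dual_vecs {n r : ℕ} {G : Matrix (Fin n) (Fin n) ℤ} (hu : IsUnit G.det)
    (T : (Fin r → ℤ) →ₗ[ℤ] (Fin n → ℤ)) (hT : Function.Injective T)
    (hs : ∀ (v : Fin n → ℤ) (k : ℤ), k ≠ 0 → k • v ∈ LinearMap.range T → v ∈ LinearMap.range T) :
    ∃ z : Fin r → (Fin n → ℤ), ∀ x j, form G (T x) (z j) = x j := by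
  obtain ⟨L, hL⟩ := retract T hT hs
  refine ⟨fun j => G⁻¹ *ᵥ (LinearMap.toMatrix' L j), fun x j => ?_⟩
  rw [form_apply, mulVec_mulVec, mul_nonsing_inv _ hu, one_mulVec, dotProduct_comm]
  have : (LinearMap.toMatrix' L *ᵥ (T x)) j = x j := by
    rw [LinearMap.toMatrix'_mulVec, hL]
  exact this

theorem iso_lattice {n : ℕ} {G : Matrix (Fin n) (Fin n) ℤ} (hG : G.IsSymm) (hu : IsUnit G.det) :
    ∃ (r : ℕ) (T : (Fin r → ℤ) →ₗ[ℤ] (Fin n → ℤ)), Function.Injective T ∧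
      (∀ (v : Fin n → ℤ) (k : ℤ), k ≠ 0 → k • v ∈ LinearMap.range T → v ∈ LinearMap.range T) ∧
      (∀ x y, form G (T x) (T y) = 0) ∧ min (sigPlus G) (sigMinus G) ≤ r := by
  obtain ⟨U, _, _, _, A, hA, hiso, hr⟩ := iso_exists G hG hu
  let c : (Fin n → ℤ) →ₗ[ℤ] (Fin n → ℚ) :=
    { toFun := fun v i => (v i : ℚ)
      map_add' := by intro v w; ext i; simp
      map_smul' := by intro k w; ext i; simp }
  let N : Submodule ℤ (Fin n → ℤ) := ((LinearMap.range A).restrictScalars ℤ).comap c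
  have hN : ∀ v, v ∈ N ↔ ∃ u, A u = c v := by
    intro v; rfl
  let b := Module.finBasis ℤ N
  let T : (Fin (Module.finrank ℤ N) → ℤ) →ₗ[ℤ] (Fin n → ℤ) :=
    N.subtype ∘ₗ b.equivFun.symm.toLinearMap
  have hTN : ∀ x, T x ∈ N := fun x => (b.equivFun.symm x).2
  have hrange : ∀ v, v ∈ LinearMap.range T ↔ v ∈ N := by
    intro v
    constructor
    · rintro ⟨x, rfl⟩; exact hTN x
    · intro hv; exact ⟨b.equivFun ⟨v, hv⟩, by simp [T]⟩
  refine ⟨Module.finrank ℤ N, T, ?_, ?_, ?_, ?_⟩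
  · exact (Subtype.val_injective).comp b.equivFun.symm.injective
  · intro v k hk hv
    rw [hrange, hN] at hv ⊢
    obtain ⟨u, hu⟩ := hv
    refine ⟨(k:ℚ)⁻¹ • u, ?_⟩
    rw [map_smul, hu]
    ext i
    have : (k:ℚ) ≠ 0 := by exact_mod_cast hk
    simp [c, this]
  · intro x y
    obtain ⟨u, hu⟩ := (hN _).1 (hTN x)
    obtain ⟨w, hw⟩ := (hN _).1 (hTN y)
    have := hiso u w
    rw [hu, hw] at this
    rw [form_apply]
    have h2 : ((T x ⬝ᵥ G *ᵥ T y : ℤ) : ℚ) = 0 := by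
      rw [← this]
      simp [dotProduct, mulVec, c]
    exact_mod_cast h2
  · refine hr.trans ?_
    let β := Module.finBasis ℚ U
    obtain ⟨d, hd⟩ := IsLocalization.exist_integer_multiples_of_finite (nonZeroDivisors ℤ)
      (fun p : Fin (Module.finrank ℚ U) × Fin n => A (β p.1) p.2)
    choose w hw using hd
    have hd0 : ((d:ℤ):ℚ) ≠ 0 := by exact_mod_cast nonZeroDivisors.ne_zero d.2
    have hw' : ∀ i j, ((w (i, j) : ℤ) : ℚ) = (d:ℤ) * A (β i) j := by
      intro i j
      have := hw (i, j)
      simpa using this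
    let ww : Fin (Module.finrank ℚ U) → N := fun i => ⟨fun j => w (i, j), by
      rw [hN]; refine ⟨((d:ℤ):ℚ) • β i, ?_⟩
      ext j; simp [c, hw']⟩
    have hli : LinearIndependent ℤ ww := by
      rw [Fintype.linearIndependent_iff]
      intro g hg i
      have h1 : ∑ i, (g i : ℚ) • β i = 0 := by
        apply hA
        rw [map_zero, map_sum]
        ext j
        have h2 := congrArg (fun v : N => ((v.1 j : ℤ) : ℚ)) hg
        simp [ww, hw'] at h2
        simp only [map_smul, Finset.sum_apply, Pi.smul_apply, smul_eq_mul, Pi.zero_apply]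
        have h3 : ((d:ℤ):ℚ) * ∑ c, (g c : ℚ) * A (β c) j = 0 := by
          rw [← h2, Finset.mul_sum]
          refine Finset.sum_congr rfl fun i _ => by ring
        exact (mul_eq_zero.1 h3).resolve_left hd0
      have h4 := Fintype.linearIndependent_iff.1 β.linearIndependent _ h1 i
      exact_mod_cast h4
    simpa using hli.fintype_card_le_finrank

theorem hyp_exists {n m : ℕ} {G : Matrix (Fin n) (Fin n) ℤ} (hG : G.IsSymm)
    (he : ∀ i, 2 ∣ G i i) (hu : IsUnit G.det) (hm : m + 1 ≤ min (sigPlus G) (sigMinus G)) :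
    ∃ e f : ℕ → (Fin n → ℤ), HypSys (form G) m e f := by
  obtain ⟨r, T, hT, hs, hiso, hr⟩ := iso_lattice hG hu
  obtain ⟨z, hz⟩ := dual_vecs hu T hT hs
  have hE := form_even hG he
  have hlt : ∀ i, i ≤ m → i < r := fun i hi => by omega
  let e : ℕ → (Fin n → ℤ) := fun i => if h : i < r then T (Pi.single ⟨i, h⟩ 1) else 0
  let y : ℕ → (Fin n → ℤ) := fun i => if h : i < r then z ⟨i, h⟩ else 0
  have hee : ∀ i ≤ m, ∀ j ≤ m, form G (e i) (e j) = 0 := by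
    intro i hi j hj
    simp only [e, hlt i hi, hlt j hj, dif_pos, hiso]
  have hey : ∀ i ≤ m, ∀ j ≤ m, form G (e i) (y j) = if i = j then 1 else 0 := by
    intro i hi j hj
    simp only [e, y, hlt i hi, hlt j hj, dif_pos, hz, Pi.single_apply, Fin.mk.injEq]
    simp [eq_comm]
  let c : ℕ → ℕ → ℤ := fun i j => if j < i then form G (y i) (y j) else
    if i = j then hn (form G) (y i) else 0
  let f : ℕ → (Fin n → ℤ) := fun i => y i - ∑ k ∈ Finset.range (m+1), c i k • e k
  have hef : ∀ i ≤ m, ∀ j ≤ m, form G (e i) (f j) = if i = j then 1 else 0 := by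
    intro i hi j hj
    simp only [f, map_sub, hey i hi j hj, map_sum, map_smul]
    rw [Finset.sum_eq_zero, sub_zero]
    intro k hk
    rw [hee i hi k (by simpa [Nat.lt_succ_iff] using hk), smul_zero]
  have hye : ∀ i ≤ m, ∀ j ≤ m, form G (y i) (e j) = if i = j then 1 else 0 := by
    intro i hi j hj
    rw [hE.symm, hey j hj i hi]; simp [eq_comm]
  refine ⟨e, f, hee, ?_, hef⟩
  intro i hi j hj
  have h1 : form G (f i) (f j) = form G (y i) (f j) - c i j := by
    simp only [f, map_sub, LinearMap.sub_apply, map_sum, LinearMap.sum_apply, map_smul,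
      LinearMap.smul_apply]
    have a1 : ∀ k ∈ Finset.range (m+1), c i k • form G (e k) (y j) = if k = j then c i k else 0 := by
      intro k hk
      rw [hey k (by simpa [Nat.lt_succ_iff] using hk) j hj]; simp
    rw [Finset.sum_congr rfl a1]
    have a2 : ∀ k ∈ Finset.range (m+1), (∑ l ∈ Finset.range (m+1), c i l • form G (e l) (e k)) = 0 := by
      intro k hk
      refine Finset.sum_eq_zero fun l hl => ?_
      rw [hee l (by simpa [Nat.lt_succ_iff] using hl) k (by simpa [Nat.lt_succ_iff] using hk),
        smul_zero]
    have a3 : ∑ k ∈ Finset.range (m+1), c j k • (form G (y i) (e k) -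
        ∑ l ∈ Finset.range (m+1), c i l • form G (e l) (e k)) =
        ∑ k ∈ Finset.range (m+1), c j k • form G (y i) (e k) :=
      Finset.sum_congr rfl fun k hk => by rw [a2 k hk, sub_zero]
    rw [a3, Finset.sum_ite_eq' (Finset.range (m+1)) j, if_pos (by simpa [Nat.lt_succ_iff] using hj)]
    ring
  have h2 : form G (y i) (f j) = form G (y i) (y j) - c j i := by
    simp only [f, map_sub, map_sum, map_smul]
    have a1 : ∀ k ∈ Finset.range (m+1), c j k • form G (y i) (e k) = if i = k then c j k else 0 := by
      intro k hk
      rw [hye i hi k (by simpa [Nat.lt_succ_iff] using hk)]; simp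
    rw [Finset.sum_congr rfl a1, Finset.sum_ite_eq (Finset.range (m+1)) i,
      if_pos (by simpa [Nat.lt_succ_iff] using hi)]
  rw [h1, h2]
  rcases lt_trichotomy i j with hij | hij | hij
  · simp [c, hij, hij.ne, hij.le, hE.symm (y j) (y i), not_lt.2 hij.le]
  · subst hij
    simp [c, hE.two_hn (y i)]; ring
  · simp [c, hij, hij.ne, not_lt.2 hij.le]

end James

open Matrix
namespace James

theorem mulVec_eq_sum' {n m : ℕ} (T : Matrix (Fin n) (Fin m) ℤ) (x : Fin m → ℤ) :
    T *ᵥ x = ∑ i, x i • T.col i := by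
  ext k
  simp [mulVec, dotProduct, mul_comm]

theorem gram_ext {m n : ℕ} {M : Matrix (Fin m) (Fin m) ℤ} {G : Matrix (Fin n) (Fin n) ℤ}
    {T : Matrix (Fin n) (Fin m) ℤ} (h : ∀ i j, form G (T.col i) (T.col j) = M i j)
    (x y : Fin m → ℤ) : T *ᵥ x ⬝ᵥ G *ᵥ (T *ᵥ y) = x ⬝ᵥ M *ᵥ y := by
  rw [← form_apply, mulVec_eq_sum', mulVec_eq_sum']
  simp only [map_sum, map_smul, LinearMap.sum_apply, LinearMap.smul_apply, h, smul_eq_mul,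
    dotProduct, mulVec]
  simp only [Finset.mul_sum]
  rw [Finset.sum_comm]
  refine Finset.sum_congr rfl fun i _ => Finset.sum_congr rfl fun j _ => by ring

/-- entries of a matrix extended by zero -/
def ext0 {m : ℕ} (M : Matrix (Fin m) (Fin m) ℤ) (i j : ℕ) : ℤ :=
  if h : i < m ∧ j < m then M ⟨i, h.1⟩ ⟨j, h.2⟩ else 0

theorem ext0_fin {m : ℕ} (M : Matrix (Fin m) (Fin m) ℤ) (i j : Fin m) :
    ext0 M i j = M i j := by
  simp [ext0]

theorem exists_emb {n m : ℕ} {M : Matrix (Fin m) (Fin m) ℤ} (hM : M.IsSymm)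
    (hMe : ∀ i, 2 ∣ M i i) {G : Matrix (Fin n) (Fin n) ℤ} (hE : EvenSymm (form G))
    {e f : ℕ → (Fin n → ℤ)} (H : HypSys (form G) m e f) :
    ∃ T : Matrix (Fin n) (Fin m) ℤ, IsPrimitiveLatticeEmbedding M G T := by
  let s : ℕ → (Fin n → ℤ) := std e f (ext0 M) (fun i => ext0 M i i / 2)
  let T : Matrix (Fin n) (Fin m) ℤ := Matrix.of fun k i => s i k
  have hcol : ∀ i, T.col i = s i := fun i => rfl
  have hlt : ∀ i j : Fin m, j < i → form G (s i) (s j) = M i j := by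
    intro i j hij
    rw [← ext0_fin M i j]
    exact std_std_lt hE H _ _ i.2.le hij
  have hdual : ∀ x (j : Fin m), form G (T *ᵥ x) (f j) = x j := by
    intro x j
    rw [mulVec_eq_sum']
    simp only [map_sum, map_smul, LinearMap.sum_apply, LinearMap.smul_apply, hcol]
    have : ∀ i : Fin m, form G (s i) (f j) = if i = j then 1 else 0 := by
      intro i
      have := std_f hE H (ext0 M) (fun i => ext0 M i i / 2) i.2.le j.2.le
      simp only [Fin.val_inj] at this
      exact this
    simp [this]
  refine ⟨T, ⟨?_, gram_ext ?_⟩, ?_⟩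
  · intro x y hxy
    ext j
    rw [← hdual x j, ← hdual y j]
    exact congrArg (fun v => form G v (f j)) hxy
  · intro i j
    rw [hcol, hcol]
    rcases lt_trichotomy i j with hij | hij | hij
    · rw [hE.symm, hlt j i hij, hM.apply]
    · subst hij
      have := std_std_eq hE H (ext0 M) (fun i => ext0 M i i / 2) i.2.le
      have h2 := hMe i
      rw [ext0_fin] at this
      refine Eq.trans this ?_
      omega
    · exact hlt i j hij
  · rintro v k hk ⟨x, hx⟩
    have hx' : ∀ j : Fin m, x j = k * form G v (f j) := by
      intro j
      rw [← hdual x j, show T *ᵥ x = k • v from hx, map_smul, LinearMap.smul_apply, smul_eq_mul]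
    refine ⟨fun j => form G v (f j), ?_⟩
    have h3 : x = k • (fun j : Fin m => form G v (f j)) := by
      ext j; simp [hx']
    rw [h3, show T.mulVec (k • (fun j : Fin m => form G v (f j))) =
      k • T.mulVec (fun j : Fin m => form G v (f j)) from mulVec_smul _ _ _] at hx
    exact smul_right_injective _ hk hx

theorem move {n m : ℕ} {M : Matrix (Fin m) (Fin m) ℤ}
    (hMe : ∀ i, 2 ∣ M i i) {G : Matrix (Fin n) (Fin n) ℤ} (hu : IsUnit G.det)
    (hE : EvenSymm (form G))
    {e f : ℕ → (Fin n → ℤ)} (H : HypSys (form G) m e f)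
    {T : Matrix (Fin n) (Fin m) ℤ} (hT : IsPrimitiveLatticeEmbedding M G T) :
    ∃ g : (Fin n → ℤ) ≃ₗ[ℤ] (Fin n → ℤ), Isom (form G) g ∧
      ∀ i : Fin m, g (T.col i) = std e f (ext0 M) (fun i => ext0 M i i / 2) i := by
  obtain ⟨⟨hinj, hform⟩, hprim⟩ := hT
  obtain ⟨z, hz⟩ := dual_vecs (r := m) hu T.mulVecLin hinj (by
    rintro v k hk ⟨x, hx⟩
    obtain ⟨y, hy⟩ := hprim v k hk ⟨x, hx⟩
    exact ⟨y, hy⟩)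
  have hc : ∀ i, T *ᵥ (Pi.single i 1) = T.col i := fun i => mulVec_single_one T i
  let v : ℕ → (Fin n → ℤ) := fun i => if h : i < m then T.col ⟨i, h⟩ else 0
  let y : ℕ → (Fin n → ℤ) := fun i => if h : i < m then z ⟨i, h⟩ else 0
  have h1 : ∀ i < m, ∀ j < m, form G (v i) (y j) = if i = j then 1 else 0 := by
    intro i hi j hj
    simp only [v, y, hi, hj, dif_pos]
    rw [← hc]
    have := hz (Pi.single ⟨i, hi⟩ 1) ⟨j, hj⟩
    rw [mulVecLin_apply] at this
    rw [this]
    simp [Pi.single_apply, eq_comm]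
  have h2 : ∀ i < m, ∀ j < m, form G (v i) (v j) = ext0 M i j := by
    intro i hi j hj
    simp only [v, hi, hj, dif_pos, ext0, and_self]
    rw [← hc, ← hc, form_apply]
    rw [hform]
    simp
  have h3 : ∀ i < m, ext0 M i i = 2 * (ext0 M i i / 2) := by
    intro i hi
    have := hMe ⟨i, hi⟩
    rw [← ext0_fin M] at this
    simp only at this
    omega
  obtain ⟨g, hg, hg'⟩ := to_std hE H (M := ext0 M) (q := fun i => ext0 M i i / 2) m le_rfl v y h1 h2 h3
  refine ⟨g, hg, fun i => ?_⟩
  rw [← hg' i i.2]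
  simp [v]

end James

/-- James' theorem: if `t₊ + t₋ ≤ min{l₊, l₋} − 1` then a primitive embedding of the
even nondegenerate lattice `M` into the even unimodular lattice `L` exists, and any two
primitive embeddings differ by composition with an automorphism of `L`. -/
theorem james_embedding {m n : ℕ} (tp tm lp lm : ℕ)
    (M : Matrix (Fin m) (Fin m) ℤ) (G : Matrix (Fin n) (Fin n) ℤ)
    (hMsymm : M.IsSymm) (hMeven : ∀ i, 2 ∣ M i i) (hMnd : M.det ≠ 0)
    (hMsp : sigPlus M = tp) (hMsm : sigMinus M = tm)
    (hGsymm : G.IsSymm) (hGeven : ∀ i, 2 ∣ G i i) (hGuni : IsUnit G.det)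
    (hGsp : sigPlus G = lp) (hGsm : sigMinus G = lm)
    (h : tp + tm + 1 ≤ min lp lm) :
    (∃ T : Matrix (Fin n) (Fin m) ℤ, IsPrimitiveLatticeEmbedding M G T) ∧
      ∀ T T' : Matrix (Fin n) (Fin m) ℤ,
        IsPrimitiveLatticeEmbedding M G T → IsPrimitiveLatticeEmbedding M G T' →
          ∃ S : Matrix (Fin n) (Fin n) ℤ, IsLatticeAut G S ∧ S * T = T' := by
  subst hMsp hMsm hGsp hGsm
  rw [James.sig_sum hMsymm hMnd] at h
  obtain ⟨e, f, H⟩ := James.hyp_exists hGsymm hGeven hGuni h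
  have hE := James.form_even hGsymm hGeven
  refine ⟨James.exists_emb hMsymm hMeven hE H, fun T T' hT hT' => ?_⟩
  obtain ⟨g, hg, hgT⟩ := James.move hMeven hGuni hE H hT
  obtain ⟨g', hg', hgT'⟩ := James.move hMeven hGuni hE H hT'
  have hS : ∀ x, LinearMap.toMatrix' (g.trans g'.symm).toLinearMap *ᵥ x = g'.symm (g x) := by
    intro x
    rw [LinearMap.toMatrix'_mulVec]; rfl
  refine ⟨LinearMap.toMatrix' (g.trans g'.symm).toLinearMap, ⟨?_, ?_⟩, ?_⟩
  · rw [LinearMap.det_toMatrix']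
    exact LinearEquiv.isUnit_det' _
  · have key : ∀ x y, x ⬝ᵥ ((LinearMap.toMatrix' (g.trans g'.symm).toLinearMap)ᵀ * G *
        LinearMap.toMatrix' (g.trans g'.symm).toLinearMap) *ᵥ y = x ⬝ᵥ G *ᵥ y := by
      intro x y
      rw [← mulVec_mulVec, ← mulVec_mulVec, dotProduct_mulVec, vecMul_transpose, hS, hS,
        ← James.form_apply, ← James.form_apply, ← hg', g'.apply_symm_apply, g'.apply_symm_apply, hg]
    ext i j
    have := key (Pi.single i 1) (Pi.single j 1)
    simpa using this
  · refine Matrix.ext_col fun i => ?_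
    rw [← mulVec_single_one, ← mulVec_mulVec, mulVec_single_one, hS, hgT, ← hgT',
      g'.symm_apply_apply]
end

section
/- Let G be the Gram matrix of Γ^{3,19}. For every nonzero even integer ν and every positive integer d such that 2d² divides ν, there exists a vector v ∈ ℤ²² with vᵀGv = ν whose coordinates have greatest common divisor d; moreover, any two vectors v, w ∈ ℤ²² with vᵀGv = wᵀGw = ν and with the same coordinate gcd d are related by an automorphism of Γ^{3,19}, i.e. there is S ∈ GL(22,ℤ) with SᵀGS = G and Sv = w. Thus equivalence classes of vectors in Γ^{3,19} under automorphisms are uniquely identified by their norm and divisor. -/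
open Matrix

/-- The hyperbolic plane `U`, the rank-2 even unimodular lattice of signature (1,1). -/
def matU : Matrix (Fin 2) (Fin 2) ℤ := !![0, 1; 1, 0]

/-- The negative of the `E8` Cartan matrix: the Gram matrix of `E8(−1)`. -/
def matE8neg : Matrix (Fin 8) (Fin 8) ℤ :=
  -(!![2, 0, -1, 0, 0, 0, 0, 0;
       0, 2, 0, -1, 0, 0, 0, 0;
       -1, 0, 2, -1, 0, 0, 0, 0;
       0, -1, -1, 2, -1, 0, 0, 0;
       0, 0, 0, -1, 2, -1, 0, 0;
       0, 0, 0, 0, -1, 2, -1, 0;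
       0, 0, 0, 0, 0, -1, 2, -1;
       0, 0, 0, 0, 0, 0, -1, 2])

/-- Block-diagonal (orthogonal) sum of two integer Gram matrices. -/
def blockSum {a b : ℕ} (A : Matrix (Fin a) (Fin a) ℤ) (B : Matrix (Fin b) (Fin b) ℤ) :
    Matrix (Fin (a + b)) (Fin (a + b)) ℤ :=
  Matrix.reindex finSumFinEquiv finSumFinEquiv (Matrix.fromBlocks A 0 0 B)

/-- The Gram matrix of `Γ^{3,19} = U ⊕ U ⊕ U ⊕ E8(−1) ⊕ E8(−1)`. -/
def GammaGram : Matrix (Fin 22) (Fin 22) ℤ :=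
  blockSum matU (blockSum matU (blockSum matU (blockSum matE8neg matE8neg)))

section Abstract

variable {V : Type*} [AddCommGroup V]

/-- `w` is the image of `v` under a linear isometry of `B`. -/
def Rch (B : V →ₗ[ℤ] V →ₗ[ℤ] ℤ) (v w : V) : Prop :=
  ∃ S : V →ₗ[ℤ] V, (∀ x y, B (S x) (S y) = B x y) ∧ S v = w

theorem Rch.refl (B : V →ₗ[ℤ] V →ₗ[ℤ] ℤ) (v : V) : Rch B v v :=
  ⟨LinearMap.id, fun _ _ => rfl, rfl⟩

theorem Rch.trans {B : V →ₗ[ℤ] V →ₗ[ℤ] ℤ} {u v w : V} (h : Rch B u v) (h' : Rch B v w) :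
    Rch B u w := by
  obtain ⟨S, hS, rfl⟩ := h
  obtain ⟨T, hT, rfl⟩ := h'
  exact ⟨T ∘ₗ S, fun x y => by simp [hS, hT], rfl⟩

theorem Rch.neg (B : V →ₗ[ℤ] V →ₗ[ℤ] ℤ) (v : V) : Rch B v (-v) :=
  ⟨-LinearMap.id, fun _ _ => by simp, rfl⟩

/-- Eichler transvection. -/
theorem Rch.eichler {B : V →ₗ[ℤ] V →ₗ[ℤ] ℤ} (hs : ∀ x y, B x y = B y x)
    {q : V → ℤ} (hq : ∀ x, B x x = 2 * q x) {e u : V} (he : B e e = 0) (hu : B e u = 0) (v : V) :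
    Rch B v (v - B u v • e + B e v • u - (q u * B e v) • e) := by
  have hu' : B u e = 0 := by rw [hs, hu]
  refine ⟨LinearMap.id - (B u).smulRight e + (B e).smulRight u - (q u • B e).smulRight e,
    fun x y => ?_, by simp⟩
  simp only [LinearMap.add_apply, LinearMap.sub_apply, LinearMap.id_apply,
    LinearMap.smulRight_apply, LinearMap.smul_apply, map_add, map_sub, map_smul, smul_eq_mul,
    he, hu, hu', hq u, hs x e, hs x u]
  ring

/-- Exchange of two orthogonal hyperbolic planes. -/
theorem Rch.swap {B : V →ₗ[ℤ] V →ₗ[ℤ] ℤ} (hs : ∀ x y, B x y = B y x)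
    {e1 f1 e2 f2 : V} (h11 : B e1 e1 = 0) (h12 : B f1 f1 = 0) (h13 : B e1 f1 = 1)
    (h21 : B e2 e2 = 0) (h22 : B f2 f2 = 0) (h23 : B e2 f2 = 1)
    (ho1 : B e1 e2 = 0) (ho2 : B e1 f2 = 0) (ho3 : B f1 e2 = 0) (ho4 : B f1 f2 = 0) (v : V) :
    Rch B v (v + B (f1 - f2) v • (e2 - e1) + B (e1 - e2) v • (f2 - f1)) := by
  have k1 : B f1 e1 = 1 := by rw [hs, h13]
  have k2 : B f2 e2 = 1 := by rw [hs, h23]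
  have k3 : B e2 e1 = 0 := by rw [hs, ho1]
  have k4 : B f2 e1 = 0 := by rw [hs, ho2]
  have k5 : B e2 f1 = 0 := by rw [hs, ho3]
  have k6 : B f2 f1 = 0 := by rw [hs, ho4]
  refine ⟨LinearMap.id + (B (f1 - f2)).smulRight (e2 - e1) + (B (e1 - e2)).smulRight (f2 - f1),
    fun x y => ?_, by simp⟩
  simp only [LinearMap.add_apply, LinearMap.sub_apply, LinearMap.id_apply,
    LinearMap.smulRight_apply, LinearMap.smul_apply, map_add, map_sub, map_smul, smul_eq_mul,
    h11, h12, h13, h21, h22, h23, ho1, ho2, ho3, ho4, k1, k2, k3, k4, k5, k6,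
    hs x e1, hs x e2, hs x f1, hs x f2]
  ring

/-- Minimality forces divisibility. -/
theorem min_dvd {B : V →ₗ[ℤ] V →ₗ[ℤ] ℤ} (hs : ∀ x y, B x y = B y x)
    {q : V → ℤ} (hq : ∀ x, B x x = 2 * q x)
    {e1 f1 e2 f2 : V} (h11 : B e1 e1 = 0) (h12 : B f1 f1 = 0) (h13 : B e1 f1 = 1)
    (h21 : B e2 e2 = 0) (h22 : B f2 f2 = 0) (h23 : B e2 f2 = 1)
    (ho1 : B e1 e2 = 0) (ho2 : B e1 f2 = 0) (ho3 : B f1 e2 = 0) (ho4 : B f1 f2 = 0)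
    {v : V} {a : ℤ} (hmin : ∀ w, Rch B v w → (|B f1 w| < |a| ∨ a = 0) → B f1 w = 0)
    {w : V} (hw : Rch B v w) (ha : B f1 w = a) : a ∣ B f2 w := by
  have k1 : B f1 e1 = 1 := by rw [hs, h13]
  have k2 : B f2 e2 = 1 := by rw [hs, h23]
  have k6 : B f2 f1 = 0 := by rw [hs, ho4]
  have r1 := Rch.eichler hs hq (e := f1) (u := (-(B f2 w / a)) • e2) h12 (by simp [ho3]) w
  have r2 := Rch.swap hs h11 h12 h13 h21 h22 h23 ho1 ho2 ho3 ho4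
    (w - B ((-(B f2 w / a)) • e2) w • f1 + B f1 w • (-(B f2 w / a)) • e2 -
      (q ((-(B f2 w / a)) • e2) * B f1 w) • f1)
  have h := hmin _ (hw.trans (r1.trans r2))
  simp only [LinearMap.sub_apply,
    LinearMap.smul_apply, map_add, map_sub, map_smul, smul_eq_mul,
    h12, ho3, ho4, k1, k2, k6, ha] at h
  have e : ∀ X Y Z : ℤ, a - X * 0 + a * (-(B f2 w / a) * 0) - Y * 0 +
      (a - B f2 w - X * (0 - 0) + a * (-(B f2 w / a) * (0 - 1)) - Y * (0 - 0)) * (0 - 1) +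
      Z * (0 - 0) = B f2 w % a := by
    intro X Y Z
    rw [Int.emod_def]; ring
  rw [e] at h
  apply Int.dvd_of_emod_eq_zero
  apply h
  by_cases h0 : a = 0
  · exact Or.inr h0
  · left
    rw [abs_of_nonneg (Int.emod_nonneg _ h0)]
    exact Int.emod_lt_abs _ h0

/-- Eichler's criterion for primitive vectors. -/
theorem eichler_main {B : V →ₗ[ℤ] V →ₗ[ℤ] ℤ} (hs : ∀ x y, B x y = B y x)
    {q : V → ℤ} (hq : ∀ x, B x x = 2 * q x)
    {e1 f1 e2 f2 : V} (h11 : B e1 e1 = 0) (h12 : B f1 f1 = 0) (h13 : B e1 f1 = 1)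
    (h21 : B e2 e2 = 0) (h22 : B f2 f2 = 0) (h23 : B e2 f2 = 1)
    (ho1 : B e1 e2 = 0) (ho2 : B e1 f2 = 0) (ho3 : B f1 e2 = 0) (ho4 : B f1 f2 = 0)
    {v : V} (hv : ∀ k : ℤ, (∀ x, k ∣ B x v) → IsUnit k) : Rch B v (e1 + q v • f1) := by
  have k1 : B f1 e1 = 1 := by rw [hs, h13]
  have k2 : B f2 e2 = 1 := by rw [hs, h23]
  have k3 : B e2 e1 = 0 := by rw [hs, ho1]
  have k4 : B f2 e1 = 0 := by rw [hs, ho2]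
  have k5 : B e2 f1 = 0 := by rw [hs, ho3]
  have k6 : B f2 f1 = 0 := by rw [hs, ho4]
  -- a minimal value
  obtain ⟨a, w, hw, ha, hmin⟩ : ∃ a w, Rch B v w ∧ B f1 w = a ∧
      ∀ w, Rch B v w → (|B f1 w| < |a| ∨ a = 0) → B f1 w = 0 := by
    by_cases hall : ∀ w, Rch B v w → B f1 w = 0
    · exact ⟨0, v, Rch.refl B v, hall v (Rch.refl B v), fun w hw _ => hall w hw⟩
    · push Not at hall
      have hex : ∃ n : ℕ, ∃ w, Rch B v w ∧ B f1 w ≠ 0 ∧ (B f1 w).natAbs = n := by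
        obtain ⟨w, hw, h⟩ := hall
        exact ⟨_, w, hw, h, rfl⟩
      classical
      obtain ⟨w, hw, h0, hn⟩ := Nat.find_spec hex
      refine ⟨_, w, hw, rfl, fun w' hw' h => ?_⟩
      by_contra hne
      have := Nat.find_min' hex ⟨w', hw', hne, rfl⟩
      rcases h with h | h
      · rw [← hn] at this
        have := Int.abs_eq_natAbs (B f1 w)
        have := Int.abs_eq_natAbs (B f1 w')
        omega
      · exact h0 h
  -- it is a unit
  have hd : a ∣ B e2 w := min_dvd hs hq h11 h12 h13 h22 h21 k2 ho2 ho1 ho4 ho3 hmin hw ha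
  obtain ⟨k, hk⟩ := hd
  have r1 := Rch.eichler hs hq (e := f1) (u := (-k) • f2) h12 (by simp [ho4]) w
  obtain ⟨w2, hw2⟩ : ∃ w2, w2 = w - B ((-k) • f2) w • f1 + B f1 w • (-k) • f2 -
      (q ((-k) • f2) * B f1 w) • f1 := ⟨_, rfl⟩
  rw [← hw2] at r1
  have ha2 : B f1 w2 = a := by
    rw [hw2]
    simp [h12, ho4, ha]
  have hd2 : B e2 w2 = 0 := by
    rw [hw2]
    simp [k5, h23, ha, hk]
  have hR2 := hw.trans r1
  have hc2 : a ∣ B f2 w2 := min_dvd hs hq h11 h12 h13 h21 h22 h23 ho1 ho2 ho3 ho4 hmin hR2 ha2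
  have key : ∀ u, B e2 u = 0 → a ∣ B u w2 := by
    intro u hu
    have r3 := Rch.eichler hs hq h21 hu w2
    have := min_dvd hs hq h11 h12 h13 h21 h22 h23 ho1 ho2 ho3 ho4 hmin (hR2.trans r3)
      (by simp [ha2, ho3, hd2])
    simp only [map_add, map_sub, map_smul, smul_eq_mul, hd2, k2] at this
    have h2 := dvd_sub hc2 this
    ring_nf at h2
    exact h2
  have hunit : IsUnit a := by
    apply hv
    intro x
    obtain ⟨S, hS, hSv⟩ := hR2
    rw [← hS, hSv]
    have := key (S x - B e2 (S x) • f2) (by simp [h23])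
    simp only [map_sub, map_smul, LinearMap.sub_apply, LinearMap.smul_apply, smul_eq_mul] at this
    have h2 := dvd_add this (hc2.mul_left (B e2 (S x)))
    simpa using h2
  obtain ⟨w3, hR3, ha3⟩ : ∃ w3, Rch B v w3 ∧ B f1 w3 = 1 := by
    rcases Int.isUnit_iff.1 hunit with h | h
    · exact ⟨w, hw, by rw [ha, h]⟩
    · exact ⟨-w, hw.trans (Rch.neg B w), by rw [map_neg, ha, h]; rfl⟩
  have r4 := Rch.eichler hs hq (e := f1) (u := e1 - w3) h12 (by simp [k1, ha3]) w3
  have hR4 := hR3.trans r4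
  obtain ⟨t, ht⟩ : ∃ t : ℤ, w3 - B (e1 - w3) w3 • f1 + B f1 w3 • (e1 - w3) -
      (q (e1 - w3) * B f1 w3) • f1 = e1 + t • f1 :=
    ⟨-B (e1 - w3) w3 - q (e1 - w3), by rw [ha3]; module⟩
  rw [ht] at hR4
  have : t = q v := by
    obtain ⟨S, hS, hSv⟩ := hR4
    have h := hS v v
    rw [hSv, hq v] at h
    simp [h11, h12, h13, k1] at h
    omega
  rw [← this]
  exact hR4

end Abstract

section Blocks

theorem blockSum_mul {a b : ℕ} (A C : Matrix (Fin a) (Fin a) ℤ) (B D : Matrix (Fin b) (Fin b) ℤ) :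
    blockSum A B * blockSum C D = blockSum (A * C) (B * D) := by
  simp [blockSum, Matrix.submatrix_mul_equiv, Matrix.fromBlocks_multiply]

theorem blockSum_add {a b : ℕ} (A C : Matrix (Fin a) (Fin a) ℤ) (B D : Matrix (Fin b) (Fin b) ℤ) :
    blockSum A B + blockSum C D = blockSum (A + C) (B + D) := by
  have h : fromBlocks (A + C) 0 0 (B + D) = fromBlocks A 0 0 B + fromBlocks C 0 0 D := by
    rw [Matrix.fromBlocks_add, add_zero, add_zero]
  unfold blockSum
  rw [h]
  rfl

theorem blockSum_transpose {a b : ℕ} (A : Matrix (Fin a) (Fin a) ℤ)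
    (B : Matrix (Fin b) (Fin b) ℤ) : (blockSum A B)ᵀ = blockSum Aᵀ Bᵀ := by
  simp [blockSum, Matrix.fromBlocks_transpose]

theorem blockSum_one {a b : ℕ} :
    blockSum (1 : Matrix (Fin a) (Fin a) ℤ) (1 : Matrix (Fin b) (Fin b) ℤ) = 1 := by
  simp [blockSum]

/-- Upper triangular half of `U`. -/
def halfU : Matrix (Fin 2) (Fin 2) ℤ := !![0, 1; 0, 0]

/-- Upper triangular half of `E8(-1)`. -/
def halfE8 : Matrix (Fin 8) (Fin 8) ℤ :=
  !![-1, 0, 1, 0, 0, 0, 0, 0;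
     0, -1, 0, 1, 0, 0, 0, 0;
     0, 0, -1, 1, 0, 0, 0, 0;
     0, 0, 0, -1, 1, 0, 0, 0;
     0, 0, 0, 0, -1, 1, 0, 0;
     0, 0, 0, 0, 0, -1, 1, 0;
     0, 0, 0, 0, 0, 0, -1, 1;
     0, 0, 0, 0, 0, 0, 0, -1]

/-- Inverse of `E8(-1)`. -/
def invE8 : Matrix (Fin 8) (Fin 8) ℤ :=
  !![-4, -5, -7, -10, -8, -6, -4, -2;
     -5, -8, -10, -15, -12, -9, -6, -3;
     -7, -10, -14, -20, -16, -12, -8, -4;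
     -10, -15, -20, -30, -24, -18, -12, -6;
     -8, -12, -16, -24, -20, -15, -10, -5;
     -6, -9, -12, -18, -15, -12, -8, -4;
     -4, -6, -8, -12, -10, -8, -6, -3;
     -2, -3, -4, -6, -5, -4, -3, -2]

theorem halfU_add : halfU + halfUᵀ = matU := by decide
theorem halfE8_add : halfE8 + halfE8ᵀ = matE8neg := by decide +kernel
theorem matU_mul : matU * matU = 1 := by decide
theorem invE8_mul : invE8 * matE8neg = 1 := by decide +kernel

/-- Upper triangular half of the Gram matrix. -/
def halfGamma : Matrix (Fin 22) (Fin 22) ℤ :=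
  blockSum halfU (blockSum halfU (blockSum halfU (blockSum halfE8 halfE8)))

/-- Inverse of the Gram matrix. -/
def invGamma : Matrix (Fin 22) (Fin 22) ℤ :=
  blockSum matU (blockSum matU (blockSum matU (blockSum invE8 invE8)))

theorem halfGamma_add : halfGamma + halfGammaᵀ = GammaGram := by
  unfold halfGamma GammaGram
  rw [← halfU_add, ← halfE8_add]
  erw [blockSum_transpose, blockSum_add]
  simp only [blockSum_transpose, blockSum_add]

theorem invGamma_mul : invGamma * GammaGram = 1 := by
  unfold invGamma GammaGram
  erw [blockSum_mul]
  simp only [blockSum_mul, matU_mul, invE8_mul, blockSum_one]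

theorem GammaGram_transpose : GammaGramᵀ = GammaGram := by
  rw [← halfGamma_add, Matrix.transpose_add, Matrix.transpose_transpose, add_comm]

end Blocks

/-- The bilinear form. -/
noncomputable def gB : (Fin 22 → ℤ) →ₗ[ℤ] (Fin 22 → ℤ) →ₗ[ℤ] ℤ := Matrix.toBilin' GammaGram

theorem gB_apply (x y : Fin 22 → ℤ) : gB x y = x ⬝ᵥ GammaGram *ᵥ y :=
  Matrix.toBilin'_apply' _ _ _

theorem gB_single (i j : Fin 22) : gB (Pi.single i 1) (Pi.single j 1) = GammaGram i j := by
  rw [gB_apply]; simp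

theorem gB_symm (x y : Fin 22 → ℤ) : gB x y = gB y x := by
  rw [gB_apply, gB_apply, Matrix.dotProduct_mulVec, ← Matrix.mulVec_transpose,
    GammaGram_transpose, dotProduct_comm]

theorem gB_even (x : Fin 22 → ℤ) : gB x x = 2 * (x ⬝ᵥ halfGamma *ᵥ x) := by
  rw [gB_apply, ← halfGamma_add, Matrix.add_mulVec, dotProduct_add,
    Matrix.mulVec_transpose, dotProduct_comm x (x ᵥ* halfGamma), ← Matrix.dotProduct_mulVec]
  ring

theorem gB_dvd {k : ℤ} {v : Fin 22 → ℤ} (h : ∀ x, k ∣ gB x v) (i : Fin 22) : k ∣ v i := by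
  have h1 : v i = (invGamma *ᵥ (GammaGram *ᵥ v)) i := by
    rw [Matrix.mulVec_mulVec, invGamma_mul, Matrix.one_mulVec]
  rw [h1, Matrix.mulVec, ← gB_apply]
  exact h _

theorem aut_of_isometry {S : (Fin 22 → ℤ) →ₗ[ℤ] (Fin 22 → ℤ)}
    (hS : ∀ x y, gB (S x) (S y) = gB x y) : IsLatticeAut GammaGram (LinearMap.toMatrix' S) := by
  have h : (LinearMap.toMatrix' S)ᵀ * GammaGram * (LinearMap.toMatrix' S) = GammaGram := by
    ext i j
    have := hS (Pi.single i 1) (Pi.single j 1)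
    rw [gB_single, gB_apply] at this
    rw [← this, ← LinearMap.toMatrix'_mulVec S, ← LinearMap.toMatrix'_mulVec S]
    simp only [Matrix.mulVec_single_one, Matrix.mul_assoc]
    rfl
  refine ⟨?_, h⟩
  have h2 := congrArg Matrix.det h
  have h3 := congrArg Matrix.det invGamma_mul
  rw [Matrix.det_mul, Matrix.det_mul, Matrix.det_transpose] at h2
  rw [Matrix.det_mul, Matrix.det_one] at h3
  have hne : GammaGram.det ≠ 0 := by
    intro h0; rw [h0] at h3; simp at h3
  refine IsUnit.of_mul_eq_one (LinearMap.toMatrix' S).det ?_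
  apply mul_right_cancel₀ hne
  linarith

theorem aut_inv {S : Matrix (Fin 22) (Fin 22) ℤ} (h : IsLatticeAut GammaGram S) :
    IsLatticeAut GammaGram S⁻¹ := by
  obtain ⟨h1, h2⟩ := h
  refine ⟨(Matrix.isUnit_nonsing_inv_det_iff).2 h1, ?_⟩
  have hT : IsUnit Sᵀ.det := by rwa [Matrix.det_transpose]
  calc S⁻¹ᵀ * GammaGram * S⁻¹ = S⁻¹ᵀ * (Sᵀ * GammaGram * S) * S⁻¹ := by rw [h2]
    _ = (Sᵀ⁻¹ * Sᵀ) * GammaGram * (S * S⁻¹) := by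
      rw [Matrix.transpose_nonsing_inv]; simp only [Matrix.mul_assoc]
    _ = GammaGram := by
      rw [Matrix.nonsing_inv_mul _ hT, Matrix.mul_nonsing_inv _ h1, Matrix.one_mul, Matrix.mul_one]

theorem aut_mul {S T : Matrix (Fin 22) (Fin 22) ℤ} (h : IsLatticeAut GammaGram S)
    (h' : IsLatticeAut GammaGram T) : IsLatticeAut GammaGram (S * T) := by
  refine ⟨by rw [Matrix.det_mul]; exact h.1.mul h'.1, ?_⟩
  calc (S * T)ᵀ * GammaGram * (S * T) = Tᵀ * (Sᵀ * GammaGram * S) * T := by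
        rw [Matrix.transpose_mul]; simp only [Matrix.mul_assoc]
    _ = GammaGram := by rw [h.2, h'.2]

theorem reduce_prim {v : Fin 22 → ℤ} (hv : Finset.univ.gcd v = 1) :
    ∃ S, IsLatticeAut GammaGram S ∧
      S *ᵥ v = Pi.single 0 1 + (v ⬝ᵥ halfGamma *ᵥ v) • Pi.single 1 1 := by
  have hprim : ∀ k : ℤ, (∀ x, k ∣ gB x v) → IsUnit k := by
    intro k hk
    apply isUnit_of_dvd_one
    rw [← hv]
    exact Finset.dvd_gcd fun i _ => gB_dvd hk i
  obtain ⟨S, hS, hSv⟩ := eichler_main (B := gB) gB_symm (q := fun x => x ⬝ᵥ halfGamma *ᵥ x) gB_even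
    (e1 := Pi.single 0 1) (f1 := Pi.single 1 1) (e2 := Pi.single 2 1) (f2 := Pi.single 3 1)
    (by rw [gB_single]; rfl) (by rw [gB_single]; rfl) (by rw [gB_single]; rfl)
    (by rw [gB_single]; rfl) (by rw [gB_single]; rfl) (by rw [gB_single]; rfl)
    (by rw [gB_single]; rfl) (by rw [gB_single]; rfl) (by rw [gB_single]; rfl)
    (by rw [gB_single]; rfl) hprim
  exact ⟨_, aut_of_isometry hS, by rw [LinearMap.toMatrix'_mulVec, hSv]⟩

theorem reduce_gen {v : Fin 22 → ℤ} {d : ℕ} (hd : 0 < d) (hv : Finset.univ.gcd v = (d : ℤ))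
    {c : ℤ} (hc : v ⬝ᵥ GammaGram *ᵥ v = 2 * d ^ 2 * c) :
    ∃ S, IsLatticeAut GammaGram S ∧
      S *ᵥ v = (d : ℤ) • (Pi.single 0 1 + c • Pi.single 1 1) := by
  have hd0 : (d : ℤ) ≠ 0 := by positivity
  obtain ⟨g, hg, hg1⟩ := Finset.extract_gcd v (Finset.univ_nonempty)
  rw [hv] at hg
  have hvg : v = (d : ℤ) • g := by
    ext i; simp [hg i]
  obtain ⟨S, hS, hSg⟩ := reduce_prim hg1
  have hcc : g ⬝ᵥ halfGamma *ᵥ g = c := by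
    have h := gB_even g
    rw [gB_apply] at h
    rw [hvg, Matrix.mulVec_smul, smul_dotProduct, dotProduct_smul, h] at hc
    simp only [smul_eq_mul] at hc
    have : (2 * (d : ℤ) ^ 2) ≠ 0 := by positivity
    apply mul_left_cancel₀ this
    linarith
  refine ⟨S, hS, ?_⟩
  rw [hvg, Matrix.mulVec_smul, hSg, hcc]

/-- In `Γ^{3,19}`: for every nonzero even `ν` and positive `d` with `2d² ∣ ν`, there is a
vector of norm `ν` whose coordinate gcd (divisor) is `d`; and any two vectors of the same
norm and divisor are related by an automorphism of `Γ^{3,19}`.  Hence equivalence classes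
of vectors under automorphisms are uniquely identified by norm and divisor. -/
theorem gamma_vectors_classified_by_norm_and_divisor
    (ν : ℤ) (hν : ν ≠ 0) (d : ℕ) (hd : 0 < d) (hdvd : (2 * (d : ℤ) ^ 2) ∣ ν) :
    (∃ v : Fin 22 → ℤ, v ⬝ᵥ GammaGram.mulVec v = ν ∧ Finset.univ.gcd v = (d : ℤ)) ∧
      ∀ v w : Fin 22 → ℤ,
        v ⬝ᵥ GammaGram.mulVec v = ν → w ⬝ᵥ GammaGram.mulVec w = ν →
        Finset.univ.gcd v = (d : ℤ) → Finset.univ.gcd w = (d : ℤ) →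
          ∃ S : Matrix (Fin 22) (Fin 22) ℤ, IsLatticeAut GammaGram S ∧ S.mulVec v = w := by
  obtain ⟨c, hc⟩ := hdvd
  constructor
  · refine ⟨(d : ℤ) • (Pi.single 0 1 + c • Pi.single 1 1), ?_, ?_⟩
    · rw [← gB_apply, hc]
      simp only [map_add, map_smul, LinearMap.add_apply, LinearMap.smul_apply, gB_single,
        smul_eq_mul]
      have h1 : GammaGram 0 0 = 0 := rfl
      have h2 : GammaGram 0 1 = 1 := rfl
      have h3 : GammaGram 1 0 = 1 := rfl
      have h4 : GammaGram 1 1 = 0 := rfl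
      rw [h1, h2, h3, h4]
      ring
    · have h1 : Finset.univ.gcd ((d : ℤ) • (Pi.single 0 1 + c • Pi.single 1 1) : Fin 22 → ℤ)
          ∣ (d : ℤ) := by
        have := Finset.gcd_dvd (s := Finset.univ)
          (f := ((d : ℤ) • (Pi.single 0 1 + c • Pi.single 1 1) : Fin 22 → ℤ))
          (Finset.mem_univ 0)
        simpa using this
      have h2 : (d : ℤ) ∣ Finset.univ.gcd
          ((d : ℤ) • (Pi.single 0 1 + c • Pi.single 1 1) : Fin 22 → ℤ) :=
        Finset.dvd_gcd fun i _ => by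
          rw [Pi.smul_apply, smul_eq_mul]; exact dvd_mul_right _ _
      refine Int.dvd_antisymm ?_ (by positivity) h1 h2
      rw [← Finset.normalize_gcd]
      exact Int.nonneg_of_normalize_eq_self (normalize_idem _)
  · intro v w hv hw hgv hgw
    obtain ⟨S, hS, hSv⟩ := reduce_gen hd hgv (hv.trans hc)
    obtain ⟨T, hT, hTw⟩ := reduce_gen hd hgw (hw.trans hc)
    refine ⟨T⁻¹ * S, aut_mul (aut_inv hT) hS, ?_⟩
    rw [← Matrix.mulVec_mulVec, hSv, ← hTw, Matrix.mulVec_mulVec, Matrix.nonsing_inv_mul _ hT.1,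
      Matrix.one_mulVec]
end

section
/- (Wall) Let G be the 4×4 Gram matrix of U ⊕ U, the block-diagonal sum of two copies of U = [[0,1],[1,0]]. If v, w ∈ ℤ⁴ are primitive vectors with vᵀGv = wᵀGw, then there exists S ∈ GL(4,ℤ) with SᵀGS = G and Sv = w; i.e., any two primitive vectors of the same norm in U ⊕ U are related by a lattice automorphism. -/
open Matrix

/-- The Gram matrix of `U ⊕ U`. -/
def matUU : Matrix (Fin 4) (Fin 4) ℤ := blockSum matU matU

lemma matUU_eq : matUU = !![0,1,0,0;1,0,0,0;0,0,0,1;0,0,1,0] := by decide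

/-- Being related by an isometry. -/
def WRel (v w : Fin 4 → ℤ) : Prop :=
  ∃ S : Matrix (Fin 4) (Fin 4) ℤ, Sᵀ * matUU * S = matUU ∧ S.mulVec v = w

lemma WRel.trans {u v w : Fin 4 → ℤ} (h : WRel u v) (h' : WRel v w) : WRel u w := by
  obtain ⟨S, hS, rfl⟩ := h
  obtain ⟨T, hT, rfl⟩ := h'
  refine ⟨T * S, ?_, by simp [Matrix.mulVec_mulVec]⟩
  calc (T * S)ᵀ * matUU * (T * S) = Sᵀ * (Tᵀ * matUU * T) * S := by
        simp only [Matrix.transpose_mul, Matrix.mul_assoc]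
    _ = matUU := by rw [hT, hS]

lemma matUU_sq : matUU * matUU = 1 := by rw [matUU_eq]; decide

lemma WRel.symm {v w : Fin 4 → ℤ} (h : WRel v w) : WRel w v := by
  obtain ⟨S, hS, rfl⟩ := h
  have h1 : (matUU * Sᵀ * matUU) * S = 1 := by
    rw [Matrix.mul_assoc, Matrix.mul_assoc, ← Matrix.mul_assoc Sᵀ, hS, matUU_sq]
  have h2 := mul_eq_one_comm.mp h1
  generalize matUU * Sᵀ * matUU = T at h1 h2
  refine ⟨T, ?_, by simp [Matrix.mulVec_mulVec, h1]⟩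
  calc Tᵀ * matUU * T = Tᵀ * (Sᵀ * matUU * S) * T := by rw [hS]
    _ = (S * T)ᵀ * matUU * (S * T) := by
        simp only [Matrix.transpose_mul, Matrix.mul_assoc]
    _ = matUU := by rw [h2]; simp

lemma rel_E (k a b c d : ℤ) : WRel ![a,b,c,d] ![a, b - k * d, c + k * a, d] := by
  refine ⟨!![1,0,0,0;0,1,0,-k;k,0,1,0;0,0,0,1], ?_, ?_⟩
  · rw [matUU_eq]
    ext i j
    fin_cases i <;> fin_cases j <;> simp [Matrix.mul_apply, Fin.sum_univ_four]
  · ext i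
    fin_cases i <;> simp [Matrix.mulVec, dotProduct, Fin.sum_univ_four] <;> ring

lemma rel_P (a b c d : ℤ) : WRel ![a,b,c,d] ![c,d,a,b] := by
  refine ⟨!![0,0,1,0;0,0,0,1;1,0,0,0;0,1,0,0], ?_, ?_⟩
  · rw [matUU_eq]; decide
  · ext i
    fin_cases i <;> simp [Matrix.mulVec, dotProduct, Fin.sum_univ_four]

lemma rel_Q (a b c d : ℤ) : WRel ![a,b,c,d] ![a,b,d,c] := by
  refine ⟨!![1,0,0,0;0,1,0,0;0,0,0,1;0,0,1,0], ?_, ?_⟩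
  · rw [matUU_eq]; decide
  · ext i
    fin_cases i <;> simp [Matrix.mulVec, dotProduct, Fin.sum_univ_four]

lemma rel_N (a b c d : ℤ) : WRel ![a,b,c,d] ![-a,-b,-c,-d] := by
  refine ⟨-1, ?_, ?_⟩
  · simp
  · ext i
    fin_cases i <;> simp [Matrix.neg_mulVec]

/-- Being related to the normal form. -/
def NF (a b c d : ℤ) : Prop := WRel ![a,b,c,d] ![1, a * b + c * d, 0, 0]

lemma NF.of {a b c d a' b' c' d' : ℤ} (h : NF a' b' c' d')
    (hr : WRel ![a,b,c,d] ![a',b',c',d']) (hn : a' * b' + c' * d' = a * b + c * d) :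
    NF a b c d := by
  unfold NF at *
  rw [← hn]
  exact hr.trans h

/-- Primitivity, as a divisibility condition. -/
def Prm (a b c d : ℤ) : Prop := ∀ k, k ∣ a → k ∣ b → k ∣ c → k ∣ d → k ∣ 1

lemma NF.E {a b c d : ℤ} (k : ℤ) (h : NF a (b - k * d) (c + k * a) d) : NF a b c d :=
  h.of (rel_E k a b c d) (by ring)
lemma NF.P {a b c d : ℤ} (h : NF c d a b) : NF a b c d := h.of (rel_P a b c d) (by ring)
lemma NF.Q {a b c d : ℤ} (h : NF a b d c) : NF a b c d := h.of (rel_Q a b c d) (by ring)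

lemma NF.sw {a b c d : ℤ} (h : NF b a c d) : NF a b c d := NF.P (NF.Q (NF.P h))

lemma Prm.E {a b c d : ℤ} (k : ℤ) (h : Prm a b c d) : Prm a (b - k * d) (c + k * a) d := by
  intro m h1 h2 h3 h4
  refine h m h1 ?_ ?_ h4
  · simpa using h2.add (h4.mul_left k)
  · simpa using h3.sub (h1.mul_left k)

lemma nf_main (n : ℕ) : ∀ a b c d : ℤ, a.natAbs = n → a ≠ 0 → Prm a b c d → NF a b c d := by
  induction n using Nat.strong_induction_on with
  | _ n ih =>
  have step : ∀ a b c d : ℤ, a.natAbs = n → a ≠ 0 → Prm a b c d → ¬ a ∣ c → NF a b c d := by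
    intro a b c d han ha hp hc
    apply NF.E (-(c / a))
    have hm : c + -(c / a) * a = c % a := by
      have := Int.emod_add_mul_ediv c a
      linarith
    have hp' := hp.E (-(c / a))
    rw [hm] at hp' ⊢
    apply NF.P
    refine ih _ ?_ _ _ _ _ rfl ?_ ?_
    · have h1 := Int.emod_nonneg c ha
      have h2 := Int.emod_lt_abs c ha
      rw [Int.abs_eq_natAbs] at h2
      omega
    · intro h0
      exact hc (Int.dvd_of_emod_eq_zero h0)
    · intro m h1 h2 h3 h4
      exact hp' m h3 h4 h1 h2
  intro a b c d han ha hp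
  by_cases hc : a ∣ c
  swap
  · exact step a b c d han ha hp hc
  by_cases hd : a ∣ d
  swap
  · apply NF.Q
    exact step a b d c han ha (fun m h1 h2 h3 h4 => hp m h1 h2 h4 h3) hd
  by_cases hb : a ∣ b
  swap
  · -- reduce d to zero, then add b to c
    obtain ⟨e, rfl⟩ := hd
    apply NF.Q
    apply NF.E (-e)
    apply NF.Q
    have hp' : Prm a (b - (-e) * c) (a * e + (-e) * a) c :=
      Prm.E (-e) (fun m h1 h2 h3 h4 => hp m h1 h2 h4 h3)
    have e1 : a * e + (-e) * a = 0 := by ring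
    rw [e1] at hp' ⊢
    have hb' : ¬ a ∣ b - (-e) * c := fun h => hb (by simpa using h.add (hc.mul_left (-e)))
    generalize b - (-e) * c = b' at hp' hb' ⊢
    apply NF.sw
    apply NF.E 1
    apply NF.sw
    have e2 : a - 1 * 0 = a := by ring
    rw [e2, one_mul]
    refine step _ _ _ _ han ha ?_ ?_
    · intro m h1 h2 h3 h4
      exact hp' m h1 h2 h4 (by simpa using h3.sub h2)
    · intro h
      exact hb' (by simpa using h.sub hc)
  · have hu : IsUnit a := isUnit_of_dvd_one (hp a dvd_rfl hb hc hd)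
    have one : ∀ b c d : ℤ, NF 1 b c d := by
      intro b c d
      apply NF.E (-c)
      apply NF.Q
      apply NF.E (-d)
      simp [NF]
      exact ⟨1, by simp, by simp⟩
    rcases Int.isUnit_iff.mp hu with rfl | rfl
    · exact one b c d
    · exact (one (-b) (-c) (-d)).of (by simpa using rel_N (-1) b c d) (by ring)

theorem wall_UU (v w : Fin 4 → ℤ)
    (hv : Finset.univ.gcd v = 1) (hw : Finset.univ.gcd w = 1)
    (hnorm : v ⬝ᵥ matUU.mulVec v = w ⬝ᵥ matUU.mulVec w) :
    ∃ S : Matrix (Fin 4) (Fin 4) ℤ,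
      IsUnit S.det ∧ Sᵀ * matUU * S = matUU ∧ S.mulVec v = w := by
  have key : ∀ v : Fin 4 → ℤ, Finset.univ.gcd v = 1 → NF (v 0) (v 1) (v 2) (v 3) := by
    intro v hv
    have hp : Prm (v 0) (v 1) (v 2) (v 3) := by
      intro k h0 h1 h2 h3
      rw [← hv]
      apply Finset.dvd_gcd
      intro i _
      fin_cases i <;> assumption
    generalize v 0 = a at *
    generalize v 1 = b at *
    generalize v 2 = c at *
    generalize v 3 = d at *
    by_cases ha : a = 0
    · by_cases hb : b = 0
      · by_cases hc : c = 0
        · by_cases hd : d = 0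
          · subst ha hb hc hd
            have := hp 0
            simp at this
          · exact NF.Q (NF.P (nf_main _ _ _ _ _ rfl hd fun m h1 h2 h3 h4 => hp m h3 h4 h2 h1))
        · exact NF.P (nf_main _ _ _ _ _ rfl hc fun m h1 h2 h3 h4 => hp m h3 h4 h1 h2)
      · exact NF.sw (nf_main _ _ _ _ _ rfl hb fun m h1 h2 h3 h4 => hp m h2 h1 h3 h4)
    · exact nf_main _ _ _ _ _ rfl ha hp
  have eta : ∀ v : Fin 4 → ℤ, ![v 0, v 1, v 2, v 3] = v := by
    intro v; ext i; fin_cases i <;> rfl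
  have hn : v 0 * v 1 + v 2 * v 3 = w 0 * w 1 + w 2 * w 3 := by
    rw [matUU_eq] at hnorm
    simp [Matrix.mulVec, dotProduct, Fin.sum_univ_four] at hnorm
    linarith
  have h1 := key v hv
  have h2 := key w hw
  unfold NF at h1 h2
  rw [eta] at h1 h2
  rw [hn] at h1
  obtain ⟨S, hS, hSv⟩ := h1.trans h2.symm
  refine ⟨S, ?_, hS, hSv⟩
  have hdet := congrArg Matrix.det hS
  have hd2 := congrArg Matrix.det matUU_sq
  simp only [Matrix.det_mul, Matrix.det_transpose, Matrix.det_one] at hdet hd2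
  apply IsUnit.of_mul_eq_one S.det
  calc S.det * S.det = (S.det * matUU.det * S.det) * matUU.det := by linear_combination (-S.det * S.det) * hd2
    _ = 1 := by rw [hdet, hd2]
end

section
/- Let K ≥ 1, let N₁,…,N_K be positive integers, and let t₁,…,t_K be integers satisfying the tadpole condition Σ_a N_a·t_a = −24. Set M = 16 − Σ_a N_a, and define n_V = Σ_a N_a² + M(2M−1) and n_H = −Σ_{a≠b} N_a N_b (2 + t_a + t_b) − Σ_a N_a(N_a−1)(1 + 2t_a) − 2M·Σ_a N_a(2 + t_a), where the first sum is over ordered pairs (a,b) with a ≠ b. Then n_H − n_V = 224. -/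
/-- Gravitational anomaly cancellation: for `K` stacks of `N_a` branes with flux
self-intersections `t_a` satisfying the tadpole condition `Σ N_a t_a = −24`, setting
`M = 16 − Σ N_a`, the numbers `n_V` of vector multiplets and `n_H` of charged
hypermultiplets satisfy `n_H − n_V = 224`. -/
theorem anomaly_nH_sub_nV_eq_224 (K : ℕ) (hK : 1 ≤ K)
    (N : Fin K → ℕ) (hN : ∀ a, 0 < N a) (t : Fin K → ℤ)
    (htadpole : ∑ a, (N a : ℤ) * t a = -24)
    (M : ℤ) (hM : M = 16 - ∑ a, (N a : ℤ))
    (nV : ℤ) (hnV : nV = ∑ a, (N a : ℤ) ^ 2 + M * (2 * M - 1))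
    (nH : ℤ) (hnH : nH =
      -(∑ a, ∑ b ∈ Finset.univ.erase a, (N a : ℤ) * (N b : ℤ) * (2 + t a + t b))
      - ∑ a, (N a : ℤ) * ((N a : ℤ) - 1) * (1 + 2 * t a)
      - 2 * M * ∑ a, (N a : ℤ) * (2 + t a)) :
    nH - nV = 224 := by
  have h1 : ∀ a, ∑ b ∈ Finset.univ.erase a, (N a : ℤ) * (N b : ℤ) * (2 + t a + t b)
      = 2 * (∑ b, (N b : ℤ)) * (N a : ℤ) + (∑ b, (N b : ℤ)) * ((N a : ℤ) * t a)
        + (∑ b, (N b : ℤ) * t b) * (N a : ℤ)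
        - 2 * (N a : ℤ) ^ 2 - 2 * ((N a : ℤ) ^ 2 * t a) := by
    intro a
    have h := Finset.add_sum_erase Finset.univ
      (fun b => (N a : ℤ) * (N b : ℤ) * (2 + t a + t b)) (Finset.mem_univ a)
    have h2 : ∑ b, (N a : ℤ) * (N b : ℤ) * (2 + t a + t b)
        = ((N a : ℤ) * (2 + t a)) * (∑ b, (N b : ℤ)) + (N a : ℤ) * ∑ b, (N b : ℤ) * t b := by
      rw [Finset.mul_sum, Finset.mul_sum, ← Finset.sum_add_distrib]
      exact Finset.sum_congr rfl fun b _ => by ring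
    rw [h2] at h
    linear_combination h
  have h3 : ∑ a, (N a : ℤ) * ((N a : ℤ) - 1) * (1 + 2 * t a)
      = ∑ a, (N a : ℤ) ^ 2 - ∑ a, (N a : ℤ) + 2 * ∑ a, (N a : ℤ) ^ 2 * t a
        - 2 * ∑ a, (N a : ℤ) * t a := by
    rw [Finset.mul_sum, Finset.mul_sum, ← Finset.sum_sub_distrib, ← Finset.sum_add_distrib,
      ← Finset.sum_sub_distrib]
    exact Finset.sum_congr rfl fun b _ => by ring
  have h4 : ∑ a, (N a : ℤ) * (2 + t a) = 2 * ∑ a, (N a : ℤ) + ∑ a, (N a : ℤ) * t a := by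
    rw [Finset.mul_sum, ← Finset.sum_add_distrib]
    exact Finset.sum_congr rfl fun b _ => by ring
  simp only [h1] at hnH
  rw [h3, h4] at hnH
  simp only [Finset.sum_sub_distrib, Finset.sum_add_distrib, ← Finset.mul_sum, htadpole] at hnH
  rw [hnH, hnV, hM]
  ring
end

section
/- Every subset S of 𝔽₂⁴ with |S| ≥ 12 contains an affine hyperplane: there exist a nonzero 𝔽₂-linear functional φ on 𝔽₂⁴ and c ∈ 𝔽₂ such that {x ∈ 𝔽₂⁴ : φ(x) = c} ⊆ S. -/
/-- Every subset of `𝔽₂⁴` with at least 12 elements contains an affine hyperplane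
`{x : φ(x) = c}` for some nonzero linear functional `φ` and constant `c`. -/
theorem twelve_points_contain_hyperplane (S : Finset (Fin 4 → ZMod 2))
    (hS : 12 ≤ S.card) :
    ∃ (φ : (Fin 4 → ZMod 2) →ₗ[ZMod 2] ZMod 2) (c : ZMod 2),
      φ ≠ 0 ∧ ∀ x : Fin 4 → ZMod 2, φ x = c → x ∈ S := by
  classical
  have hc : Fintype.card (Fin 4 → ZMod 2) = 16 := by simp [ZMod.card]
  have h4 : Sᶜ.card ≤ 4 := by rw [Finset.card_compl, hc]; omega
  obtain ⟨T, hST, hT⟩ := Finset.exists_superset_card_eq h4 (by rw [hc]; norm_num)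
  have hr := finrank_vectorSpan_image_finset_le (ZMod 2) (id : (Fin 4 → ZMod 2) → _) T
    (n := 3) hT
  have hlt : vectorSpan (ZMod 2) ((T.image id : Finset (Fin 4 → ZMod 2)) : Set (Fin 4 → ZMod 2))
      < ⊤ := by
    rw [lt_top_iff_ne_top]
    intro h
    rw [h, finrank_top, Module.finrank_fin_fun] at hr
    omega
  obtain ⟨φ, hφ, hk⟩ := Submodule.exists_le_ker_of_lt_top _ hlt
  obtain ⟨a, ha⟩ : T.Nonempty := Finset.card_pos.mp (by omega)
  refine ⟨φ, φ a + 1, hφ, fun x hx => ?_⟩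
  by_contra hxS
  have hxT : x ∈ T := hST (by simpa using hxS)
  have := hk (vsub_mem_vectorSpan (ZMod 2) (p₁ := x) (p₂ := a) (by simpa using hxT)
    (by simpa using ha))
  rw [LinearMap.mem_ker, vsub_eq_sub, map_sub, hx] at this
  simp at this
end

section
/- There exists an 11-element subset of 𝔽₂⁴ containing no affine hyperplane. Explicitly, the set S = {(0,0,0,0), (1,0,0,0), (0,1,0,0), (0,0,1,0), (1,0,1,0), (0,1,1,0), (1,1,1,0), (0,0,0,1), (1,0,0,1), (0,1,0,1), (0,0,1,1)} ⊆ 𝔽₂⁴ contains no affine hyperplane: for every nonzero 𝔽₂-linear functional φ and every c ∈ 𝔽₂, the set {x : φ(x) = c} is not a subset of S. -/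
/-- The explicit 11-point subset of `𝔽₂⁴`. -/
def elevenPoints : Set (Fin 4 → ZMod 2) :=
  {![0,0,0,0], ![1,0,0,0], ![0,1,0,0], ![0,0,1,0], ![1,0,1,0], ![0,1,1,0],
    ![1,1,1,0], ![0,0,0,1], ![1,0,0,1], ![0,1,0,1], ![0,0,1,1]}

/-- The explicit set `elevenPoints` has 11 elements and contains no affine hyperplane:
for every nonzero linear functional `φ` on `𝔽₂⁴` and every `c ∈ 𝔽₂`, the hyperplane
`{x : φ(x) = c}` is not a subset of it. -/
theorem eleven_points_no_hyperplane :
    elevenPoints.ncard = 11 ∧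
      ∀ (φ : (Fin 4 → ZMod 2) →ₗ[ZMod 2] ZMod 2), φ ≠ 0 → ∀ c : ZMod 2,
        ¬ ({x : Fin 4 → ZMod 2 | φ x = c} ⊆ elevenPoints) := by
  constructor
  · have h : elevenPoints = ((({![0,0,0,0], ![1,0,0,0], ![0,1,0,0], ![0,0,1,0], ![1,0,1,0],
        ![0,1,1,0], ![1,1,1,0], ![0,0,0,1], ![1,0,0,1], ![0,1,0,1], ![0,0,1,1]} :
        Finset (Fin 4 → ZMod 2))) : Set (Fin 4 → ZMod 2)) := by
      simp [elevenPoints]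
    rw [h, Set.ncard_coe_finset]
    decide
  · intro φ hφ c hsub
    -- the five missing points affinely span the whole space
    have key : ∀ p : Fin 4 → ZMod 2, p ∉ elevenPoints → φ p = c + 1 := by
      intro p hp
      have h1 : φ p ≠ c := fun h => hp (hsub h)
      have h2 : ∀ a b : ZMod 2, a ≠ b → a = b + 1 := by decide
      exact h2 _ _ h1
    have a1 := key ![1,1,0,0] (by unfold elevenPoints; simp only [Set.mem_insert_iff, Set.mem_singleton_iff]; decide)
    have a2 := key ![1,1,0,1] (by unfold elevenPoints; simp only [Set.mem_insert_iff, Set.mem_singleton_iff]; decide)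
    have a3 := key ![1,0,1,1] (by unfold elevenPoints; simp only [Set.mem_insert_iff, Set.mem_singleton_iff]; decide)
    have a4 := key ![0,1,1,1] (by unfold elevenPoints; simp only [Set.mem_insert_iff, Set.mem_singleton_iff]; decide)
    have a5 := key ![1,1,1,1] (by unfold elevenPoints; simp only [Set.mem_insert_iff, Set.mem_singleton_iff]; decide)
    have diff : ∀ p q : Fin 4 → ZMod 2, φ p = c + 1 → φ q = c + 1 → φ (p - q) = 0 := by
      intro p q hp hq
      rw [map_sub, hp, hq, sub_self]
    apply hφ
    apply LinearMap.pi_ext'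
    intro i
    apply LinearMap.ext_ring
    simp only [LinearMap.comp_apply, LinearMap.zero_apply, LinearMap.coe_single]
    fin_cases i
    · have h := diff _ _ a5 a4
      rwa [show (![1,1,1,1] - ![0,1,1,1] : Fin 4 → ZMod 2) = Pi.single 0 1 by decide] at h
    · have h := diff _ _ a5 a3
      rwa [show (![1,1,1,1] - ![1,0,1,1] : Fin 4 → ZMod 2) = Pi.single 1 1 by decide] at h
    · have h := diff _ _ a5 a2
      rwa [show (![1,1,1,1] - ![1,1,0,1] : Fin 4 → ZMod 2) = Pi.single 2 1 by decide] at h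
    · have h := diff _ _ a2 a1
      rwa [show (![1,1,0,1] - ![1,1,0,0] : Fin 4 → ZMod 2) = Pi.single 3 1 by decide] at h
end
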